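/- arXiv:2406.04544 — 3 statements merged into one kernel-verified Lean document; each statement's English description precedes it below -/
import Mathlib

section
/- Let f(x,y) = y² − sin(e^{1/x} π) e^{−1/x²} for x ≠ 0 and f(0,y) = y². Then f is smooth near the origin in ℝ², vanishes to second order at the origin, and 1/ln|f| belongs to W^{1,1} in a neighborhood of the origin. -/
open MeasureTheory

inductive AA : (ℝ → ℝ) → Prop
  | const (c : ℝ) : AA (fun _ => c)
  | inv : AA (fun x => x⁻¹)
  | E : AA (fun x => Real.exp (x⁻¹))
  | S : AA (fun x => Real.sin (Real.exp (x⁻¹) * Real.pi))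
  | C : AA (fun x => Real.cos (Real.exp (x⁻¹) * Real.pi))
  | add {p q : ℝ → ℝ} : AA p → AA q → AA (fun x => p x + q x)
  | mul {p q : ℝ → ℝ} : AA p → AA q → AA (fun x => p x * q x)

lemma AA.deriv {q : ℝ → ℝ} (h : AA q) :
    ∃ q', AA q' ∧ ∀ x, x ≠ 0 → HasDerivAt q (q' x) x := by
  have hE : ∀ x : ℝ, x ≠ 0 → HasDerivAt (fun x : ℝ => Real.exp (x⁻¹))
      (Real.exp (x⁻¹) * ((-1) * (x⁻¹ * x⁻¹))) x := by
    intro x hx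
    convert (hasDerivAt_inv hx).exp using 1
    field_simp
  induction h with
  | const c => exact ⟨_, AA.const 0, fun x _ => hasDerivAt_const x c⟩
  | inv => 
    refine ⟨_, (AA.const (-1)).mul (AA.inv.mul AA.inv), fun x hx => ?_⟩
    refine (hasDerivAt_inv hx).congr_deriv ?_
    field_simp
  | E => exact ⟨_, AA.E.mul ((AA.const (-1)).mul (AA.inv.mul AA.inv)), hE⟩
  | S => exact ⟨_, AA.C.mul ((AA.E.mul ((AA.const (-1)).mul (AA.inv.mul AA.inv))).mul (AA.const Real.pi)),
      fun x hx => ((hE x hx).mul_const Real.pi).sin⟩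
  | C => 
    refine ⟨_, ((AA.const (-1)).mul AA.S).mul ((AA.E.mul ((AA.const (-1)).mul (AA.inv.mul AA.inv))).mul (AA.const Real.pi)),
      fun x hx => ?_⟩
    convert ((hE x hx).mul_const Real.pi).cos using 1
    ring
  | add _ _ ih1 ih2 =>
    obtain ⟨p', hp, hp'⟩ := ih1
    obtain ⟨q', hq, hq'⟩ := ih2
    exact ⟨_, hp.add hq, fun x hx => (hp' x hx).add (hq' x hx)⟩
  | mul h1 h2 ih1 ih2 =>
    obtain ⟨p', hp, hp'⟩ := ih1
    obtain ⟨q', hq, hq'⟩ := ih2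
    exact ⟨_, (hp.mul h2).add (h1.mul hq), fun x hx => (hp' x hx).mul (hq' x hx)⟩

lemma AA.bound {q : ℝ → ℝ} (h : AA q) :
    ∃ C N : ℝ, 0 ≤ C ∧ 0 ≤ N ∧ ∀ x, |q x| ≤ C * Real.exp (N * |x|⁻¹) := by
  have key : ∀ x N : ℝ, 0 ≤ N → 1 ≤ Real.exp (N * |x|⁻¹) := fun x N hN =>
    Real.one_le_exp (by positivity)
  induction h with
  | const c => 
    refine ⟨|c|, 0, by positivity, le_rfl, fun x => by simp⟩
  | inv => 
    refine ⟨1, 1, by positivity, by positivity, fun x => ?_⟩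
    rw [abs_inv]
    have := Real.add_one_le_exp (|x|⁻¹)
    simp only [one_mul]
    linarith
  | E => 
    refine ⟨1, 1, by positivity, by positivity, fun x => ?_⟩
    rw [Real.abs_exp, one_mul, one_mul, ← abs_inv]
    exact Real.exp_le_exp.2 (le_abs_self _)
  | S => exact ⟨1, 0, by positivity, le_rfl, fun x => by simpa using Real.abs_sin_le_one _⟩
  | C => exact ⟨1, 0, by positivity, le_rfl, fun x => by simpa using Real.abs_cos_le_one _⟩
  | add _ _ ih1 ih2 =>
    obtain ⟨C, N, hC, hN, h⟩ := ih1
    obtain ⟨C', N', hC', hN', h'⟩ := ih2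
    refine ⟨C + C', N + N', by positivity, by positivity, fun x => ?_⟩
    have h1 := h x
    have h2 := h' x
    have e1 : Real.exp (N * |x|⁻¹) ≤ Real.exp ((N + N') * |x|⁻¹) := by
      gcongr; linarith
    have e2 : Real.exp (N' * |x|⁻¹) ≤ Real.exp ((N + N') * |x|⁻¹) := by
      gcongr; linarith
    calc _ ≤ _ := abs_add_le _ _
      _ ≤ C * Real.exp ((N + N') * |x|⁻¹) + C' * Real.exp ((N + N') * |x|⁻¹) := by
        gcongr
        · exact h1.trans (by gcongr)
        · exact h2.trans (by gcongr)
      _ = _ := by ring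
  | mul _ _ ih1 ih2 =>
    obtain ⟨C, N, hC, hN, h⟩ := ih1
    obtain ⟨C', N', hC', hN', h'⟩ := ih2
    refine ⟨C * C', N + N', by positivity, by positivity, fun x => ?_⟩
    rw [abs_mul, add_mul, Real.exp_add]
    calc _ ≤ _ := mul_le_mul (h x) (h' x) (abs_nonneg _) (by positivity)
      _ = _ := by ring

/-- flat extension -/
noncomputable def flat (q : ℝ → ℝ) : ℝ → ℝ :=
  fun x => if x = 0 then 0 else q x * Real.exp (-(1 / x ^ 2))

lemma flat_hasDerivAt {q : ℝ → ℝ} {x q' : ℝ} (hx : x ≠ 0) (h : HasDerivAt q q' x) :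
    HasDerivAt (flat q) ((q' + q x * (2 * (x⁻¹ * (x⁻¹ * x⁻¹)))) * Real.exp (-(1 / x ^ 2))) x := by
  have h1 : HasDerivAt (fun x : ℝ => -(1 / x ^ 2)) (2 * (x⁻¹ * (x⁻¹ * x⁻¹))) x := by
    have := ((hasDerivAt_pow 2 x).inv (pow_ne_zero 2 hx)).neg
    simp only [one_div]
    refine HasDerivAt.congr_deriv this ?_
    field_simp
    simp [mul_comm]
  have h2 := h.mul h1.exp
  have h3 : flat q =ᶠ[nhds x] fun x => q x * Real.exp (-(1 / x ^ 2)) := by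
    filter_upwards [isOpen_ne.mem_nhds hx] with y hy
    simp only [flat]
    rw [if_neg hy]
  refine (h2.congr_of_eventuallyEq h3).congr_deriv ?_
  ring

lemma flat_hasDerivAt_zero {q : ℝ → ℝ} (h : AA q) : HasDerivAt (flat q) 0 0 := by
  obtain ⟨C, N, hC, hN, hb⟩ := (AA.inv.mul (AA.inv.mul h)).bound
  -- |flat q x| ≤ C' * x^2
  have hB : ∀ x : ℝ, |flat q x| ≤ (C * Real.exp (N ^ 2)) * |x| ^ 2 := by
    intro x
    by_cases hx : x = 0
    · simp [flat, hx]
    · have hx' : 0 < |x| := abs_pos.2 hx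
      have h1 := hb x
      simp only [flat, if_neg hx]
      rw [abs_mul, Real.abs_exp]
      have h2 : |q x| ≤ |x| ^ 2 * (C * Real.exp (N * |x|⁻¹)) := by
        have : |q x| = |x| ^ 2 * |x⁻¹ * (x⁻¹ * q x)| := by
          rw [abs_mul, abs_mul, abs_inv]; field_simp
        rw [this]; gcongr
      calc |q x| * Real.exp (-(1 / x ^ 2))
          ≤ (|x| ^ 2 * (C * Real.exp (N * |x|⁻¹))) * Real.exp (-(1 / x ^ 2)) := by gcongr
        _ = C * Real.exp (N * |x|⁻¹ + -(1 / x ^ 2)) * |x| ^ 2 := by rw [Real.exp_add]; ring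
        _ ≤ _ := by
          gcongr
          have : (1 / x ^ 2) = (|x|⁻¹) ^ 2 := by rw [inv_pow, sq_abs, one_div]
          rw [this]
          nlinarith [sq_nonneg (N - |x|⁻¹), sq_nonneg (N + |x|⁻¹), sq_nonneg N,
            mul_nonneg hN (inv_nonneg.2 (abs_nonneg x)), sq_nonneg (|x|⁻¹ - N/2)]
  rw [hasDerivAt_iff_isLittleO]
  have h0 : flat q 0 = 0 := by simp [flat]
  simp only [h0, sub_zero, smul_zero]
  have h1 : flat q =O[nhds 0] fun x : ℝ => x ^ 2 := by
    refine Asymptotics.IsBigO.of_bound (C * Real.exp (N ^ 2)) (Filter.Eventually.of_forall fun x => ?_)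
    simpa using hB x
  refine h1.trans_isLittleO ?_
  simpa using Asymptotics.isLittleO_pow_pow (𝕜 := ℝ) (m := 1) (n := 2) (by norm_num)

lemma flat_contDiff_nat (n : ℕ) : ∀ {q : ℝ → ℝ}, AA q → ContDiff ℝ n (flat q) := by
  have main : ∀ {q : ℝ → ℝ}, AA q → ∃ r, AA r ∧ ∀ x, HasDerivAt (flat q) (flat r x) x := by
    intro q h
    obtain ⟨q', hq', hd⟩ := h.deriv
    refine ⟨_, hq'.add (h.mul ((AA.const 2).mul (AA.inv.mul (AA.inv.mul AA.inv)))), fun x => ?_⟩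
    by_cases hx : x = 0
    · subst hx
      simpa [flat] using flat_hasDerivAt_zero h
    · have := flat_hasDerivAt hx (hd x hx)
      refine this.congr_deriv ?_
      simp [flat, hx]
  induction n with
  | zero => 
    intro q h
    obtain ⟨r, hr, hd⟩ := main h
    exact contDiff_zero.2 (continuous_iff_continuousAt.2 fun x => (hd x).continuousAt)
  | succ n ih =>
    intro q h
    obtain ⟨r, hr, hd⟩ := main h
    have : deriv (flat q) = flat r := funext fun x => (hd x).deriv
    push_cast
    rw [contDiff_succ_iff_deriv]
    refine ⟨fun x => (hd x).differentiableAt, by simp, ?_⟩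
    rw [this]; exact ih hr

lemma flat_contDiff {q : ℝ → ℝ} (h : AA q) : ContDiff ℝ (⊤ : ℕ∞) (flat q) :=
  contDiff_infty.2 fun n => flat_contDiff_nat n h

lemma exp2_le : Real.exp 2 ≤ 15/2 := by
  have h := Real.exp_one_lt_d9
  have : Real.exp 2 = Real.exp 1 ^ 2 := by rw [← Real.exp_nat_mul]; norm_num
  rw [this]
  nlinarith [Real.exp_pos 1]

lemma mono_aux {s t : ℝ} (hs : 0 < s) (hst : s ≤ t) (ht : t ≤ 2/15) :
    s * Real.log s ^ 2 ≤ t * Real.log t ^ 2 := by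
  have htp : 0 < t := hs.trans_le hst
  have h2 := exp2_le
  have ht1 : Real.exp 2 ≤ t⁻¹ := by
    rw [le_inv_comm₀ (Real.exp_pos 2) htp]
    refine ht.trans ?_
    rw [le_inv_comm₀ (by norm_num) (Real.exp_pos 2)]
    linarith
  have hs1 : t⁻¹ ≤ s⁻¹ := inv_anti₀ hs hst
  have h := Real.log_div_sqrt_antitoneOn (Set.mem_Ici.2 ht1) (Set.mem_Ici.2 (ht1.trans hs1)) hs1
  have hnn : 0 ≤ Real.log s⁻¹ / √s⁻¹ := by
    apply div_nonneg (Real.log_nonneg _) (Real.sqrt_nonneg _)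
    have := Real.one_le_exp (x := 2) (by norm_num)
    linarith
  have h3 := pow_le_pow_left₀ hnn h 2
  rw [div_pow, div_pow, Real.sq_sqrt (by positivity), Real.sq_sqrt (by positivity), Real.log_inv,
    Real.log_inv] at h3
  simp only [neg_sq, div_inv_eq_mul] at h3
  linarith

lemma log_le_neg_two {t : ℝ} (h0 : 0 < t) (ht : t ≤ 2/15) : Real.log t ≤ -2 := by
  rw [Real.log_le_iff_le_exp h0, Real.exp_neg]
  refine ht.trans ?_
  rw [le_inv_comm₀ (by norm_num) (Real.exp_pos 2)]
  linarith [exp2_le]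

theorem weak_aux (f : ℝ × ℝ → ℝ) (hf : ContDiff ℝ (⊤ : ℕ∞) f) (V : Set (ℝ × ℝ)) (hVo : IsOpen V)
    (hV : ∀ p ∈ V, |f p| ≤ 1 / 8) (e : ℝ × ℝ)
    (hg : IntegrableOn (fun p => fderiv ℝ f p e / (f p * Real.log |f p| ^ 2)) V volume)
    (η : ℝ × ℝ → ℝ) (hη : ContDiff ℝ (⊤ : ℕ∞) η) (hc : HasCompactSupport η) (hs : tsupport η ⊆ V) :
    ∫ p in V, (1 / Real.log |f p|) * fderiv ℝ η p e =
      - ∫ p in V, η p * (-(fderiv ℝ f p e / (f p * Real.log |f p| ^ 2))) := by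
  have hVm : MeasurableSet V := hVo.measurableSet
  have hfm : Measurable f := hf.continuous.measurable
  have hdf : Continuous (fun p => fderiv ℝ f p e) :=
    (hf.continuous_fderiv (by simp)).clm_apply continuous_const
  have hdη : Continuous (fun p => fderiv ℝ η p e) :=
    (hη.continuous_fderiv (by simp)).clm_apply continuous_const
  have hdηc : HasCompactSupport (fun p => fderiv ℝ η p e) := hc.fderiv_apply ℝ e
  obtain ⟨M, hM⟩ := hη.continuous.bounded_above_of_compact_support hc
  have hM0 : 0 ≤ M := (norm_nonneg _).trans (hM 0)
  let s : ℕ → ℝ := fun n => 1 / ((n : ℝ) + 100)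
  have hs0 : ∀ n, 0 < s n := fun n => by simp only [s]; positivity
  have hs1 : ∀ n, s n ≤ 1 / 100 := fun n => by
    simp only [s]; gcongr; simp
  have hst : Filter.Tendsto s Filter.atTop (nhds 0) := by
    refine Filter.Tendsto.div_atTop (tendsto_const_nhds (x := (1:ℝ)))
      (Filter.tendsto_atTop_add_const_right _ _ tendsto_natCast_atTop_atTop)
  let w : ℕ → ℝ × ℝ → ℝ := fun n p => 2 / Real.log (f p ^ 2 + s n)
  let dw : ℕ → ℝ × ℝ → ℝ := fun n p =>
    -(4 * f p * fderiv ℝ f p e / ((f p ^ 2 + s n) * Real.log (f p ^ 2 + s n) ^ 2))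
  have hpos : ∀ n p, 0 < f p ^ 2 + s n := fun n p => by have := hs0 n; positivity
  have hle : ∀ n, ∀ p ∈ V, f p ^ 2 + s n ≤ 2/15 := fun n p hp => by
    have h1 := hs1 n
    have h2 := hV p hp
    have h3 : f p ^ 2 ≤ (1/8)^2 := by rw [← sq_abs]; gcongr
    norm_num at h3 ⊢; linarith
  have hwm : ∀ n, Measurable (w n) := fun n => by
    simp only [w]; fun_prop
  have hdwm : ∀ n, Measurable (dw n) := fun n => by
    have := hdf.measurable
    simp only [dw]; fun_prop
  have hwb : ∀ n, ∀ p ∈ V, |w n p| ≤ 1 := fun n p hp => by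
    have := log_le_neg_two (hpos n p) (hle n p hp)
    simp only [w]
    rw [abs_div, abs_of_neg (by linarith : Real.log (f p ^ 2 + s n) < 0), abs_two,
      div_le_one (by linarith)]
    linarith
  have hdwb : ∀ n, ∀ p ∈ V, |dw n p| ≤ |fderiv ℝ f p e / (f p * Real.log |f p| ^ 2)| := by
    intro n p hp
    simp only [dw]
    by_cases h0 : f p = 0
    · simp [h0]
    have hfp : 0 < f p ^ 2 := by positivity
    have hm := mono_aux hfp (by linarith [hs0 n] : f p ^ 2 ≤ f p ^ 2 + s n) (hle n p hp)
    have hl : Real.log (f p ^ 2) = 2 * Real.log |f p| := by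
      rw [← sq_abs, Real.log_pow]; norm_num
    have hlog : Real.log |f p| ≤ -2 := log_le_neg_two (abs_pos.2 h0) ((hV p hp).trans (by norm_num))
    have hlog2 : 0 < Real.log |f p| ^ 2 := by nlinarith
    have hab : f p ^ 2 = |f p| ^ 2 := (sq_abs _).symm
    have habs : 0 < |f p| := abs_pos.2 h0
    rw [abs_neg, abs_div, abs_div, abs_mul, abs_mul, abs_mul (f p), abs_of_pos hlog2]
    have hden : 0 < f p ^ 2 * Real.log (f p ^ 2) ^ 2 := by rw [hl]; nlinarith [mul_pos hfp hlog2]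
    rw [abs_of_pos (hden.trans_le hm)]
    calc _ ≤ |4| * |f p| * |fderiv ℝ f p e| / (f p ^ 2 * Real.log (f p ^ 2) ^ 2) := by gcongr
      _ = _ := by
        rw [hl, hab]
        rw [abs_of_pos (by norm_num : (0:ℝ) < 4)]
        have : Real.log |f p| ≠ 0 := by linarith
        field_simp
        ring
  have hwd : ∀ n, ∀ p ∈ V, HasFDerivAt (w n) ((-2 / Real.log (f p ^ 2 + s n) ^ 2) • ((f p ^ 2 + s n)⁻¹ • ((2 * f p) • fderiv ℝ f p))) p := by
    intro n p hp
    have h1 : HasFDerivAt f (fderiv ℝ f p) p := (hf.differentiable (by simp) p).hasFDerivAt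
    have h2 : HasFDerivAt (fun p => f p ^ 2 + s n) ((2 * f p) • fderiv ℝ f p) p := by
      have := (h1.pow 2).add_const (s n)
      simpa using this
    have h3 := h2.log (hpos n p).ne'
    have hl := log_le_neg_two (hpos n p) (hle n p hp)
    have h4 : HasDerivAt (fun t : ℝ => 2 / t) (-2 / Real.log (f p ^ 2 + s n) ^ 2) (Real.log (f p ^ 2 + s n)) := by
      have := (hasDerivAt_inv (by linarith : Real.log (f p ^ 2 + s n) ≠ 0)).const_mul 2
      refine HasDerivAt.congr_deriv this ?_
      ring
    exact h4.comp_hasFDerivAt p h3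
  have hwd' : ∀ n, ∀ p ∈ V, fderiv ℝ (w n) p e = dw n p := fun n p hp => by
    rw [(hwd n p hp).fderiv]
    simp only [dw, smul_apply, smul_eq_mul]
    have := (hpos n p).ne'
    field_simp
    ring
  have hzη : ∀ p, p ∉ V → η p = 0 := fun p hp => image_eq_zero_of_notMem_tsupport (fun h => hp (hs h))
  have hzdη : ∀ p, p ∉ V → fderiv ℝ η p e = 0 := fun p hp => by
    have : p ∉ tsupport (fderiv ℝ η) := fun h => hp (hs (tsupport_fderiv_subset ℝ h))
    rw [image_eq_zero_of_notMem_tsupport this]; rfl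
  -- integrability
  have hIdη : Integrable (fun p => fderiv ℝ η p e) := hdη.integrable_of_hasCompactSupport hdηc
  have hI1 : ∀ n, IntegrableOn (fun p => w n p * fderiv ℝ η p e) V := fun n => by
    refine Integrable.mono' hIdη.norm.integrableOn
      ((hwm n).aestronglyMeasurable.mul hdη.aestronglyMeasurable) ?_
    refine (ae_restrict_iff' hVm).2 (Filter.Eventually.of_forall fun p hp => ?_)
    rw [norm_mul]
    exact mul_le_of_le_one_left (norm_nonneg _) (hwb n p hp)
  have hbd2 : ∀ n, ∀ p ∈ V, ‖η p * dw n p‖ ≤ M * ‖fderiv ℝ f p e / (f p * Real.log |f p| ^ 2)‖ :=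
    fun n p hp => by
    rw [norm_mul]
    exact mul_le_mul (hM p) (hdwb n p hp) (norm_nonneg _) hM0
  have hI2 : ∀ n, IntegrableOn (fun p => η p * dw n p) V := fun n => by
    refine Integrable.mono' (hg.norm.const_mul M)
      (hη.continuous.aestronglyMeasurable.mul (hdwm n).aestronglyMeasurable) ?_
    exact (ae_restrict_iff' hVm).2 (Filter.Eventually.of_forall fun p hp => hbd2 n p hp)
  have hI3 : ∀ n, IntegrableOn (fun p => w n p * η p) V := fun n => by
    refine Integrable.mono' (hη.continuous.integrable_of_hasCompactSupport hc).norm.integrableOn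
      ((hwm n).aestronglyMeasurable.mul hη.continuous.aestronglyMeasurable) ?_
    refine (ae_restrict_iff' hVm).2 (Filter.Eventually.of_forall fun p hp => ?_)
    rw [norm_mul]
    exact mul_le_of_le_one_left (norm_nonneg _) (hwb n p hp)
  have hparts : ∀ n, ∫ p in V, w n p * fderiv ℝ η p e = - ∫ p in V, η p * dw n p := by
    intro n
    have e1 : (fun p => fderiv ℝ (w n) p e * η p) = V.indicator (fun p => η p * dw n p) := by
      funext p
      by_cases hp : p ∈ V
      · rw [Set.indicator_of_mem hp, hwd' n p hp, mul_comm]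
      · rw [Set.indicator_of_notMem hp, hzη p hp, mul_zero]
    have e2 : (fun p => w n p * fderiv ℝ η p e) = V.indicator (fun p => w n p * fderiv ℝ η p e) := by
      funext p
      by_cases hp : p ∈ V
      · rw [Set.indicator_of_mem hp]
      · rw [Set.indicator_of_notMem hp, hzdη p hp, mul_zero]
    have e3 : (fun p => w n p * η p) = V.indicator (fun p => w n p * η p) := by
      funext p
      by_cases hp : p ∈ V
      · rw [Set.indicator_of_mem hp]
      · rw [Set.indicator_of_notMem hp, hzη p hp, mul_zero]
    have := integral_mul_fderiv_eq_neg_fderiv_mul_of_integrable (μ := volume) (f := w n) (g := η) (v := e)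
      (by rw [e1]; exact (integrable_indicator_iff hVm).2 (hI2 n))
      (by rw [e2]; exact (integrable_indicator_iff hVm).2 (hI1 n))
      (by rw [e3]; exact (integrable_indicator_iff hVm).2 (hI3 n))
      (fun x hx => (hwd n x (hs hx)).differentiableAt)
      (fun x _ => hη.differentiable (by simp) x)
    rw [e1, e2, integral_indicator hVm, integral_indicator hVm] at this
    exact this
  -- limits
  have L1 : Filter.Tendsto (fun n => ∫ p in V, w n p * fderiv ℝ η p e) Filter.atTop
      (nhds (∫ p in V, (1 / Real.log |f p|) * fderiv ℝ η p e)) := by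
    refine tendsto_integral_of_dominated_convergence (fun p => ‖fderiv ℝ η p e‖)
      (fun n => (hI1 n).aestronglyMeasurable) hIdη.norm.integrableOn (fun n => ?_) ?_
    · refine (ae_restrict_iff' hVm).2 (Filter.Eventually.of_forall fun p hp => ?_)
      rw [norm_mul]
      exact mul_le_of_le_one_left (norm_nonneg _) (hwb n p hp)
    · refine (ae_restrict_iff' hVm).2 (Filter.Eventually.of_forall fun p hp => ?_)
      refine Filter.Tendsto.mul_const _ ?_
      simp only [w]
      by_cases h0 : f p = 0
      · simp only [h0, abs_zero, Real.log_zero, div_zero]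
        have h1 : Filter.Tendsto (fun n => Real.log (s n)) Filter.atTop Filter.atBot :=
          Real.tendsto_log_nhdsGT_zero.comp
            (tendsto_nhdsWithin_iff.2 ⟨hst, Filter.Eventually.of_forall hs0⟩)
        have := Filter.Tendsto.div_atBot (tendsto_const_nhds (x := (2:ℝ))) h1
        simpa using this
      · have hlog : Real.log |f p| ≤ -2 := log_le_neg_two (abs_pos.2 h0) ((hV p hp).trans (by norm_num))
        have hl : Real.log (f p ^ 2) = 2 * Real.log |f p| := by
          rw [← sq_abs, Real.log_pow]; norm_num
        have h1 : Filter.Tendsto (fun n => f p ^ 2 + s n) Filter.atTop (nhds (f p ^ 2)) := by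
          simpa using hst.const_add (f p ^ 2)
        have h2 := (tendsto_const_nhds (x := (2:ℝ))).div (h1.log (by positivity)) (by rw [hl]; linarith)
        have hne : Real.log |f p| ≠ 0 := by linarith
        have e1 : 1 / Real.log |f p| = 2 / Real.log (f p ^ 2) := by
          rw [hl]
          field_simp
        rw [e1]
        exact h2
  have L2 : Filter.Tendsto (fun n => ∫ p in V, η p * dw n p) Filter.atTop
      (nhds (∫ p in V, η p * (-(fderiv ℝ f p e / (f p * Real.log |f p| ^ 2))))) := by
    refine tendsto_integral_of_dominated_convergence
      (fun p => M * ‖fderiv ℝ f p e / (f p * Real.log |f p| ^ 2)‖)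
      (fun n => (hI2 n).aestronglyMeasurable) (hg.norm.const_mul M) (fun n => ?_) ?_
    · exact (ae_restrict_iff' hVm).2 (Filter.Eventually.of_forall fun p hp => hbd2 n p hp)
    · refine (ae_restrict_iff' hVm).2 (Filter.Eventually.of_forall fun p hp => ?_)
      refine Filter.Tendsto.const_mul _ (Filter.Tendsto.neg ?_)
      by_cases h0 : f p = 0
      · simp [h0]
      · have hlog : Real.log |f p| ≤ -2 := log_le_neg_two (abs_pos.2 h0) ((hV p hp).trans (by norm_num))
        have hl : Real.log (f p ^ 2) = 2 * Real.log |f p| := by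
          rw [← sq_abs, Real.log_pow]; norm_num
        have h1 : Filter.Tendsto (fun n => f p ^ 2 + s n) Filter.atTop (nhds (f p ^ 2)) := by
          simpa using hst.const_add (f p ^ 2)
        have hne : Real.log |f p| ≠ 0 := by linarith
        have h2 := (tendsto_const_nhds (x := 4 * f p * fderiv ℝ f p e)).div
          (h1.mul ((h1.log (by positivity)).pow 2)) (by rw [hl]; positivity)
        have e1 : fderiv ℝ f p e / (f p * Real.log |f p| ^ 2) =
            4 * f p * fderiv ℝ f p e / (f p ^ 2 * Real.log (f p ^ 2) ^ 2) := by
          rw [hl]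
          field_simp
          ring
        rw [e1]
        exact h2
  exact tendsto_nhds_unique L1 (by simpa only [hparts] using L2.neg)

noncomputable def phi (t : ℝ) : ℝ := 1 / (|t| * Real.log |t| ^ 2)

lemma phi_nonneg (t : ℝ) : 0 ≤ phi t := by unfold phi; positivity

lemma even_fin (F : ℝ → ENNReal) (hF : ∀ x, F (-x) = F x) (c : ℝ)
    (h : ∫⁻ t in Set.Ioc 0 c, F t < ⊤) : ∫⁻ t in Set.Icc (-c) c, F t < ⊤ := by
  have h1 : ∫⁻ t in (fun x : ℝ => -x) '' Set.Ioc 0 c, F t = ∫⁻ t in Set.Ioc 0 c, F t := by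
    rw [lintegral_image_eq_lintegral_abs_deriv_mul (f' := fun _ => -1) measurableSet_Ioc
      (fun x _ => (hasDerivAt_neg x).hasDerivWithinAt) neg_injective.injOn]
    simp [hF]
  have hsub : Set.Icc (-c) c ⊆ ((fun x : ℝ => -x) '' Set.Ioc 0 c) ∪ ({0} ∪ Set.Ioc 0 c) := by
    rintro x ⟨hx1, hx2⟩
    rcases lt_trichotomy x 0 with h | h | h
    · left; exact ⟨-x, ⟨by linarith, by linarith⟩, by simp⟩
    · right; left; exact h
    · right; right; exact ⟨h, hx2⟩
  refine (lintegral_mono_set hsub).trans_lt ?_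
  refine (lintegral_union_le _ _ _).trans_lt ?_
  rw [h1]
  refine ENNReal.add_lt_top.2 ⟨h, ?_⟩
  refine (lintegral_union_le _ _ _).trans_lt ?_
  refine ENNReal.add_lt_top.2 ⟨?_, h⟩
  simp

lemma phi_fin : ∫⁻ t in Set.Icc (-(1/2) : ℝ) (1/2), ENNReal.ofReal (phi t) < ⊤ := by
  refine even_fin _ (fun x => by simp [phi]) _ ?_
  have h : IntegrableOn phi (Set.Ioc 0 (1/2)) := by
    refine intervalIntegral.integrableOn_deriv_of_nonneg (g := fun t => -(Real.log t)⁻¹) ?_ ?_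
      (fun x _ => phi_nonneg x)
    · intro x hx
      apply ContinuousAt.continuousWithinAt
      rcases hx.1.eq_or_lt with h0 | h0
      · subst h0
        have h1 : Filter.Tendsto (fun t => -(Real.log t)⁻¹) (nhdsWithin 0 {0}ᶜ) (nhds (-0)) :=
          (Filter.Tendsto.comp tendsto_inv_atBot_zero Real.tendsto_log_nhdsNE_zero).neg
        rw [continuousAt_iff_punctured_nhds]
        simpa using h1
      · have : Real.log x < 0 := Real.log_neg h0 (by linarith [hx.2])
        exact ((Real.continuousAt_log h0.ne').inv₀ this.ne).neg
    · intro x hx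
      have : Real.log x < 0 := Real.log_neg hx.1 (by linarith [hx.2])
      refine HasDerivAt.congr_deriv ((Real.hasDerivAt_log hx.1.ne').inv this.ne).neg ?_
      have := hx.1.ne'
      simp only [phi, abs_of_pos hx.1]
      field_simp
      try simp
  exact h.lintegral_lt_top

lemma shift_phi (b : ℝ) (hb : |b| ≤ 1/4) :
    ∫⁻ y in Set.Ioo (-(1/4) : ℝ) (1/4), ENNReal.ofReal (phi (y - b)) ≤
      ∫⁻ t in Set.Icc (-(1/2) : ℝ) (1/2), ENNReal.ofReal (phi t) := by
  have := lintegral_image_eq_lintegral_abs_deriv_mul (f := fun y => y - b) (f' := fun _ => 1)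
    (measurableSet_Ioo (a := (-(1/4) : ℝ)) (b := 1/4))
    (fun x _ => ((hasDerivAt_id x).sub_const b).hasDerivWithinAt) (sub_left_injective).injOn
    (fun t => ENNReal.ofReal (phi t))
  simp only [abs_one, ENNReal.ofReal_one, one_mul] at this
  rw [← this]
  apply lintegral_mono_set
  rintro _ ⟨y, hy, rfl⟩
  have := abs_le.1 hb
  constructor <;> dsimp only <;> linarith [hy.1, hy.2]

lemma phi_pt {a r t : ℝ} (ha : 0 < a) (ha1 : a ≤ 1/4) (hr : r ≠ 0) (hr1 : |r| ≤ 1/2)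
    (h : a * |r| ≤ |t|) (ht : |t| ≤ 1/8) : phi t ≤ a⁻¹ * phi r := by
  have hr0 : 0 < |r| := abs_pos.2 hr
  have h0 : 0 < a * |r| := by positivity
  have hm := mono_aux h0 h (by linarith)
  have hl : Real.log |r| < 0 := Real.log_neg hr0 (by linarith)
  have hla : Real.log a < 0 := Real.log_neg ha (by linarith)
  have h2 : Real.log |r| ^ 2 ≤ Real.log (a * |r|) ^ 2 := by
    rw [Real.log_mul ha.ne' hr0.ne']
    nlinarith
  have h3 : 0 < Real.log |r| ^ 2 := by nlinarith
  have h4 : a * |r| * Real.log |r| ^ 2 ≤ |t| * Real.log |t| ^ 2 :=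
    (mul_le_mul_of_nonneg_left h2 h0.le).trans hm
  unfold phi
  calc _ ≤ 1 / (a * |r| * Real.log |r| ^ 2) := one_div_le_one_div_of_le (by positivity) h4
    _ = _ := by field_simp

lemma ae_ne_real (s : Set ℝ) (b : ℝ) : ∀ᵐ y ∂(volume.restrict s), y ≠ b :=
  ae_restrict_of_ae (by simp [ae_iff])

lemma abs_sub_le' {c y : ℝ} (hc : |c| ≤ 1/16) (hy : y ∈ Set.Ioo (-(1/4) : ℝ) (1/4)) :
    |y ^ 2 - c| ≤ 1/8 := by
  have h1 := abs_le.1 hc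
  have : y ^ 2 ≤ 1/16 := by nlinarith [hy.1, hy.2]
  rw [abs_le]
  constructor <;> nlinarith [sq_nonneg y]

lemma phi_meas : Measurable phi := by unfold phi; fun_prop

lemma phi_y {c : ℝ} (hc : c ≠ 0) (hc1 : |c| ≤ 1/16) :
    ∫⁻ y in Set.Ioo (-(1/4) : ℝ) (1/4), ENNReal.ofReal (phi (y ^ 2 - c)) ≤
      ENNReal.ofReal (√|c|)⁻¹ *
        (2 * ∫⁻ t in Set.Icc (-(1/2) : ℝ) (1/2), ENNReal.ofReal (phi t)) := by
  set a := √|c| with ha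
  have ha0 : 0 < a := Real.sqrt_pos.2 (abs_pos.2 hc)
  have ha2 : a ^ 2 = |c| := Real.sq_sqrt (abs_nonneg _)
  have ha1 : a ≤ 1/4 := by nlinarith
  obtain ⟨b, hb, hbb⟩ : ∃ b : ℝ, |b| ≤ 1/4 ∧ ∀ y : ℝ,
      a * |y - b| ≤ |y ^ 2 - c| ∨ a * |y - -b| ≤ |y ^ 2 - c| := by
    rcases lt_or_gt_of_ne hc with h | h
    · refine ⟨0, by simp, fun y => Or.inl ?_⟩
      rw [abs_of_neg h] at ha2
      rw [sub_zero, abs_of_pos (by nlinarith [sq_nonneg y] : 0 < y ^ 2 - c), ← sq_abs y]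
      nlinarith [sq_nonneg (|y| - a), abs_nonneg y]
    · rw [abs_of_pos h] at ha2
      have key : ∀ y : ℝ, |y ^ 2 - c| = |y + a| * |y - a| := fun y => by
        rw [← ha2, ← abs_mul]; ring_nf
      refine ⟨a, by rwa [abs_of_pos ha0], fun y => ?_⟩
      rw [key]
      rcases le_total 0 y with hy | hy
      · left
        gcongr
        exact (by linarith : a ≤ y + a).trans (le_abs_self _)
      · right
        rw [mul_comm, sub_neg_eq_add]
        gcongr
        exact (by linarith : a ≤ -(y - a)).trans (neg_le_abs _)
  have hb' : |-b| ≤ 1/4 := by rwa [abs_neg]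
  have h1 : ∫⁻ y in Set.Ioo (-(1/4) : ℝ) (1/4), ENNReal.ofReal (phi (y ^ 2 - c)) ≤
      ∫⁻ y in Set.Ioo (-(1/4) : ℝ) (1/4), ENNReal.ofReal a⁻¹ *
        (ENNReal.ofReal (phi (y - b)) + ENNReal.ofReal (phi (y - -b))) := by
    refine lintegral_mono_ae ?_
    filter_upwards [ae_ne_real _ b, ae_ne_real _ (-b), ae_restrict_mem measurableSet_Ioo]
      with y hy hy' hyI
    have hr : ∀ b : ℝ, |b| ≤ 1/4 → |y - b| ≤ 1/2 := fun b hb => by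
      have := abs_le.1 hb
      rw [abs_le]; constructor <;> linarith [hyI.1, hyI.2]
    rw [← ENNReal.ofReal_add (phi_nonneg _) (phi_nonneg _), ← ENNReal.ofReal_mul (by positivity)]
    apply ENNReal.ofReal_le_ofReal
    have e1 := phi_nonneg (y - b)
    have e2 := phi_nonneg (y - -b)
    have ea : 0 < a⁻¹ := inv_pos.2 ha0
    rcases hbb y with h | h
    · have := phi_pt ha0 ha1 (sub_ne_zero.2 hy) (hr b hb) h (abs_sub_le' hc1 hyI)
      nlinarith [mul_nonneg ea.le e2]
    · have := phi_pt ha0 ha1 (sub_ne_zero.2 hy') (hr _ hb') h (abs_sub_le' hc1 hyI)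
      nlinarith [mul_nonneg ea.le e1]
  refine h1.trans ?_
  rw [lintegral_const_mul' _ _ ENNReal.ofReal_ne_top, lintegral_add_left, two_mul]
  · exact mul_le_mul_right (add_le_add (shift_phi b hb) (shift_phi (-b) hb')) _
  · exact (phi_meas.comp (measurable_id.sub_const b)).ennreal_ofReal

lemma phi_yy {c : ℝ} (hc1 : |c| ≤ 1/16) :
    ∫⁻ y in Set.Ioo (-(1/4) : ℝ) (1/4), ENNReal.ofReal (|2 * y| * phi (y ^ 2 - c)) ≤
      2 * ∫⁻ t in Set.Icc (-(1/2) : ℝ) (1/2), ENNReal.ofReal (phi t) := by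
  have hd : ∀ y : ℝ, HasDerivAt (fun y : ℝ => y ^ 2 - c) (2 * y) y := fun y => by
    simpa using (hasDerivAt_pow 2 y).sub_const c
  have key : ∀ s : Set ℝ, MeasurableSet s → s ⊆ Set.Ioo (-(1/4) : ℝ) (1/4) →
      Set.InjOn (fun y : ℝ => y ^ 2 - c) s →
      ∫⁻ y in s, ENNReal.ofReal (|2 * y| * phi (y ^ 2 - c)) ≤
        ∫⁻ t in Set.Icc (-(1/2) : ℝ) (1/2), ENNReal.ofReal (phi t) := by
    intro s hs hsub hinj
    have := lintegral_image_eq_lintegral_abs_deriv_mul hs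
      (fun x _ => (hd x).hasDerivWithinAt) hinj (fun t => ENNReal.ofReal (phi t))
    simp only [← ENNReal.ofReal_mul (abs_nonneg _)] at this
    rw [← this]
    apply lintegral_mono_set
    rintro _ ⟨y, hy, rfl⟩
    have := abs_le.1 (abs_sub_le' hc1 (hsub hy))
    constructor <;> dsimp only <;> linarith [this.1, this.2]
  have hsub : Set.Ioo (-(1/4) : ℝ) (1/4) ⊆ Set.Ioc (-(1/4) : ℝ) 0 ∪ Set.Ico (0 : ℝ) (1/4) := by
    intro y hy
    rcases le_total 0 y with h | h
    · right; exact ⟨h, hy.2⟩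
    · left; exact ⟨hy.1, h⟩
  refine (lintegral_mono_set hsub).trans ((lintegral_union_le _ _ _).trans ?_)
  rw [two_mul]
  refine add_le_add (key _ measurableSet_Ioc ?_ ?_) (key _ measurableSet_Ico ?_ ?_)
  · intro y hy; exact ⟨hy.1, by linarith [hy.2]⟩
  · intro y hy z hz h
    have h' : y ^ 2 = z ^ 2 := by simpa using h
    rcases sq_eq_sq_iff_eq_or_eq_neg.1 h' with h | h
    · exact h
    · linarith [hy.2, hz.2]
  · intro y hy; exact ⟨by linarith [hy.1], hy.2⟩
  · intro y hy z hz h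
    have h' : y ^ 2 = z ^ 2 := by simpa using h
    rcases sq_eq_sq_iff_eq_or_eq_neg.1 h' with h | h
    · exact h
    · linarith [hy.1, hz.1]

lemma rpow_fin : ∫⁻ t in Set.Icc (-(Real.pi/2)) (Real.pi/2), ENNReal.ofReal (√|t|)⁻¹ < ⊤ := by
  have hp := Real.pi_pos
  refine even_fin _ (fun x => by simp) _ ?_
  have h : IntegrableOn (fun t : ℝ => t ^ (-(1/2) : ℝ)) (Set.Ioc 0 (Real.pi/2)) :=
    (intervalIntegrable_iff_integrableOn_Ioc_of_le (by positivity)).1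
      (intervalIntegral.intervalIntegrable_rpow' (by norm_num))
  refine lt_of_le_of_lt (le_of_eq ?_) h.lintegral_lt_top
  refine setLIntegral_congr_fun measurableSet_Ioc fun t ht => ?_
  rw [abs_of_pos ht.1, Real.rpow_neg ht.1.le, Real.sqrt_eq_rpow]

lemma sin_pt {t : ℝ} (ht : t ∈ Set.Icc (-(Real.pi/2)) (Real.pi/2)) :
    (√|Real.sin t|)⁻¹ ≤ 2 * (√|t|)⁻¹ := by
  have hp := Real.pi_pos
  by_cases h0 : t = 0
  · simp [h0]
  have ht0 : 0 < |t| := abs_pos.2 h0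
  have h1 := Real.mul_abs_le_abs_sin (abs_le.2 ht)
  have h2 : |t| / 4 ≤ |Real.sin t| := by
    refine le_trans ?_ h1
    rw [div_eq_inv_mul]
    gcongr
    rw [le_div_iff₀ hp]
    linarith [Real.pi_le_four]
  have h3 : √|t| / 2 ≤ √|Real.sin t| := by
    apply Real.le_sqrt_of_sq_le
    rw [div_pow, Real.sq_sqrt ht0.le]
    linarith
  have h4 : 0 < √|t| := Real.sqrt_pos.2 ht0
  calc _ ≤ (√|t| / 2)⁻¹ := inv_anti₀ (by positivity) h3
    _ = _ := by field_simp

lemma sin_fin : ∫⁻ t in Set.Ioi (0:ℝ), ENNReal.ofReal (1 / ((1 + t ^ 2) * √|Real.sin t|)) < ⊤ := by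
  have hp := Real.pi_pos
  set K := ∫⁻ t in Set.Icc (-(Real.pi/2)) (Real.pi/2), ENNReal.ofReal (√|t|)⁻¹ with hK
  have hKf : K < ⊤ := rpow_fin
  have hsub : Set.Ioi (0:ℝ) ⊆ ⋃ n : ℕ, (fun t : ℝ => t + n * Real.pi) '' Set.Icc (-(Real.pi/2)) (Real.pi/2) := by
    intro t ht
    have ht' : 0 < t := ht
    rw [Set.mem_iUnion]
    set n := ⌊t / Real.pi + 1/2⌋₊ with hn
    have hnn : 0 ≤ t / Real.pi + 1/2 := by positivity
    have h1 := Nat.floor_le hnn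
    have h2 := Nat.lt_floor_add_one (t / Real.pi + 1/2)
    rw [← hn] at h1 h2
    have ht2 : t / Real.pi * Real.pi = t := by field_simp
    refine ⟨n, t - n * Real.pi, ⟨?_, ?_⟩, by simp⟩ <;> nlinarith
  refine (lintegral_mono_set hsub).trans_lt ((lintegral_iUnion_le _ _).trans_lt ?_)
  have hterm : ∀ n : ℕ, ∫⁻ t in (fun t : ℝ => t + n * Real.pi) '' Set.Icc (-(Real.pi/2)) (Real.pi/2),
      ENNReal.ofReal (1 / ((1 + t ^ 2) * √|Real.sin t|)) ≤
        ENNReal.ofReal (1 / (1 + (n:ℝ) ^ 2)) * (ENNReal.ofReal 2 * K) := by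
    intro n
    rw [lintegral_image_eq_lintegral_abs_deriv_mul (f := fun t : ℝ => t + n * Real.pi)
      (f' := fun _ => 1) measurableSet_Icc
      (fun x _ => ((hasDerivAt_id x).add_const _).hasDerivWithinAt) (add_left_injective _).injOn]
    rw [← lintegral_const_mul' _ _ ENNReal.ofReal_ne_top,
      ← lintegral_const_mul' _ _ ENNReal.ofReal_ne_top]
    refine setLIntegral_mono' measurableSet_Icc fun t ht => ?_
    rw [abs_one, ENNReal.ofReal_one, one_mul, ← ENNReal.ofReal_mul (by positivity),
      ← ENNReal.ofReal_mul (by positivity)]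
    apply ENNReal.ofReal_le_ofReal
    have e1 : |Real.sin (t + n * Real.pi)| = |Real.sin t| := by
      rw [Real.sin_add_nat_mul_pi, abs_mul, abs_pow, abs_neg, abs_one, one_pow, one_mul]
    have e2 : (n:ℝ) ^ 2 ≤ (t + n * Real.pi) ^ 2 := by
      rcases Nat.eq_zero_or_pos n with h | h
      · subst h; simp; positivity
      · have h1 : (1:ℝ) ≤ n := by exact_mod_cast h
        have h3 := Real.pi_gt_three
        have : (n:ℝ) ≤ t + n * Real.pi := by nlinarith [ht.1]
        gcongr
    rw [e1]
    calc 1 / ((1 + (t + n * Real.pi) ^ 2) * √|Real.sin t|)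
        = 1 / (1 + (t + n * Real.pi) ^ 2) * (√|Real.sin t|)⁻¹ := by
          rw [one_div, mul_inv, one_div]
      _ ≤ 1 / (1 + (n:ℝ) ^ 2) * (2 * (√|t|)⁻¹) := by
          gcongr
          exact sin_pt ht
  refine (ENNReal.tsum_le_tsum hterm).trans_lt ?_
  rw [ENNReal.tsum_mul_right]
  refine ENNReal.mul_lt_top ?_ (ENNReal.mul_lt_top ENNReal.ofReal_lt_top hKf)
  have hsum : Summable (fun n : ℕ => 1 / (1 + (n:ℝ) ^ 2)) := by
    refine Summable.of_norm_bounded_eventually_nat (g := fun n : ℕ => 1 / (n:ℝ) ^ 2)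
      (Real.summable_one_div_nat_pow.2 (by norm_num)) ?_
    filter_upwards [Filter.eventually_gt_atTop 0] with n hn
    have : (0:ℝ) < n := by exact_mod_cast hn
    rw [Real.norm_of_nonneg (by positivity)]
    gcongr
    linarith
  exact hsum.tsum_ofReal_lt_top

noncomputable def uu : ℝ → ℝ := flat (fun x => Real.sin (Real.exp (x⁻¹) * Real.pi))

lemma uu_contDiff : ContDiff ℝ (⊤ : ℕ∞) uu := flat_contDiff AA.S

lemma uu_le {x : ℝ} (hx : x ∈ Set.Ioo (-(1/4) : ℝ) (1/4)) : |uu x| ≤ 1/16 := by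
  unfold uu flat
  split_ifs with h
  · norm_num
  · rw [abs_mul, Real.abs_exp]
    have h1 := Real.abs_sin_le_one (Real.exp (x⁻¹) * Real.pi)
    have hx2 : 0 < x ^ 2 := by positivity
    have h2 : 16 ≤ 1 / x ^ 2 := by
      rw [le_div_iff₀ hx2]; nlinarith [hx.1, hx.2]
    have h3 : Real.exp (-(1 / x ^ 2)) ≤ 1/16 := by
      rw [Real.exp_neg, one_div 16]
      apply inv_anti₀ (by norm_num)
      linarith [Real.add_one_le_exp (1 / x ^ 2)]
    calc _ ≤ 1 * (1/16 : ℝ) := by gcongr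
      _ = _ := by norm_num

noncomputable def thd (x : ℝ) : ℝ := Real.exp (x⁻¹) * (-(x ^ 2)⁻¹) * Real.pi

lemma th_deriv {x : ℝ} (hx : x ≠ 0) :
    HasDerivAt (fun x : ℝ => Real.exp (x⁻¹) * Real.pi) (thd x) x :=
  ((hasDerivAt_inv hx).exp).mul_const Real.pi

lemma uu_deriv {x : ℝ} (hx : x ≠ 0) : deriv uu x =
    (Real.cos (Real.exp (x⁻¹) * Real.pi) * thd x + Real.sin (Real.exp (x⁻¹) * Real.pi) *
      (2 * (x⁻¹ * (x⁻¹ * x⁻¹)))) * Real.exp (-(1 / x ^ 2)) :=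
  (flat_hasDerivAt hx (th_deriv hx).sin).deriv

lemma th_inj : Function.Injective (fun x : ℝ => Real.exp (x⁻¹) * Real.pi) := by
  intro x y h
  exact inv_injective (Real.exp_injective (mul_right_cancel₀ Real.pi_pos.ne' h))

lemma sin_ae : ∀ᵐ x : ℝ, Real.sin (Real.exp (x⁻¹) * Real.pi) ≠ 0 := by
  have h : ({x : ℝ | Real.sin (Real.exp (x⁻¹) * Real.pi) = 0}).Countable := by
    have h1 : (Set.range (fun n : ℤ => (n : ℝ) * Real.pi)).Countable := Set.countable_range _
    refine (h1.preimage_of_injOn (f := fun x : ℝ => Real.exp (x⁻¹) * Real.pi) th_inj.injOn).mono ?_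
    intro x hx
    exact Real.sin_eq_zero_iff.1 hx
  have := h.ae_notMem volume
  exact this

lemma ratio_pt {x : ℝ} (hx : x ≠ 0) (hs : Real.sin (Real.exp (x⁻¹) * Real.pi) ≠ 0) :
    |deriv uu x| * (√|uu x|)⁻¹ ≤
      (1 + Real.pi ^ 2 * Real.exp 2) * (|thd x| *
        (1 / ((1 + (Real.exp (x⁻¹) * Real.pi) ^ 2) * √|Real.sin (Real.exp (x⁻¹) * Real.pi)|))) + 8 := by
  rw [uu_deriv hx]
  have hu : uu x = Real.sin (Real.exp (x⁻¹) * Real.pi) * Real.exp (-(1 / x ^ 2)) := by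
    simp only [uu, flat, if_neg hx]
  rw [hu]
  set S := Real.sin (Real.exp (x⁻¹) * Real.pi) with hS
  set c := Real.cos (Real.exp (x⁻¹) * Real.pi) with hc
  set w := Real.exp (-(1 / 2 * (x⁻¹) ^ 2)) with hw
  have hw0 : 0 < w := Real.exp_pos _
  have hww : Real.exp (-(1 / x ^ 2)) = w * w := by
    rw [hw, ← Real.exp_add]; congr 1; rw [inv_pow]; ring
  have hS1 : |S| ≤ 1 := Real.abs_sin_le_one _
  have hc1 : |c| ≤ 1 := Real.abs_cos_le_one _
  have hS0 : 0 < |S| := abs_pos.2 hs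
  set r := √|S| with hr
  have hr0 : 0 < r := Real.sqrt_pos.2 hS0
  have hr1 : r ≤ 1 := Real.sqrt_le_one.2 hS1
  have hrr : |S| = r * r := (Real.mul_self_sqrt hS0.le).symm
  have hsq : √|S * Real.exp (-(1 / x ^ 2))| = r * w := by
    rw [abs_mul, hww, abs_mul_self, Real.sqrt_mul hS0.le, Real.sqrt_mul_self hw0.le]
  rw [hsq, hww]
  set t := |x⁻¹| with ht
  have ht0 : 0 ≤ t := abs_nonneg _
  have htsq : t ^ 2 = (x⁻¹) ^ 2 := sq_abs _
  -- the two weights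
  have hA : w * (1 + (Real.exp (x⁻¹) * Real.pi) ^ 2) ≤ 1 + Real.pi ^ 2 * Real.exp 2 := by
    have h1 : w ≤ 1 := Real.exp_le_one_iff.2 (by nlinarith [sq_nonneg (x⁻¹)])
    have h2 : w * Real.exp (x⁻¹) ^ 2 ≤ Real.exp 2 := by
      rw [hw, ← Real.exp_nat_mul, ← Real.exp_add]
      apply Real.exp_le_exp.2
      push_cast
      nlinarith [sq_nonneg (x⁻¹ - 2)]
    have h3 := mul_le_mul_of_nonneg_left h2 (sq_nonneg Real.pi)
    nlinarith
  have hB : 2 * t ^ 3 * w ≤ 8 := by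
    have h1 := Real.quadratic_le_exp_of_nonneg (x := 1/2 * t ^ 2) (by positivity)
    have h2 : w = (Real.exp (1/2 * t ^ 2))⁻¹ := by rw [hw, Real.exp_neg, htsq]
    rw [h2, ← div_eq_mul_inv, div_le_iff₀ (Real.exp_pos _)]
    nlinarith [mul_nonneg (sq_nonneg t) (sq_nonneg (t - 1)), sq_nonneg t]
  have hnum : |(c * thd x + S * (2 * (x⁻¹ * (x⁻¹ * x⁻¹)))) * (w * w)| ≤
      (|thd x| + r * r * (2 * t ^ 3)) * (w * w) := by
    rw [abs_mul, abs_mul_self]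
    gcongr
    refine (abs_add_le _ _).trans ?_
    rw [abs_mul, abs_mul S, hrr]
    have : |2 * (x⁻¹ * (x⁻¹ * x⁻¹))| = 2 * t ^ 3 := by
      rw [abs_mul, abs_mul, abs_mul, abs_two]; ring
    rw [this]
    gcongr
    exact mul_le_of_le_one_left (abs_nonneg _) hc1
  set D := 1 + (Real.exp (x⁻¹) * Real.pi) ^ 2 with hD
  have hD0 : 0 < D := by positivity
  calc _ ≤ (|thd x| + r * r * (2 * t ^ 3)) * (w * w) * (r * w)⁻¹ := by gcongr
    _ = (w * D) * (|thd x| * (1 / (D * r))) + r * (2 * t ^ 3 * w) := by field_simp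
    _ ≤ _ := by
      gcongr
      have : 0 ≤ 2 * t ^ 3 * w := by positivity
      nlinarith

lemma ratio_fin : ∫⁻ x in Set.Ioo (-(1/4) : ℝ) (1/4),
    ENNReal.ofReal (|deriv uu x| * (√|uu x|)⁻¹) < ⊤ := by
  set C := 1 + Real.pi ^ 2 * Real.exp 2 with hC
  have hC0 : 0 ≤ C := by positivity
  have h1 : ∫⁻ x in Set.Ioo (-(1/4) : ℝ) (1/4), ENNReal.ofReal (|deriv uu x| * (√|uu x|)⁻¹) ≤
      ∫⁻ x in Set.Ioo (-(1/4) : ℝ) (1/4), (ENNReal.ofReal C * (ENNReal.ofReal |thd x| *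
        ENNReal.ofReal (1 / ((1 + (Real.exp (x⁻¹) * Real.pi) ^ 2) *
          √|Real.sin (Real.exp (x⁻¹) * Real.pi)|))) + ENNReal.ofReal 8) := by
    refine lintegral_mono_ae ?_
    filter_upwards [ae_ne_real _ 0, ae_restrict_of_ae sin_ae] with x hx hs
    rw [← ENNReal.ofReal_mul (abs_nonneg _), ← ENNReal.ofReal_mul hC0,
      ← ENNReal.ofReal_add (by positivity) (by norm_num)]
    exact ENNReal.ofReal_le_ofReal (ratio_pt hx hs)
  refine h1.trans_lt ?_
  rw [lintegral_add_right _ measurable_const, lintegral_const_mul' _ _ ENNReal.ofReal_ne_top]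
  refine ENNReal.add_lt_top.2 ⟨ENNReal.mul_lt_top ENNReal.ofReal_lt_top ?_, ?_⟩
  · set F : ℝ → ENNReal := fun t => ENNReal.ofReal (1 / ((1 + t ^ 2) * √|Real.sin t|)) with hF
    have h2 := lintegral_image_eq_lintegral_abs_deriv_mul
      (s := Set.Ioo (-(1/4) : ℝ) (1/4) \ {0}) (f := fun x : ℝ => Real.exp (x⁻¹) * Real.pi) (f' := thd)
      (measurableSet_Ioo.diff (measurableSet_singleton 0))
      (fun x hx => (th_deriv hx.2).hasDerivWithinAt) th_inj.injOn F
    have h3 : (Set.Ioo (-(1/4) : ℝ) (1/4) \ {0} : Set ℝ) =ᵐ[volume] Set.Ioo (-(1/4) : ℝ) (1/4) :=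
      sdiff_null_ae_eq_self (by simp)
    rw [setLIntegral_congr h3] at h2
    refine lt_of_le_of_lt (le_of_eq h2.symm) (lt_of_le_of_lt (lintegral_mono_set ?_) sin_fin)
    rintro _ ⟨x, _, rfl⟩
    have := Real.pi_pos
    exact Set.mem_Ioi.2 (by positivity)
  · simp [ENNReal.mul_lt_top_iff]

lemma norm_phi (A t : ℝ) : ‖A / (t * Real.log |t| ^ 2)‖ = |A| * phi t := by
  rw [Real.norm_eq_abs, abs_div, abs_mul, abs_pow, sq_abs, phi]
  ring

lemma prod_int (A : ℝ × ℝ → ℝ) (hA : Measurable A)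
    (h : ∫⁻ x in Set.Ioo (-(1/4) : ℝ) (1/4), ∫⁻ y in Set.Ioo (-(1/4) : ℝ) (1/4),
      ENNReal.ofReal (|A (x, y)| * phi (y ^ 2 - uu x)) < ⊤) :
    IntegrableOn (fun p : ℝ × ℝ => A p / ((p.2 ^ 2 - uu p.1) * Real.log |p.2 ^ 2 - uu p.1| ^ 2))
      (Set.Ioo (-(1/4) : ℝ) (1/4) ×ˢ Set.Ioo (-(1/4) : ℝ) (1/4)) volume := by
  have hu : Measurable uu := uu_contDiff.continuous.measurable
  have hm : Measurable
      (fun p : ℝ × ℝ => A p / ((p.2 ^ 2 - uu p.1) * Real.log |p.2 ^ 2 - uu p.1| ^ 2)) := by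
    fun_prop
  refine ⟨hm.aestronglyMeasurable, ?_⟩
  rw [hasFiniteIntegral_iff_norm]
  simp only [norm_phi]
  rw [Measure.volume_eq_prod, ← Measure.prod_restrict, lintegral_prod]
  · exact h
  · have := phi_meas
    apply Measurable.aemeasurable
    fun_prop

lemma int_x : IntegrableOn (fun p : ℝ × ℝ => -deriv uu p.1 /
      ((p.2 ^ 2 - uu p.1) * Real.log |p.2 ^ 2 - uu p.1| ^ 2))
      (Set.Ioo (-(1/4) : ℝ) (1/4) ×ˢ Set.Ioo (-(1/4) : ℝ) (1/4)) volume := by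
  refine prod_int (fun p => -deriv uu p.1) ((measurable_deriv uu).comp measurable_fst).neg ?_
  set K := 2 * ∫⁻ t in Set.Icc (-(1/2) : ℝ) (1/2), ENNReal.ofReal (phi t) with hK
  have hKf : K < ⊤ := ENNReal.mul_lt_top (by simp) phi_fin
  have h1 : ∫⁻ x in Set.Ioo (-(1/4) : ℝ) (1/4), ∫⁻ y in Set.Ioo (-(1/4) : ℝ) (1/4),
      ENNReal.ofReal (|-deriv uu x| * phi (y ^ 2 - uu x)) ≤
      ∫⁻ x in Set.Ioo (-(1/4) : ℝ) (1/4), ENNReal.ofReal (|deriv uu x| * (√|uu x|)⁻¹) * K := by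
    refine lintegral_mono_ae ?_
    filter_upwards [ae_ne_real _ 0, ae_restrict_of_ae sin_ae, ae_restrict_mem measurableSet_Ioo]
      with x hx hs hxI
    have hux : uu x ≠ 0 := by
      simp only [uu, flat, if_neg hx]
      exact mul_ne_zero hs (Real.exp_pos _).ne'
    rw [abs_neg]
    simp only [ENNReal.ofReal_mul (abs_nonneg (deriv uu x))]
    rw [lintegral_const_mul' _ _ ENNReal.ofReal_ne_top, mul_assoc]
    exact mul_le_mul_right (phi_y hux (uu_le hxI)) _
  refine h1.trans_lt ?_
  rw [lintegral_mul_const' _ _ hKf.ne]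
  exact ENNReal.mul_lt_top ratio_fin hKf

lemma int_y : IntegrableOn (fun p : ℝ × ℝ => 2 * p.2 /
      ((p.2 ^ 2 - uu p.1) * Real.log |p.2 ^ 2 - uu p.1| ^ 2))
      (Set.Ioo (-(1/4) : ℝ) (1/4) ×ˢ Set.Ioo (-(1/4) : ℝ) (1/4)) volume := by
  refine prod_int (fun p => 2 * p.2) (measurable_snd.const_mul 2) ?_
  set K := 2 * ∫⁻ t in Set.Icc (-(1/2) : ℝ) (1/2), ENNReal.ofReal (phi t) with hK
  have hKf : K < ⊤ := ENNReal.mul_lt_top (by simp) phi_fin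
  refine (setLIntegral_mono' (g := fun _ => K) measurableSet_Ioo
    (fun x hx => phi_yy (uu_le hx))).trans_lt ?_
  rw [setLIntegral_const]
  exact ENNReal.mul_lt_top hKf (by simp)

/-- For `f(x,y) = y² - sin(e^{1/x} π) e^{-1/x²}` (and `f(0,y) = y²`): `f` is smooth near the
origin of `ℝ²`, vanishes to second order at the origin, and `1/ln|f|` (extended by `0` on
`f⁻¹(0)`) belongs to `W^{1,1}` near the origin. -/
theorem stmt13 (f : ℝ × ℝ → ℝ)
    (hf : ∀ p : ℝ × ℝ, f p = if p.1 = 0 then p.2 ^ 2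
      else p.2 ^ 2 - Real.sin (Real.exp (1 / p.1) * Real.pi) * Real.exp (-(1 / p.1 ^ 2)))
    (v : ℝ × ℝ → ℝ)
    (hv : ∀ p, v p = if f p = 0 then 0 else 1 / Real.log |f p|) :
    ∃ V : Set (ℝ × ℝ), IsOpen V ∧ (0, 0) ∈ V ∧
      ContDiffOn ℝ (⊤ : ℕ∞) f V ∧
      f (0, 0) = 0 ∧ fderiv ℝ f (0, 0) = 0 ∧
      (∀ p ∈ V, |f p| < 1/2) ∧
      IntegrableOn v V volume ∧
      ∃ g₁ g₂ : ℝ × ℝ → ℝ, IntegrableOn g₁ V volume ∧ IntegrableOn g₂ V volume ∧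
        ∀ η : ℝ × ℝ → ℝ, ContDiff ℝ (⊤ : ℕ∞) η → HasCompactSupport η → tsupport η ⊆ V →
          (∫ p in V, v p * fderiv ℝ η p (1, 0) = - ∫ p in V, η p * g₁ p) ∧
          (∫ p in V, v p * fderiv ℝ η p (0, 1) = - ∫ p in V, η p * g₂ p) := by
  have hfu : f = fun p => p.2 ^ 2 - uu p.1 := by
    funext p
    rw [hf p]
    simp only [uu, flat, one_div]
    split_ifs <;> simp
  have hvu : ∀ p, v p = 1 / Real.log |f p| := by
    intro p
    rw [hv p]
    split_ifs with h
    · simp [h]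
    · rfl
  have hfs : ContDiff ℝ (⊤ : ℕ∞) f := by
    rw [hfu]
    exact (contDiff_snd.pow 2).sub (uu_contDiff.comp contDiff_fst)
  have hfd : ∀ p, HasFDerivAt f
      ((2 * p.2) • ContinuousLinearMap.snd ℝ ℝ ℝ - deriv uu p.1 • ContinuousLinearMap.fst ℝ ℝ ℝ) p := by
    intro p
    have hd : HasDerivAt uu (deriv uu p.1) p.1 :=
      (uu_contDiff.differentiable (by simp) p.1).hasDerivAt
    have h1 : HasFDerivAt (fun p : ℝ × ℝ => p.2 ^ 2) ((2 * p.2) • ContinuousLinearMap.snd ℝ ℝ ℝ) p := by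
      simpa using (hasFDerivAt_snd (𝕜 := ℝ) (p := p)).pow 2
    have h2 : HasFDerivAt (fun p : ℝ × ℝ => uu p.1) (deriv uu p.1 • ContinuousLinearMap.fst ℝ ℝ ℝ) p :=
      hd.comp_hasFDerivAt p hasFDerivAt_fst
    rw [hfu]
    exact h1.sub h2
  have hdx : ∀ p, fderiv ℝ f p (1, 0) = -deriv uu p.1 := fun p => by
    rw [(hfd p).fderiv]; simp
  have hdy : ∀ p, fderiv ℝ f p (0, 1) = 2 * p.2 := fun p => by
    rw [(hfd p).fderiv]; simp
  set V : Set (ℝ × ℝ) := Set.Ioo (-(1/4) : ℝ) (1/4) ×ˢ Set.Ioo (-(1/4) : ℝ) (1/4) with hVdef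
  have hVo : IsOpen V := isOpen_Ioo.prod isOpen_Ioo
  have hVb : ∀ p ∈ V, |f p| ≤ 1/8 := fun p hp => by
    rw [hfu]; exact abs_sub_le' (uu_le hp.1) hp.2
  have hVfin : volume V < ⊤ := by
    rw [hVdef, Measure.volume_eq_prod, Measure.prod_prod]
    exact ENNReal.mul_lt_top (by simp) (by simp)
  have I1 : IntegrableOn (fun p => fderiv ℝ f p (1, 0) / (f p * Real.log |f p| ^ 2)) V volume := by
    simp only [hdx]
    rw [hfu]
    exact int_x
  have I2 : IntegrableOn (fun p => fderiv ℝ f p (0, 1) / (f p * Real.log |f p| ^ 2)) V volume := by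
    simp only [hdy]
    rw [hfu]
    exact int_y
  refine ⟨V, hVo, ?_, hfs.contDiffOn, ?_, ?_, ?_, ?_,
    fun p => -(fderiv ℝ f p (1, 0) / (f p * Real.log |f p| ^ 2)),
    fun p => -(fderiv ℝ f p (0, 1) / (f p * Real.log |f p| ^ 2)), I1.neg, I2.neg, ?_⟩
  · constructor <;> constructor <;> norm_num
  · rw [hf]; simp
  · rw [(hfd _).fderiv]
    have : deriv uu 0 = 0 := (flat_hasDerivAt_zero AA.S).deriv
    simp [this]
  · intro p hp
    linarith [hVb p hp]
  · have hvm : Measurable v := by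
      have : v = fun p => 1 / Real.log |f p| := funext hvu
      have hfm : Measurable f := hfs.continuous.measurable
      rw [this]; fun_prop
    refine Measure.integrableOn_of_bounded (M := 1) hVfin.ne hvm.aestronglyMeasurable ?_
    refine (ae_restrict_iff' hVo.measurableSet).2 (Filter.Eventually.of_forall fun p hp => ?_)
    rw [hvu]
    by_cases h0 : f p = 0
    · simp [h0]
    · have := log_le_neg_two (abs_pos.2 h0) ((hVb p hp).trans (by norm_num))
      rw [Real.norm_eq_abs, abs_div, abs_one, abs_of_neg (by linarith : Real.log |f p| < 0),
        div_le_one (by linarith)]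
      linarith
  · intro η hη hc hs
    simp only [hvu]
    exact ⟨weak_aux f hfs V hVo hVb (1, 0) I1 η hη hc hs,
      weak_aux f hfs V hVo hVb (0, 1) I2 η hη hc hs⟩
end

section
/- If f is a real-valued C¹ function on a domain U ⊂ ℝⁿ with |f| < 1/2, f(x₀) = 0, and ∇f(x₀) ≠ 0 at some point x₀, then 1/ln|f| ∉ W^{1,p}_loc near x₀ for any p > 1; in fact ∫_V |∇f|/(|f|^p |ln|f||^{2p}) dV = ∞ for every neighborhood V of x₀. -/
open MeasureTheory

lemma aux_bound (p : ℝ) (hp : 1 < p) : ∃ C : ℝ, 0 < C ∧ ∀ u : ℝ, 0 < u → u < 1/2 →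
    0 < u ^ p * |Real.log u| ^ (2 * p) ∧
    u ^ p * |Real.log u| ^ (2 * p) ≤ C * u ^ ((1 + p) / 2) := by
  set t : ℝ := (p - 1) / (4 * p) with ht
  have htpos : 0 < t := by
    apply div_pos <;> linarith
  refine ⟨(1 / t) ^ (2 * p), by positivity, fun u hu hu2 => ?_⟩
  have hlog : 0 < |Real.log u| := abs_pos.mpr (Real.log_neg hu (by linarith)).ne
  refine ⟨by positivity, ?_⟩
  have h1 := Real.abs_log_mul_self_rpow_lt u t hu (by linarith) htpos
  rw [abs_mul, abs_of_pos (Real.rpow_pos_of_pos hu t)] at h1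
  have h2 : (|Real.log u| * u ^ t) ^ (2 * p) ≤ (1 / t) ^ (2 * p) :=
    Real.rpow_le_rpow (by positivity) h1.le (by linarith)
  rw [Real.mul_rpow (by positivity) (by positivity), ← Real.rpow_mul hu.le] at h2
  have e : u ^ p = u ^ (t * (2 * p)) * u ^ ((1 + p) / 2) := by
    rw [← Real.rpow_add hu]
    congr 1
    rw [ht]
    field_simp
    ring
  rw [e]
  calc _ = (|Real.log u| ^ (2 * p) * u ^ (t * (2 * p))) * u ^ ((1 + p) / 2) := by ring
    _ ≤ _ := by gcongr

/-- Covering argument: the set where `0 < |f| ≤ Cτ` has measure at least `c τ`. -/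
lemma aux_cover {E : Type*} [NormedAddCommGroup E] [NormedSpace ℝ E] [MeasurableSpace E]
    [BorelSpace E] (μ : Measure E) [μ.IsAddLeftInvariant] (f : E → ℝ) (x₀ v : E) (R a : ℝ)
    (ha : 0 < a) (hav : a * ‖v‖ < R / 2)
    (hc : ContinuousOn f (Metric.ball x₀ R))
    (hs : ∀ x s s', x + s • v ∈ Metric.ball x₀ R → x + s' • v ∈ Metric.ball x₀ R →
      |f (x + s • v) - f (x + s' • v) - (s - s')| ≤ 1 / 2 * |s - s'|)
    (B : Set E) (hB : B ⊆ Metric.ball x₀ (R / 2)) (hBf : ∀ x ∈ B, |f x| < a / 4)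
    (N : ℕ) (hN : 1 ≤ N) :
    μ B ≤ (4 * N + 1 : ℕ) *
      μ {x ∈ Metric.ball x₀ R | 0 < |f x| ∧ |f x| ≤ a / N} := by
  have hN' : (1 : ℝ) ≤ N := by exact_mod_cast hN
  set A := {x ∈ Metric.ball x₀ R | 0 < |f x| ∧ |f x| ≤ a / N}
  set τ : ℝ := a / (2 * N) with hτ
  have hτ0 : 0 < τ := by positivity
  have hτN : 2 * N * τ = a := by rw [hτ]; field_simp
  have hτN' : a / N = 2 * τ := by rw [hτ]; field_simp
  have hball : ∀ x ∈ B, ∀ s : ℝ, |s| ≤ a → x + s • v ∈ Metric.ball x₀ R := by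
    intro x hx s hs
    have h1 := hB hx
    rw [mem_ball_iff_norm] at h1 ⊢
    have h2 : ‖s • v‖ ≤ a * ‖v‖ := by
      rw [norm_smul, Real.norm_eq_abs]; gcongr
    calc ‖x + s • v - x₀‖ = ‖(x - x₀) + s • v‖ := by congr 1; abel
      _ ≤ ‖x - x₀‖ + ‖s • v‖ := norm_add_le _ _
      _ < R := by linarith
  have hsub : B ⊆ ⋃ k ∈ Finset.Icc (-(2 * N : ℤ)) (2 * N), (fun x => ((k : ℝ) * τ) • v + x) ⁻¹' A := by
    intro x hx
    have hg : ContinuousOn (fun s : ℝ => f (x + s • v)) (Set.Icc (-(a/2)) (a/2)) := by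
      apply hc.comp (by fun_prop)
      intro s hs
      exact hball x hx s (abs_le.mpr ⟨by linarith [hs.1], by linarith [hs.2]⟩)
    have h0 := hball x hx 0 (by simpa using ha.le)
    have hf0 := abs_lt.mp (hBf x hx)
    have hp := hs x (a/2) 0 (hball x hx _ (by rw [abs_of_pos] <;> linarith)) h0
    have hm := hs x (-(a/2)) 0 (hball x hx _ (by rw [abs_neg, abs_of_pos] <;> linarith)) h0
    simp only [sub_zero, zero_smul, add_zero] at hp hm
    rw [abs_neg, abs_of_pos (show 0 < a/2 by linarith), abs_le] at hm
    rw [abs_of_pos (show 0 < a/2 by linarith), abs_le] at hp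
    obtain ⟨s, hsI, hs0⟩ := intermediate_value_Icc (by linarith) hg
      (show (0:ℝ) ∈ Set.Icc _ _ from ⟨by linarith, by linarith⟩)
    dsimp only at hs0
    set k : ℤ := ⌊s / τ⌋ + 1 with hk
    have hk1 : s < k * τ := by
      have := Int.lt_floor_add_one (s / τ)
      rw [div_lt_iff₀ hτ0] at this
      push_cast [hk]; exact this
    have hk2 : k * τ ≤ s + τ := by
      have := Int.floor_le (s / τ)
      rw [le_div_iff₀ hτ0] at this
      push_cast [hk]; linarith
    have hτa : τ ≤ a / 2 := by nlinarith
    have hka : |(k : ℝ) * τ| ≤ a := abs_le.mpr ⟨by linarith [hsI.1], by linarith [hsI.2]⟩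
    have hkN : k ∈ Finset.Icc (-(2 * N : ℤ)) (2 * N) := by
      rw [abs_le] at hka
      rw [Finset.mem_Icc]
      constructor
      · have : (-(2 * N) : ℝ) ≤ k := by
          by_contra h; push Not at h; nlinarith
        exact_mod_cast this
      · have : (k : ℝ) ≤ 2 * N := by
          by_contra h; push Not at h; nlinarith
        exact_mod_cast this
    have hb := hball x hx _ hka
    have h3 := hs x (k * τ) s hb
      (hball x hx s (abs_le.mpr ⟨by linarith [hsI.1], by linarith [hsI.2]⟩))
    rw [hs0, abs_of_pos (show 0 < (k:ℝ) * τ - s by linarith), abs_le] at h3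
    have hfpos : 0 < f (x + ((k:ℝ) * τ) • v) := by linarith
    refine Set.mem_biUnion (x := k) (by exact_mod_cast hkN) ?_
    show ((k : ℝ) * τ) • v + x ∈ A
    rw [add_comm]
    refine ⟨hb, ?_⟩
    rw [abs_of_pos hfpos, hτN']
    exact ⟨hfpos, by linarith⟩
  calc μ B ≤ _ := measure_mono hsub
    _ ≤ ∑ k ∈ Finset.Icc (-(2 * N : ℤ)) (2 * N), μ ((fun x => ((k : ℝ) * τ) • v + x) ⁻¹' A) :=
      measure_biUnion_finset_le _ _
    _ = _ := by
      simp only [measure_preimage_add, Finset.sum_const, nsmul_eq_mul, Int.card_Icc]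
      congr 2
      omega

/-- If `f` is `C¹` on a domain `U ⊆ ℝⁿ` with `|f| < 1/2`, `f(x₀) = 0` and `∇f(x₀) ≠ 0`, then
for every `p > 1` and every neighborhood `V ⊆ U` of `x₀`,
`∫_V |∇f|/(|f|^p |ln|f||^{2p}) dV = ∞`; in particular `1/ln|f| ∉ W^{1,p}_loc` near `x₀`. -/
theorem stmt18 {n : ℕ} (hn : 1 ≤ n) (U : Set (EuclideanSpace ℝ (Fin n))) (hU : IsOpen U)
    (hUconn : IsConnected U) (f : EuclideanSpace ℝ (Fin n) → ℝ)
    (hf : ContDiffOn ℝ 1 f U) (hfsmall : ∀ x ∈ U, |f x| < 1/2)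
    (x₀ : EuclideanSpace ℝ (Fin n)) (hx₀ : x₀ ∈ U)
    (hfx₀ : f x₀ = 0) (hdf : fderiv ℝ f x₀ ≠ 0) :
    ∀ p : ℝ, 1 < p → ∀ V : Set (EuclideanSpace ℝ (Fin n)),
      IsOpen V → x₀ ∈ V → V ⊆ U →
      ∫⁻ x in V, ENNReal.ofReal
        (‖fderiv ℝ f x‖ / (|f x| ^ p * (abs (Real.log (abs (f x)))) ^ (2 * p))) = ⊤ := by
  intro p hp V hV hxV hVU
  obtain ⟨C, hC, hbound⟩ := aux_bound p hp
  have hfat : ContDiffAt ℝ 1 f x₀ := hf.contDiffAt (hU.mem_nhds hx₀)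
  have hstrict : HasStrictFDerivAt f (fderiv ℝ f x₀) x₀ :=
    hfat.hasStrictFDerivAt (by norm_num)
  obtain ⟨w, hw⟩ : ∃ w, fderiv ℝ f x₀ w ≠ 0 := by
    by_contra h; push Not at h; exact hdf (ContinuousLinearMap.ext h)
  set L := fderiv ℝ f x₀ with hL
  obtain ⟨v, hv⟩ : ∃ v, L v = 1 := ⟨(L w)⁻¹ • w, by simp [hw]⟩
  have hη : (0:ℝ) < 1 / (2 * (‖v‖ + 1)) := by positivity
  have h1 := hstrict.isLittleO.def hη
  rw [Metric.eventually_nhds_iff_ball] at h1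
  obtain ⟨R₁, hR₁, h1⟩ := h1
  set m : ℝ := ‖L‖ / 2 with hm
  have hmpos : 0 < m := by have := norm_pos_iff.mpr hdf; positivity
  have h2 : ∀ᶠ x in nhds x₀, m < ‖fderiv ℝ f x‖ := by
    have hcf : ContinuousAt (fun x => ‖fderiv ℝ f x‖) x₀ :=
      ((hf.continuousOn_fderiv_of_isOpen hU le_rfl).continuousAt (hU.mem_nhds hx₀)).norm
    exact hcf.eventually (lt_mem_nhds (by change m < ‖L‖; linarith))
  obtain ⟨R₂, hR₂, h2⟩ := Metric.eventually_nhds_iff_ball.mp (h2.and (hV.mem_nhds hxV))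
  set R := min R₁ R₂ with hR
  have hRpos : 0 < R := lt_min hR₁ hR₂
  have hs : ∀ x s s', x + s • v ∈ Metric.ball x₀ R → x + s' • v ∈ Metric.ball x₀ R →
      |f (x + s • v) - f (x + s' • v) - (s - s')| ≤ 1 / 2 * |s - s'| := by
    intro x s s' hxs hxs'
    have h := h1 (x + s • v, x + s' • v) (by
      rw [← ball_prod_same]
      exact ⟨Metric.ball_subset_ball (min_le_left _ _) hxs,
        Metric.ball_subset_ball (min_le_left _ _) hxs'⟩)
    have e : x + s • v - (x + s' • v) = (s - s') • v := by rw [sub_smul]; abel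
    simp only [e, map_smul, hv, smul_eq_mul, mul_one, norm_smul, Real.norm_eq_abs] at h
    refine h.trans ?_
    have : 1 / (2 * (‖v‖ + 1)) * ‖v‖ ≤ 1 / 2 := by
      rw [div_mul_eq_mul_div, div_le_div_iff₀ (by positivity) (by norm_num)]
      linarith [norm_nonneg v]
    calc _ = (1 / (2 * (‖v‖ + 1)) * ‖v‖) * |s - s'| := by ring
      _ ≤ _ := by gcongr
  have hball : Metric.ball x₀ R ⊆ V := fun x hx =>
    (h2 x (Metric.ball_subset_ball (min_le_right _ _) hx)).2
  have hcont : ContinuousOn f (Metric.ball x₀ R) := hf.continuousOn.mono (hball.trans hVU)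
  set a : ℝ := R / (4 * (‖v‖ + 1)) with ha
  have hapos : 0 < a := by positivity
  have hav : a * ‖v‖ < R / 2 := by
    rw [ha, div_mul_eq_mul_div, div_lt_div_iff₀ (by positivity) (by norm_num)]
    nlinarith [norm_nonneg v]
  have h3 : ∀ᶠ x in nhds x₀, |f x| < a / 4 := by
    have : ContinuousAt (fun x => |f x|) x₀ := hfat.continuousAt.abs
    exact this.eventually (gt_mem_nhds (by simp only [hfx₀, abs_zero]; positivity))
  obtain ⟨ρ, hρ, h3⟩ := Metric.eventually_nhds_iff_ball.mp
    (h3.and (Metric.ball_mem_nhds x₀ (half_pos hRpos)))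
  set B := Metric.ball x₀ ρ
  have hcov := fun N hN => aux_cover volume f x₀ v R a hapos hav hcont hs B
    (fun x hx => (h3 x hx).2) (fun x hx => (h3 x hx).1) N hN
  have hBpos : 0 < volume B := Metric.measure_ball_pos _ _ hρ
  set q : ℝ := (1 + p) / 2 with hq
  by_contra hI
  set I := ∫⁻ x in V, ENNReal.ofReal
        (‖fderiv ℝ f x‖ / (|f x| ^ p * (abs (Real.log (abs (f x)))) ^ (2 * p))) with hIdef
  -- the key estimate
  have key : ∀ N : ℕ, 1 ≤ N →
      ENNReal.ofReal (m / (C * (a / N) ^ q)) * volume B ≤ (4 * N + 1 : ℕ) * I := by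
    intro N hN
    set A := {x ∈ Metric.ball x₀ R | 0 < |f x| ∧ |f x| ≤ a / N} with hA
    have hAm : MeasurableSet A := by
      have e : A = (Metric.ball x₀ R ∩ f ⁻¹' {y | 0 < |y|}) \
          (Metric.ball x₀ R ∩ f ⁻¹' {y | a / N < |y|}) := by
        ext x
        simp only [hA, Set.mem_ofPred_eq, Set.mem_sdiff, Set.mem_inter_iff, Set.mem_preimage,
          not_and, not_lt]
        tauto
      rw [e]
      exact (hcont.isOpen_inter_preimage Metric.isOpen_ball
          (isOpen_lt continuous_const continuous_abs)).measurableSet.diff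
        (hcont.isOpen_inter_preimage Metric.isOpen_ball
          (isOpen_lt continuous_const continuous_abs)).measurableSet
    have hAI : ENNReal.ofReal (m / (C * (a / N) ^ q)) * volume A ≤ I := by
      rw [← setLIntegral_const]
      refine (setLIntegral_mono' hAm ?_).trans (lintegral_mono_set (fun x hx => hball hx.1))
      intro x hx
      apply ENNReal.ofReal_le_ofReal
      obtain ⟨b1, b2⟩ := hbound |f x| hx.2.1 (hfsmall x (hVU (hball hx.1)))
      have b3 := (h2 x (Metric.ball_subset_ball (min_le_right _ _) hx.1)).1
      have b4 : C * |f x| ^ q ≤ C * (a / N) ^ q := by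
        have := hx.2.2
        gcongr
      exact div_le_div₀ (norm_nonneg _) b3.le b1 (b2.trans b4)
    calc _ ≤ ENNReal.ofReal (m / (C * (a / N) ^ q)) * ((4 * N + 1 : ℕ) * volume A) := by
          gcongr; exact hcov N hN
      _ = (4 * N + 1 : ℕ) * (ENNReal.ofReal (m / (C * (a / N) ^ q)) * volume A) := by ring
      _ ≤ _ := by gcongr
  have hBfin : volume B ≠ ⊤ := measure_ball_lt_top.ne
  set b := (volume B).toReal with hb
  have hbpos : 0 < b := ENNReal.toReal_pos hBpos.ne' hBfin
  have key2 : ∀ N : ℕ, 1 ≤ N → (m * b / (C * a ^ q)) * (N : ℝ) ^ (q - 1) ≤ 5 * I.toReal := by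
    intro N hN
    have hN' : (1 : ℝ) ≤ N := by exact_mod_cast hN
    have hN0 : (0 : ℝ) < N := by linarith
    have h := ENNReal.toReal_mono (ENNReal.mul_ne_top (ENNReal.natCast_ne_top _) hI) (key N hN)
    rw [ENNReal.toReal_mul, ENNReal.toReal_mul, ENNReal.toReal_ofReal (by positivity),
      ENNReal.toReal_natCast, Real.div_rpow hapos.le hN0.le] at h
    push_cast at h
    have hIn : 0 ≤ I.toReal := ENNReal.toReal_nonneg
    have h' : m / (C * (a ^ q / N ^ q)) * b ≤ N * (5 * I.toReal) := by nlinarith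
    rw [Real.rpow_sub_one hN0.ne']
    have haq : 0 < a ^ q := by positivity
    have hNq : 0 < (N:ℝ) ^ q := by positivity
    calc _ = (m / (C * (a ^ q / N ^ q)) * b) / N := by field_simp
      _ ≤ _ := by rw [div_le_iff₀ hN0]; linarith
  have hK : 0 < m * b / (C * a ^ q) := by positivity
  have ht : Filter.Tendsto (fun N : ℕ => (m * b / (C * a ^ q)) * (N : ℝ) ^ (q - 1))
      Filter.atTop Filter.atTop :=
    ((tendsto_rpow_atTop (by rw [hq]; linarith)).comp
      tendsto_natCast_atTop_atTop).const_mul_atTop hK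
  obtain ⟨N, hN1, hN2⟩ :=
    ((ht.eventually_gt_atTop (5 * I.toReal)).and (Filter.eventually_ge_atTop 1)).exists
  exact absurd (key2 N hN2) (not_le.mpr hN1)
end

section
/- Let f be real-analytic on a neighborhood of 0 in ℝⁿ with f(0) = 0. Then there exist a neighborhood V of 0 and constants C > 0 and β ∈ (0,1) such that |∇f(x)| ≥ C|f(x)|^β for all x ∈ V (Łojasiewicz gradient inequality), and consequently for p > 1, |∇f(x)|^{p} ≥ C^{p−1}|f(x)|^{(p−1)β} |∇f(x)| on V. -/
set_option linter.unusedSectionVars false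

section LojaAux
open Filter Topology Set

namespace Loja

section ResDef
variable {E F G : Type} [NormedAddCommGroup E] [NormedSpace ℝ E]
  [NormedAddCommGroup F] [NormedSpace ℝ F] [NormedAddCommGroup G] [NormedSpace ℝ G]

/-- Germs of analytic maps satisfying `P` cover `A` near `0`. -/
def ResOn (A : Set F) (P : (E → F) → Prop) : Prop :=
  ∀ N : (E → F) → Set E, (∀ φ, N φ ∈ 𝓝 (0 : E)) →
    ∃ S : Set (E → F), S.Finite ∧ (∀ φ ∈ S, AnalyticAt ℝ φ 0 ∧ φ 0 = 0 ∧ P φ) ∧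
      (⋃ φ ∈ S, φ '' N φ) ∈ 𝓝[A] (0 : F)

/-- Germs of analytic maps satisfying `P` cover a neighborhood of `0`. -/
def Res (P : (E → F) → Prop) : Prop := ResOn (Set.univ : Set F) P

theorem ResOn.mono' {A : Set F} {P Q : (E → F) → Prop} (h : ResOn A P)
    (hPQ : ∀ φ, AnalyticAt ℝ φ 0 → φ 0 = 0 → P φ → Q φ) : ResOn A Q := by
  intro N hN
  obtain ⟨S, hS, hP, hU⟩ := h N hN
  exact ⟨S, hS, fun φ hφ => ⟨(hP φ hφ).1, (hP φ hφ).2.1,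
    hPQ φ (hP φ hφ).1 (hP φ hφ).2.1 (hP φ hφ).2.2⟩, hU⟩

theorem Res.mono' {P Q : (E → F) → Prop} (h : Res P)
    (hPQ : ∀ φ, AnalyticAt ℝ φ 0 → φ 0 = 0 → P φ → Q φ) : Res Q := ResOn.mono' h hPQ

theorem ResOn.bind {A : Set G} {P : (F → G) → Prop} {Q : (E → G) → Prop} (h : ResOn A P)
    (hPQ : ∀ φ, AnalyticAt ℝ φ 0 → φ 0 = 0 → P φ → Res (fun ψ : E → F => Q (φ ∘ ψ))) :
    ResOn A Q := by
  classical
  intro N hN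
  have h1 : ∀ φ : F → G, ∃ S : Set (E → F), S.Finite ∧
      ((AnalyticAt ℝ φ 0 ∧ φ 0 = 0 ∧ P φ) →
        (∀ ψ ∈ S, AnalyticAt ℝ ψ 0 ∧ ψ 0 = 0 ∧ Q (φ ∘ ψ)) ∧
        (⋃ ψ ∈ S, ψ '' N (φ ∘ ψ)) ∈ 𝓝 (0 : F)) := by
    intro φ
    by_cases hφ : AnalyticAt ℝ φ 0 ∧ φ 0 = 0 ∧ P φ
    · obtain ⟨S, hS, h2, h3⟩ := hPQ φ hφ.1 hφ.2.1 hφ.2.2 (fun ψ => N (φ ∘ ψ)) (fun _ => hN _)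
      exact ⟨S, hS, fun _ => ⟨h2, by simpa using h3⟩⟩
    · exact ⟨∅, Set.finite_empty, fun h => absurd h hφ⟩
  choose T hTf hT using h1
  obtain ⟨S, hS, hP, hU⟩ := h
    (fun φ => if AnalyticAt ℝ φ 0 ∧ φ 0 = 0 ∧ P φ then ⋃ ψ ∈ T φ, ψ '' N (φ ∘ ψ) else Set.univ)
    (by
      intro φ
      split_ifs with hφ
      · exact (hT φ hφ).2
      · exact Filter.univ_mem)
  refine ⟨⋃ φ ∈ S, (fun ψ => φ ∘ ψ) '' T φ, hS.biUnion fun φ _ => (hTf φ).image _, ?_, ?_⟩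
  · intro χ hχ
    simp only [Set.mem_iUnion, Set.mem_image] at hχ
    obtain ⟨φ, hφ, ψ, hψ, rfl⟩ := hχ
    have h3 := hP φ hφ
    have h4 := (hT φ h3).1 ψ hψ
    refine ⟨?_, ?_, h4.2.2⟩
    · refine AnalyticAt.comp ?_ h4.1
      rw [h4.2.1]; exact h3.1
    · simp [h4.2.1, h3.2.1]
  · refine Filter.mem_of_superset hU ?_
    intro z hz
    simp only [Set.mem_iUnion, Set.mem_image] at hz
    obtain ⟨φ, hφ, y, hy, rfl⟩ := hz
    rw [if_pos (hP φ hφ)] at hy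
    simp only [Set.mem_iUnion, Set.mem_image] at hy
    obtain ⟨ψ, hψ, x, hx, rfl⟩ := hy
    simp only [Set.mem_iUnion, Set.mem_image]
    exact ⟨φ ∘ ψ, ⟨φ, hφ, ψ, hψ, rfl⟩, x, hx, rfl⟩

theorem Res.bind {P : (F → G) → Prop} {Q : (E → G) → Prop} (h : Res P)
    (hPQ : ∀ φ, AnalyticAt ℝ φ 0 → φ 0 = 0 → P φ → Res (fun ψ : E → F => Q (φ ∘ ψ))) :
    Res Q := ResOn.bind h hPQ

/-- A single map with a continuous right inverse. -/
theorem Res.single {P : (E → F) → Prop} (φ : E → F) (ψ : F → E) (hφ : AnalyticAt ℝ φ 0)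
    (hφ0 : φ 0 = 0) (hψ : ContinuousAt ψ 0) (hψ0 : ψ 0 = 0) (hinv : ∀ᶠ y in 𝓝 0, φ (ψ y) = y)
    (hP : P φ) : Res P := by
  intro N hN
  refine ⟨{φ}, Set.finite_singleton _, by simpa using ⟨hφ, hφ0, hP⟩, ?_⟩
  simp only [nhdsWithin_univ, Set.mem_singleton_iff, Set.iUnion_iUnion_eq_left]
  have : ∀ᶠ y in 𝓝 (0 : F), ψ y ∈ N φ := by
    apply hψ.eventually
    rw [hψ0]; exact hN φ
  filter_upwards [this, hinv] with y h1 h2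
  exact ⟨ψ y, h1, h2⟩

theorem Res.pure {P : (E → E) → Prop} (h : P id) : Res P :=
  Res.single id id analyticAt_id rfl continuousAt_id rfl (by simp) h

theorem ResOn.union {A B : Set F} {P : (E → F) → Prop} (hA : ResOn A P) (hB : ResOn B P) :
    ResOn (A ∪ B) P := by
  intro N hN
  obtain ⟨S, hS, hP, hU⟩ := hA N hN
  obtain ⟨S', hS', hP', hU'⟩ := hB N hN
  refine ⟨S ∪ S', hS.union hS', ?_, ?_⟩
  · rintro φ (h | h)
    · exact hP φ h
    · exact hP' φ h
  · rw [nhdsWithin_union, Set.biUnion_union]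
    exact ⟨Filter.mem_of_superset hU Set.subset_union_left,
      Filter.mem_of_superset hU' Set.subset_union_right⟩

theorem ResOn.region {A : Set F} {P : (E → F) → Prop} (hA : ResOn A P)
    (h : Res (fun τ : E → F => P τ ∨ ∀ᶠ z in 𝓝 0, τ z ∈ A)) : Res P := by
  classical
  intro N hN
  obtain ⟨S, hS, hP, hU⟩ := hA N hN
  obtain ⟨S', hS', hP', hU'⟩ := h (fun τ => if P τ then N τ else
      {z | (∀ᶠ z in 𝓝 0, τ z ∈ A) → τ z ∈ A}) (by
    intro τ
    split_ifs
    · exact hN τ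
    · by_cases h : ∀ᶠ z in 𝓝 0, τ z ∈ A
      · filter_upwards [h] with z hz _ using hz
      · exact Filter.Eventually.of_forall fun z h' => absurd h' h)
  refine ⟨S ∪ (S' ∩ {τ | P τ}), hS.union (hS'.inter_of_left _), ?_, ?_⟩
  · rintro φ (h | h)
    · exact hP φ h
    · exact ⟨(hP' φ h.1).1, (hP' φ h.1).2.1, h.2⟩
  · rw [nhdsWithin_univ] at hU' ⊢
    rw [mem_nhdsWithin_iff_eventually] at hU
    filter_upwards [hU', hU] with y h1 h2
    simp only [Set.mem_iUnion, Set.mem_image] at h1 h2 ⊢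
    obtain ⟨τ, hτ, z, hz, rfl⟩ := h1
    by_cases hPτ : P τ
    · rw [if_pos hPτ] at hz
      exact ⟨τ, Or.inr ⟨hτ, hPτ⟩, z, hz, rfl⟩
    · rw [if_neg hPτ] at hz
      have h3 := hz ((hP' τ hτ).2.2.resolve_left hPτ)
      obtain ⟨φ, hφ, x, hx, hxy⟩ := h2 h3
      exact ⟨φ, Or.inl hφ, x, hx, hxy⟩

/-- Product with the identity of another factor. -/
theorem Res.prodId {P : (E → F) → Prop} {Q : (E × G → F × G) → Prop} (h : Res P)
    (hPQ : ∀ φ, AnalyticAt ℝ φ 0 → φ 0 = 0 → P φ → Q (fun p => (φ p.1, p.2))) : Res Q := by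
  classical
  intro N hN
  have h1 : ∀ φ : E → F, ∃ U ∈ 𝓝 (0 : E), ∃ V ∈ 𝓝 (0 : G),
      U ×ˢ V ⊆ N (fun p => (φ p.1, p.2)) := by
    intro φ
    have := hN (fun p => (φ p.1, p.2))
    rwa [show (0 : E × G) = (0, 0) from rfl, mem_nhds_prod_iff] at this
  choose U hU V hV hUV using h1
  obtain ⟨S, hS, hP, hc⟩ := h U hU
  refine ⟨(fun φ : E → F => fun p : E × G => (φ p.1, p.2)) '' S, hS.image _, ?_, ?_⟩
  · rintro _ ⟨φ, hφ, rfl⟩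
    obtain ⟨h1, h2, h3⟩ := hP φ hφ
    refine ⟨?_, by simp [h2], hPQ φ h1 h2 h3⟩
    refine AnalyticAt.prod ?_ analyticAt_snd
    exact AnalyticAt.comp (g := φ) (f := Prod.fst) h1 analyticAt_fst
  · rw [nhdsWithin_univ] at hc ⊢
    have hVV : (⋂ φ ∈ S, V φ) ∈ 𝓝 (0 : G) := (Filter.biInter_mem hS).2 fun φ _ => hV φ
    have := prod_mem_nhds hc hVV
    refine Filter.mem_of_superset this ?_
    rintro ⟨a, b⟩ ⟨ha, hb⟩
    simp only [Set.mem_iUnion, Set.mem_image, Set.mem_iInter] at ha hb ⊢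
    obtain ⟨φ, hφ, x, hx, rfl⟩ := ha
    exact ⟨_, ⟨φ, hφ, rfl⟩, (x, b), hUV φ ⟨hx, hb φ hφ⟩, rfl⟩

end ResDef

end Loja

namespace Loja

section Division
variable {E : Type} [NormedAddCommGroup E] [NormedSpace ℝ E]

/-- Projection killing the last coordinate. -/
noncomputable def prj (E : Type) [NormedAddCommGroup E] [NormedSpace ℝ E] : E × ℝ →L[ℝ] E × ℝ :=
  (ContinuousLinearMap.fst ℝ E ℝ).prod 0

theorem norm_prj_le : ‖prj E‖ ≤ 1 := by
  refine ContinuousLinearMap.opNorm_le_bound _ zero_le_one ?_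
  intro p
  simp only [prj, ContinuousLinearMap.prod_apply, ContinuousLinearMap.coe_fst',
    zero_apply, one_mul]
  rw [Prod.norm_def]
  simpa using norm_fst_le p

/-- One term of the divided series. -/
noncomputable def divTerm (p : FormalMultilinearSeries ℝ (E × ℝ) ℝ) (k : ℕ) (j : Fin (k + 1)) :
    ContinuousMultilinearMap ℝ (fun _ : Fin k => E × ℝ) ℝ :=
  (ContinuousMultilinearMap.curryMid j (p (k + 1)) ((0, 1) : E × ℝ)).compContinuousLinearMap
    (fun i => if i.castSucc < j then ContinuousLinearMap.id ℝ (E × ℝ) else prj E)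

theorem norm_divTerm_le (p : FormalMultilinearSeries ℝ (E × ℝ) ℝ) (k : ℕ) (j : Fin (k + 1)) :
    ‖divTerm p k j‖ ≤ ‖p (k + 1)‖ := by
  refine (ContinuousMultilinearMap.norm_compContinuousLinearMap_le _ _).trans ?_
  have h1 : ‖ContinuousMultilinearMap.curryMid j (p (k + 1)) ((0, 1) : E × ℝ)‖ ≤ ‖p (k + 1)‖ := by
    refine (ContinuousLinearMap.le_opNorm _ _).trans ?_
    rw [ContinuousMultilinearMap.norm_curryMid]
    simp [Prod.norm_def]
  have h2 : ∏ i : Fin k, ‖(if i.castSucc < j then ContinuousLinearMap.id ℝ (E × ℝ) else prj E)‖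
      ≤ 1 := by
    apply Finset.prod_le_one
    · intros; positivity
    · intro i _
      split_ifs
      · exact ContinuousLinearMap.norm_id_le
      · exact norm_prj_le
  calc _ ≤ ‖p (k + 1)‖ * 1 := by
        apply mul_le_mul h1 h2 (Finset.prod_nonneg fun _ _ => norm_nonneg _) (norm_nonneg _)
    _ = _ := mul_one _

/-- The divided series. -/
noncomputable def divSeries (p : FormalMultilinearSeries ℝ (E × ℝ) ℝ) :
    FormalMultilinearSeries ℝ (E × ℝ) ℝ := fun k => ∑ j : Fin (k + 1), divTerm p k j

theorem divSeries_radius_pos (p : FormalMultilinearSeries ℝ (E × ℝ) ℝ) (hp : 0 < p.radius) :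
    0 < (divSeries p).radius := by
  obtain ⟨C, r, hC, hr, hb⟩ := p.le_mul_pow_of_radius_pos hp
  have h1 : ∀ k, ‖divSeries p k‖ * ((1 / (2 * r)).toNNReal : ℝ) ^ k ≤ C * r := by
    intro k
    have h2 : ‖divSeries p k‖ ≤ (k + 1) * (C * r ^ (k + 1)) := by
      refine (norm_sum_le _ _).trans ?_
      calc _ ≤ ∑ j : Fin (k + 1), C * r ^ (k + 1) :=
            Finset.sum_le_sum fun j _ => (norm_divTerm_le p k j).trans (hb _)
        _ = _ := by simp
    rw [Real.coe_toNNReal _ (by positivity)]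
    have h3 : (k + 1 : ℝ) ≤ 2 ^ k := by
      have : k + 1 ≤ 2 ^ k := Nat.lt_two_pow_self
      exact_mod_cast this
    calc _ ≤ ((k + 1) * (C * r ^ (k + 1))) * (1 / (2 * r)) ^ k := by gcongr
      _ ≤ (2 ^ k * (C * r ^ (k + 1))) * (1 / (2 * r)) ^ k := by gcongr
      _ = C * r := by
        rw [div_pow, mul_pow, one_pow]
        field_simp
        ring
  have h4 := (divSeries p).le_radius_of_bound _ h1
  refine lt_of_lt_of_le ?_ h4
  simp only [ENNReal.coe_pos, Real.toNNReal_pos]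
  positivity

theorem divSeries_apply (p : FormalMultilinearSeries ℝ (E × ℝ) ℝ) (k : ℕ) (w : E × ℝ) :
    p (k + 1) (fun _ => w) = p (k + 1) (fun _ => prj E w) + w.2 * divSeries p k (fun _ => w) := by
  classical
  set m : ℕ → Fin (k + 1) → E × ℝ := fun j i => if (i : ℕ) < j then w else prj E w with hm
  have h0 : m 0 = fun _ => prj E w := by funext i; simp [hm]
  have h1 : m (k + 1) = fun _ => w := by funext i; simp [hm]; omega
  have hstep : ∀ j : Fin (k + 1), p (k + 1) (m (j + 1)) - p (k + 1) (m j) =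
      w.2 * divTerm p k j (fun _ => w) := by
    intro j
    have e1 : m (j + 1) = Function.update (m j) j w := by
      funext i
      by_cases hij : i = j
      · subst hij; simp [hm]
      · rw [Function.update_of_ne hij]
        have : (i : ℕ) ≠ j := fun h => hij (Fin.ext h)
        simp only [hm]
        congr 1
        simp only [eq_iff_iff]; omega
    have e2 : m j = Function.update (m j) j (prj E w) := by
      funext i
      by_cases hij : i = j
      · subst hij; simp [hm]
      · rw [Function.update_of_ne hij]
    rw [e1]
    nth_rewrite 2 [e2]
    rw [← ContinuousMultilinearMap.map_update_sub]
    have e3 : w - prj E w = w.2 • ((0, 1) : E × ℝ) := by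
      ext <;> simp [prj]
    rw [e3, ContinuousMultilinearMap.map_update_smul, smul_eq_mul]
    congr 1
    simp only [divTerm, ContinuousMultilinearMap.compContinuousLinearMap_apply,
      ContinuousMultilinearMap.curryMid_apply]
    congr 1
    funext i
    by_cases hij : i = j
    · subst hij; simp
    · rw [Function.update_of_ne hij]
      obtain ⟨l, rfl⟩ := Fin.exists_succAbove_eq hij
      rw [Fin.insertNth_apply_succAbove]
      simp only [hm]
      by_cases hl : l.castSucc < j
      · rw [Fin.succAbove_of_castSucc_lt _ _ hl, if_pos hl]
        have : (l : ℕ) < j := hl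
        simp [this]
      · rw [Fin.succAbove_of_le_castSucc _ _ (not_lt.1 hl), if_neg hl]
        have : (j : ℕ) ≤ l := not_lt.1 hl
        have h' : ¬ ((l : ℕ) + 1 < j) := by omega
        simp [h']
  have hsum : ∑ j : Fin (k + 1), (p (k + 1) (m (j + 1)) - p (k + 1) (m j)) =
      p (k + 1) (m (k + 1)) - p (k + 1) (m 0) := by
    rw [Fin.sum_univ_eq_sum_range (fun j => p (k + 1) (m (j + 1)) - p (k + 1) (m j)) (k + 1)]
    exact Finset.sum_range_sub (fun j => p (k + 1) (m j)) (k + 1)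
  rw [Finset.sum_congr rfl (fun j _ => hstep j), h0, h1, ← Finset.mul_sum] at hsum
  rw [divSeries, sum_apply]
  linarith

theorem exists_div (g : E × ℝ → ℝ) (hg : AnalyticAt ℝ g 0) :
    ∃ u : E × ℝ → ℝ, AnalyticAt ℝ u 0 ∧ ∀ᶠ p in 𝓝 (0 : E × ℝ), g p = g (p.1, 0) + p.2 * u p := by
  obtain ⟨p, r, hp⟩ := hg
  have hr := divSeries_radius_pos p (lt_of_lt_of_le hp.r_pos hp.r_le)
  have hu := (divSeries p).hasFPowerSeriesOnBall hr
  refine ⟨(divSeries p).sum, hu.analyticAt, ?_⟩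
  have b1 : ∀ᶠ w in 𝓝 (0 : E × ℝ), w ∈ Metric.eball (0 : E × ℝ) r :=
    Metric.eball_mem_nhds _ hp.r_pos
  have b2 : ∀ᶠ w in 𝓝 (0 : E × ℝ), w ∈ Metric.eball (0 : E × ℝ) (divSeries p).radius :=
    Metric.eball_mem_nhds _ hr
  have b3 : ∀ᶠ w in 𝓝 (0 : E × ℝ), prj E w ∈ Metric.eball (0 : E × ℝ) r := by
    have : Tendsto (prj E) (𝓝 0) (𝓝 0) := by
      simpa using (prj E).continuous.tendsto 0
    exact this.eventually b1
  filter_upwards [b1, b2, b3] with w h1 h2 h3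
  have s1 := hp.hasSum h1
  have s2 := hu.hasSum h2
  have s3 := hp.hasSum h3
  rw [zero_add] at s1 s2 s3
  have t1 := (hasSum_nat_add_iff' 1).2 s1
  have t3 := (hasSum_nat_add_iff' 1).2 s3
  have t4 := t3.add (s2.mul_left w.2)
  have e : (fun k => p (k + 1) (fun _ => w)) = fun k =>
      p (k + 1) (fun _ => prj E w) + w.2 * divSeries p k (fun _ => w) := by
    funext k; exact divSeries_apply p k w
  rw [e] at t1
  have := t1.unique t4
  simp only [Finset.range_one, Finset.sum_singleton] at this
  have e0 : p 0 (fun _ => w) = p 0 (fun _ => prj E w) := by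
    congr 1; funext i; exact i.elim0
  have e1 : prj E w = (w.1, 0) := by simp [prj]
  rw [e0, e1] at this
  linarith

end Division

section Partial
variable {E : Type} [NormedAddCommGroup E] [NormedSpace ℝ E] [CompleteSpace E]

/-- Partial derivative in the last variable. -/
noncomputable def pd (g : E × ℝ → ℝ) : E × ℝ → ℝ := fun p => fderiv ℝ g p (0, 1)

theorem pd_analytic {g : E × ℝ → ℝ} {p : E × ℝ} (hg : AnalyticAt ℝ g p) :
    AnalyticAt ℝ (pd g) p := by
  have := hg.fderiv
  exact ((ContinuousLinearMap.apply ℝ ℝ ((0, 1) : E × ℝ)).analyticAt _).comp this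

theorem pd_iter_analytic {g : E × ℝ → ℝ} {p : E × ℝ} (hg : AnalyticAt ℝ g p) (k : ℕ) :
    AnalyticAt ℝ (pd^[k] g) p := by
  induction k with
  | zero => exact hg
  | succ k ih => rw [Function.iterate_succ_apply']; exact pd_analytic ih

theorem pd_congr {g h : E × ℝ → ℝ} {p : E × ℝ} (hgh : g =ᶠ[𝓝 p] h) : pd g =ᶠ[𝓝 p] pd h := by
  filter_upwards [hgh.fderiv (𝕜 := ℝ)] with q hq
  simp [pd, hq]

theorem pd_iter_congr {g h : E × ℝ → ℝ} {p : E × ℝ} (hgh : g =ᶠ[𝓝 p] h) (k : ℕ) :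
    pd^[k] g =ᶠ[𝓝 p] pd^[k] h := by
  induction k with
  | zero => exact hgh
  | succ k ih => simp only [Function.iterate_succ_apply']; exact pd_congr ih

theorem pd_eq_deriv {g : E × ℝ → ℝ} {p : E × ℝ} (hg : AnalyticAt ℝ g p) :
    pd g p = deriv (fun t => g (p.1, t)) p.2 := by
  have h1 : HasFDerivAt g (fderiv ℝ g p) (p.1, p.2) := hg.differentiableAt.hasFDerivAt
  have h2 : HasDerivAt (fun t : ℝ => (p.1, t)) ((0, 1) : E × ℝ) p.2 :=
    (hasDerivAt_const _ _).prodMk (hasDerivAt_id _)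
  exact (h1.comp_hasDerivAt p.2 h2).deriv.symm

theorem pd_iter_eq {g : E × ℝ → ℝ} {p : E × ℝ} (hg : AnalyticAt ℝ g p) (k : ℕ) :
    pd^[k] g p = iteratedDeriv k (fun t => g (p.1, t)) p.2 := by
  induction k generalizing p with
  | zero => simp
  | succ k ih =>
    rw [Function.iterate_succ_apply', iteratedDeriv_succ, pd_eq_deriv (pd_iter_analytic hg k)]
    apply Filter.EventuallyEq.deriv_eq
    have hev : ∀ᶠ q in 𝓝 p, AnalyticAt ℝ g q := hg.eventually_analyticAt
    have hc : ContinuousAt (fun t : ℝ => (p.1, t)) p.2 := by fun_prop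
    filter_upwards [hc.eventually hev] with t ht
    exact ih ht

/-- Shifted derivative. -/
theorem pd_iter_shift {g : E × ℝ → ℝ} {h : E → ℝ} (hg : AnalyticAt ℝ g 0) (hh : AnalyticAt ℝ h 0)
    (h0 : h 0 = 0) (k : ℕ) :
    ∀ᶠ p in 𝓝 (0 : E × ℝ), pd^[k] (fun q : E × ℝ => g (q.1, q.2 + h q.1)) p =
      pd^[k] g (p.1, p.2 + h p.1) := by
  have hσ : AnalyticAt ℝ (fun q : E × ℝ => (q.1, q.2 + h q.1)) 0 := by
    refine AnalyticAt.prod analyticAt_fst (analyticAt_snd.add ?_)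
    exact AnalyticAt.comp (g := h) (f := Prod.fst) hh analyticAt_fst
  have hev : ∀ᶠ q in 𝓝 (0 : E × ℝ), AnalyticAt ℝ g (q.1, q.2 + h q.1) := by
    have := hσ.continuousAt.tendsto
    rw [show ((0 : E × ℝ).1, (0 : E × ℝ).2 + h (0 : E × ℝ).1) = 0 by simp [h0]] at this
    exact this.eventually hg.eventually_analyticAt
  filter_upwards [hev, hσ.eventually_analyticAt] with p h1 h2
  have h3 : AnalyticAt ℝ (fun q : E × ℝ => g (q.1, q.2 + h q.1)) p :=
    AnalyticAt.comp (g := g) (f := fun q : E × ℝ => (q.1, q.2 + h q.1)) h1 h2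
  rw [pd_iter_eq h3, pd_iter_eq h1]
  simp only
  rw [iteratedDeriv_comp_add_const k (fun t => g (p.1, t)) (h p.1)]

theorem pd_aux {v w : E × ℝ → ℝ} {p : E × ℝ} (c : ℝ) (hv : AnalyticAt ℝ v p)
    (hw : AnalyticAt ℝ w p) :
    pd (fun q => c * v q + q.2 * w q) p = c * pd v p + w p + p.2 * pd w p := by
  have h1 := hv.differentiableAt.hasFDerivAt
  have h2 := hw.differentiableAt.hasFDerivAt
  have h3 : HasFDerivAt (fun q : E × ℝ => q.2) (ContinuousLinearMap.snd ℝ E ℝ) p := hasFDerivAt_snd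
  have h4 := (h1.const_mul c).add (h3.mul h2)
  have h5 : fderiv ℝ (fun q => c * v q + q.2 * w q) p = _ := h4.fderiv
  simp only [pd, h5]
  simp
  ring

theorem pd_iter_mul {g u : E × ℝ → ℝ} {a : E → ℝ} (ha : AnalyticAt ℝ a 0)
    (hu : AnalyticAt ℝ u 0)
    (h : ∀ᶠ q in 𝓝 0, g q = a q.1 + q.2 * u q) (k : ℕ) :
    ∀ᶠ p in 𝓝 0, pd^[k + 1] g p = (k + 1 : ℝ) * pd^[k] u p + p.2 * pd^[k + 1] u p := by
  induction k with
  | zero =>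
    have h1 := pd_congr h
    filter_upwards [h1, hu.eventually_analyticAt,
      (analyticAt_fst (p := (0 : E × ℝ)) (𝕜 := ℝ)).continuousAt.eventually ha.eventually_analyticAt]
      with p hp hup hap
    have hap' : AnalyticAt ℝ (fun q : E × ℝ => a q.1) p :=
      AnalyticAt.comp (g := a) (f := Prod.fst) hap analyticAt_fst
    have h2 := pd_aux 1 hap' hup
    simp only [one_mul] at h2
    have h3 : pd (fun q : E × ℝ => a q.1) p = 0 := by
      rw [pd_eq_deriv hap']; simp
    simp only [Function.iterate_succ_apply', Function.iterate_zero_apply]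
    rw [hp, h2, h3]
    simp
  | succ k ih =>
    have h1 := pd_congr ih
    filter_upwards [h1, (pd_iter_analytic hu k).eventually_analyticAt,
      (pd_iter_analytic hu (k + 1)).eventually_analyticAt] with p hp h2 h3
    rw [Function.iterate_succ_apply' pd (k + 1), hp, pd_aux _ h2 h3,
      ← Function.iterate_succ_apply' pd k, ← Function.iterate_succ_apply' pd (k + 1)]
    push_cast
    ring

theorem ev_prj {P : E × ℝ → Prop} (h : ∀ᶠ p in 𝓝 (0 : E × ℝ), P p) :
    ∀ᶠ p in 𝓝 (0 : E × ℝ), P (p.1, 0) := by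
  have : Tendsto (fun p : E × ℝ => (p.1, (0 : ℝ))) (𝓝 0) (𝓝 0) := by
    have : Continuous (fun p : E × ℝ => (p.1, (0 : ℝ))) := by fun_prop
    exact this.tendsto' 0 0 (by simp)
  exact this.eventually h

theorem taylor (d : ℕ) (g : E × ℝ → ℝ) (hg : AnalyticAt ℝ g 0) :
    ∃ u : E × ℝ → ℝ, AnalyticAt ℝ u 0 ∧
      (∀ᶠ q in 𝓝 (0 : E × ℝ), g q = ∑ j ∈ Finset.range d,
        (pd^[j] g (q.1, 0) / (j.factorial : ℝ)) * q.2 ^ j + q.2 ^ d * u q) ∧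
      ∀ᶠ q in 𝓝 (0 : E × ℝ), (d.factorial : ℝ) * u (q.1, 0) = pd^[d] g (q.1, 0) := by
  induction d generalizing g with
  | zero => exact ⟨g, hg, by simp, by simp⟩
  | succ d ih =>
    obtain ⟨u1, hu1, hgu⟩ := exists_div g hg
    obtain ⟨u, hu, h1, h2⟩ := ih u1 hu1
    have ha : AnalyticAt ℝ (fun y : E => g (y, 0)) 0 :=
      AnalyticAt.comp (g := g) (f := fun y : E => (y, (0 : ℝ))) hg
        (analyticAt_id.prod analyticAt_const)
    have h3 : ∀ k, ∀ᶠ q in 𝓝 (0 : E × ℝ), pd^[k + 1] g (q.1, 0) =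
        (k + 1 : ℝ) * pd^[k] u1 (q.1, 0) := by
      intro k
      filter_upwards [ev_prj (pd_iter_mul ha hu1 hgu k)] with q hq
      simpa using hq
    refine ⟨u, hu, ?_, ?_⟩
    · have h4 : ∀ᶠ q in 𝓝 (0 : E × ℝ), ∀ k ∈ Finset.range d, pd^[k + 1] g (q.1, 0) =
        (k + 1 : ℝ) * pd^[k] u1 (q.1, 0) :=
        (Filter.eventually_all_finset _).2 fun k _ => h3 k
      filter_upwards [h4, hgu, h1] with q hq1 hq2 hq3
      rw [Finset.sum_range_succ', hq2]
      have : ∑ k ∈ Finset.range d, pd^[k + 1] g (q.1, 0) / ((k + 1).factorial : ℝ) * q.2 ^ (k + 1) =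
          q.2 * ∑ k ∈ Finset.range d, pd^[k] u1 (q.1, 0) / (k.factorial : ℝ) * q.2 ^ k := by
        rw [Finset.mul_sum]
        apply Finset.sum_congr rfl
        intro k hk
        rw [hq1 k hk, Nat.factorial_succ]
        have : (k.factorial : ℝ) ≠ 0 := by positivity
        push_cast
        field_simp
        ring
      rw [this]
      nth_rewrite 1 [hq3]
      simp
      ring
    · filter_upwards [h2, h3 d] with q hq1 hq2
      rw [hq2, ← hq1, Nat.factorial_succ]
      push_cast
      ring

/-- Implicit function for the partial derivative. -/
theorem exists_implicit (g : E × ℝ → ℝ) (hg : AnalyticAt ℝ g 0) (h0 : g 0 = 0) (h1 : pd g 0 ≠ 0) :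
    ∃ h : E → ℝ, AnalyticAt ℝ h 0 ∧ h 0 = 0 ∧ ∀ᶠ y in 𝓝 0, g (y, h y) = 0 := by
  have cd : ContDiffAt ℝ ⊤ g (0 : E × ℝ) := hg.contDiffAt
  have hi : (fderiv ℝ g (0 : E × ℝ) ∘L .inr ℝ E ℝ).IsInvertible := by
    refine ⟨ContinuousLinearEquiv.unitsEquivAut ℝ (Units.mk0 _ h1), ?_⟩
    ext
    simp [pd]
  refine ⟨cd.implicitFunction (by simp) hi, ?_, ?_, ?_⟩
  · exact (cd.contDiffAt_implicitFunction (by simp) hi).analyticAt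
  · exact cd.implicitFunction_apply_self (by simp) hi
  · have := cd.eventually_apply_implicitFunction (by simp) hi
    rw [h0] at this
    exact this

end Partial
end Loja

namespace Loja

/-- Coordinate space. -/
abbrev X (n : ℕ) := Fin n → ℝ

/-- Monomial. -/
def mon {n : ℕ} (α : Fin n → ℕ) (y : X n) : ℝ := ∏ i, y i ^ α i

theorem mon_add {n : ℕ} (α β : Fin n → ℕ) (y : X n) : mon (α + β) y = mon α y * mon β y := by
  simp [mon, pow_add, Finset.prod_mul_distrib]

theorem mon_nsmul {n : ℕ} (k : ℕ) (α : Fin n → ℕ) (y : X n) : mon (k • α) y = mon α y ^ k := by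
  simp [mon, pow_mul', Finset.prod_pow]

theorem mon_zero {n : ℕ} (y : X n) : mon 0 y = 1 := by simp [mon]

theorem mon_single {n : ℕ} (i : Fin n) (k : ℕ) (y : X n) : mon (Pi.single i k) y = y i ^ k := by
  rw [mon, Finset.prod_eq_single i]
  · simp
  · intro j _ hj; simp [hj]
  · simp

theorem analyticAt_coord {n : ℕ} (i : Fin n) (y : X n) : AnalyticAt ℝ (fun z : X n => z i) y :=
  (ContinuousLinearMap.proj (R := ℝ) (φ := fun _ : Fin n => ℝ) i).analyticAt y

theorem mon_analytic {n : ℕ} (α : Fin n → ℕ) (y : X n) : AnalyticAt ℝ (mon α) y := by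
  unfold mon
  apply Finset.analyticAt_fun_prod
  intro i _
  exact (analyticAt_coord i y).pow _

/-- Monomial times unit. -/
def MonAt {n : ℕ} (α : Fin n → ℕ) (g : X n → ℝ) : Prop :=
  ∃ u : X n → ℝ, AnalyticAt ℝ u 0 ∧ u 0 ≠ 0 ∧ ∀ᶠ y in 𝓝 0, g y = mon α y * u y

/-- Zero or monomial times unit. -/
def NC {n : ℕ} (g : X n → ℝ) : Prop := (∀ᶠ y in 𝓝 0, g y = 0) ∨ ∃ α, MonAt α g

theorem MonAt.mul {n : ℕ} {α β : Fin n → ℕ} {g h : X n → ℝ} (hg : MonAt α g) (hh : MonAt β h) :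
    MonAt (α + β) (fun y => g y * h y) := by
  obtain ⟨u, hu, hu0, h1⟩ := hg
  obtain ⟨v, hv, hv0, h2⟩ := hh
  refine ⟨fun y => u y * v y, hu.mul hv, mul_ne_zero hu0 hv0, ?_⟩
  filter_upwards [h1, h2] with y e1 e2
  rw [e1, e2, mon_add]; ring

theorem MonAt.pow {n : ℕ} {α : Fin n → ℕ} {g : X n → ℝ} (hg : MonAt α g) (k : ℕ) :
    MonAt (k • α) (fun y => g y ^ k) := by
  obtain ⟨u, hu, hu0, h1⟩ := hg
  refine ⟨fun y => u y ^ k, hu.pow k, pow_ne_zero k hu0, ?_⟩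
  filter_upwards [h1] with y e1
  rw [e1, mon_nsmul]; ring

theorem MonAt.prod {n : ℕ} {ι : Type} (s : Finset ι) {α : ι → Fin n → ℕ} {g : ι → X n → ℝ}
    (hg : ∀ i, MonAt (α i) (g i)) : MonAt (∑ i ∈ s, α i) (fun y => ∏ i ∈ s, g i y) := by
  classical
  induction s using Finset.induction_on with
  | empty => exact ⟨fun _ => 1, analyticAt_const, one_ne_zero, by simp [mon_zero]⟩
  | insert a s ha ih =>
    simp only [Finset.sum_insert ha, Finset.prod_insert ha]
    exact (hg a).mul ih

theorem MonAt.unit {n : ℕ} {u : X n → ℝ} (hu : AnalyticAt ℝ u 0) (h0 : u 0 ≠ 0) :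
    MonAt 0 u := ⟨u, hu, h0, by simp [mon_zero]⟩

theorem MonAt.congr {n : ℕ} {α : Fin n → ℕ} {g h : X n → ℝ} (hg : MonAt α g)
    (hgh : ∀ᶠ y in 𝓝 0, h y = g y) : MonAt α h := by
  obtain ⟨u, hu, hu0, h1⟩ := hg
  refine ⟨u, hu, hu0, ?_⟩
  filter_upwards [h1, hgh] with y e1 e2
  rw [e2, e1]

theorem NC.congr {n : ℕ} {g h : X n → ℝ} (hg : NC g)
    (hgh : ∀ᶠ y in 𝓝 0, h y = g y) : NC h := by
  rcases hg with hg | ⟨α, hg⟩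
  · left
    filter_upwards [hg, hgh] with y e1 e2
    rw [e2, e1]
  · exact Or.inr ⟨α, hg.congr hgh⟩

theorem NC.mul_mon {n : ℕ} {α : Fin n → ℕ} {g h : X n → ℝ} (hg : NC g) (hh : MonAt α h) :
    NC (fun y => g y * h y) := by
  rcases hg with hg | ⟨β, hg⟩
  · left
    filter_upwards [hg] with y e1
    rw [e1, zero_mul]
  · exact Or.inr ⟨_, hg.mul hh⟩

/-- The exponent transformation of a monomial map with exponents `A`. -/
def tr {n m : ℕ} (A : Fin n → Fin m → ℕ) (α : Fin n → ℕ) : Fin m → ℕ := ∑ i, α i • A i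

theorem tr_mono {n m : ℕ} (A : Fin n → Fin m → ℕ) {α β : Fin n → ℕ} (h : α ≤ β) :
    tr A α ≤ tr A β := by
  unfold tr
  refine Finset.sum_le_sum fun i _ => ?_
  exact nsmul_le_nsmul_left (fun _ => Nat.zero_le _) (h i)

theorem tr_nsmul {n m : ℕ} (A : Fin n → Fin m → ℕ) (k : ℕ) (α : Fin n → ℕ) :
    tr A (k • α) = k • tr A α := by
  simp [tr, Finset.smul_sum, mul_smul]

theorem tr_tr {n m l : ℕ} (A : Fin n → Fin m → ℕ) (B : Fin m → Fin l → ℕ) (α : Fin n → ℕ) :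
    tr B (tr A α) = tr (fun i => tr B (A i)) α := by
  simp only [tr, Finset.sum_apply, Finset.sum_smul, Finset.smul_sum]
  rw [Finset.sum_comm]
  refine Finset.sum_congr rfl fun i _ => Finset.sum_congr rfl fun j _ => ?_
  simp [mul_smul]

/-- Monomial map. -/
def MonMap {n m : ℕ} (A : Fin n → Fin m → ℕ) (τ : X m → X n) : Prop :=
  ∀ i, MonAt (A i) (fun z => τ z i)

theorem MonMap.mon_comp {n m : ℕ} {A : Fin n → Fin m → ℕ} {τ : X m → X n} (h : MonMap A τ)
    (α : Fin n → ℕ) : MonAt (tr A α) (fun z => mon α (τ z)) := by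
  unfold mon tr
  exact MonAt.prod _ fun i => (h i).pow _

theorem MonMap.monAt_comp {n m : ℕ} {A : Fin n → Fin m → ℕ} {τ : X m → X n} (h : MonMap A τ)
    (hτ : AnalyticAt ℝ τ 0) (hτ0 : τ 0 = 0) {α : Fin n → ℕ} {g : X n → ℝ} (hg : MonAt α g) :
    MonAt (tr A α) (fun z => g (τ z)) := by
  obtain ⟨u, hu, hu0, h1⟩ := hg
  have h2 : MonAt 0 (fun z => u (τ z)) := by
    apply MonAt.unit
    · exact AnalyticAt.comp (g := u) (f := τ) (by rwa [hτ0]) hτ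
    · simpa [hτ0] using hu0
  have h3 := (h.mon_comp α).mul h2
  rw [add_zero] at h3
  refine h3.congr ?_
  have := hτ.continuousAt.tendsto
  rw [hτ0] at this
  exact this.eventually h1

theorem ev_comp {E F : Type} [NormedAddCommGroup E] [NormedSpace ℝ E]
    [NormedAddCommGroup F] [NormedSpace ℝ F] {τ : E → F} (hτ : AnalyticAt ℝ τ 0) (hτ0 : τ 0 = 0)
    {P : F → Prop} (h : ∀ᶠ y in 𝓝 0, P y) : ∀ᶠ z in 𝓝 0, P (τ z) := by
  have := hτ.continuousAt.tendsto
  rw [hτ0] at this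
  exact this.eventually h

theorem an_comp {E F G : Type} [NormedAddCommGroup E] [NormedSpace ℝ E]
    [NormedAddCommGroup F] [NormedSpace ℝ F] [NormedAddCommGroup G] [NormedSpace ℝ G]
    {τ : E → F} (hτ : AnalyticAt ℝ τ 0) (hτ0 : τ 0 = 0)
    {g : F → G} (h : AnalyticAt ℝ g 0) : AnalyticAt ℝ (fun z => g (τ z)) 0 :=
  AnalyticAt.comp (g := g) (f := τ) (by rwa [hτ0]) hτ

theorem MonMap.nc_comp {n m : ℕ} {A : Fin n → Fin m → ℕ} {τ : X m → X n} (h : MonMap A τ)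
    (hτ : AnalyticAt ℝ τ 0) (hτ0 : τ 0 = 0) {g : X n → ℝ} (hg : NC g) :
    NC (fun z => g (τ z)) := by
  rcases hg with hg | ⟨α, hg⟩
  · exact Or.inl (ev_comp hτ hτ0 hg)
  · exact Or.inr ⟨_, h.monAt_comp hτ hτ0 hg⟩

theorem MonMap.comp {n m l : ℕ} {A : Fin n → Fin m → ℕ} {B : Fin m → Fin l → ℕ}
    {τ : X m → X n} {σ : X l → X m} (h : MonMap A τ) (h' : MonMap B σ)
    (hσ : AnalyticAt ℝ σ 0) (hσ0 : σ 0 = 0) : MonMap (fun i => tr B (A i)) (τ ∘ σ) :=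
  fun i => h'.monAt_comp hσ hσ0 (h i)

theorem analyticAt_pi' {n : ℕ} {E : Type} [NormedAddCommGroup E] [NormedSpace ℝ E]
    {f : E → X n} {x : E} (h : ∀ i, AnalyticAt ℝ (fun z => f z i) x) : AnalyticAt ℝ f x :=
  analyticAt_pi_iff.2 h

/-- Power maps. -/
theorem res_pow {n : ℕ} (D : ℕ) (hD : 0 < D) :
    Res (fun τ : X n → X n => MonMap (fun i => Pi.single i D) τ) := by
  classical
  intro N hN
  set κ : (Fin n → Bool) → X n → X n := fun s z i => (if s i then 1 else -1) * z i ^ D with hκ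
  refine ⟨Set.range κ, Set.finite_range κ, ?_, ?_⟩
  · rintro _ ⟨s, rfl⟩
    refine ⟨?_, ?_, ?_⟩
    · apply analyticAt_pi'
      intro i
      exact analyticAt_const.mul ((analyticAt_coord i 0).pow D)
    · funext i; simp [hκ, hD.ne']
    · intro i
      refine ⟨fun _ => if s i then 1 else -1, analyticAt_const, by split_ifs <;> norm_num, ?_⟩
      filter_upwards with y
      rw [mon_single]
      simp only [hκ]
      ring
  · rw [nhdsWithin_univ]
    have hNN : (⋂ s, N (κ s)) ∈ 𝓝 (0 : X n) := Filter.iInter_mem.2 fun s => hN _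
    have ht : Tendsto (fun (y : X n) => (fun i => |y i| ^ ((D : ℝ)⁻¹) : X n)) (𝓝 0) (𝓝 0) := by
      have : Continuous (fun (y : X n) => (fun i => |y i| ^ ((D : ℝ)⁻¹) : X n)) := by
        refine continuous_pi fun i => ?_
        refine Continuous.rpow_const (by fun_prop) ?_
        intro x; right; positivity
      refine this.tendsto' 0 0 ?_
      funext i
      have : (D : ℝ)⁻¹ ≠ 0 := by positivity
      simp [Real.zero_rpow this]
    filter_upwards [ht.eventually hNN] with y hy
    have hy' := Set.mem_iInter.1 hy
    simp only [Set.mem_iUnion, Set.mem_image]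
    refine ⟨κ (fun i => decide (0 ≤ y i)), ⟨_, rfl⟩, _, hy' _, ?_⟩
    funext i
    simp only [hκ]
    rw [Real.rpow_inv_natCast_pow (abs_nonneg _) hD.ne']
    by_cases h : 0 ≤ y i
    · simp [h, abs_of_nonneg h]
    · simp [h, abs_of_neg (not_le.1 h)]

/-- Elementary toric chart. -/
def kap {n : ℕ} (i j : Fin n) (p q : ℕ) (s c : ℝ) : X n → X n := fun z k =>
  if k = i then (c + z i) * z j ^ p else if k = j then s * z j ^ q else z k

/-- Exponents of the elementary toric chart. -/
def kapA {n : ℕ} (i j : Fin n) (p q : ℕ) (b : ℕ) : Fin n → Fin n → ℕ := fun k =>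
  if k = i then Pi.single i b + Pi.single j p else if k = j then Pi.single j q else Pi.single k 1

theorem res_kap {n : ℕ} (i j : Fin n) (hij : i ≠ j) (p q : ℕ) (hp : 0 < p) (hq : 0 < q) :
    ResOn {y : X n | |y i| ^ q ≤ |y j| ^ p}
      (fun τ : X n → X n => ∃ b, MonMap (kapA i j p q b) τ) := by
  classical
  intro N hN
  have hball : ∀ c : ℝ, ∃ r > 0, Metric.ball (0 : X n) r ⊆
      N (kap i j p q 1 c) ∩ N (kap i j p q (-1) c) := fun c =>
    Metric.mem_nhds_iff.1 (Filter.inter_mem (hN _) (hN _))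
  choose r hr hrN using hball
  obtain ⟨T, hT⟩ := (isCompact_Icc (a := (-1 : ℝ)) (b := 1)).elim_finite_subcover
    (fun c => Metric.ball c (r c)) (fun c => Metric.isOpen_ball)
    (fun c _ => Set.mem_iUnion.2 ⟨c, Metric.mem_ball_self (hr c)⟩)
  refine ⟨(fun c => kap i j p q 1 c) '' T ∪ (fun c => kap i j p q (-1) c) '' T,
    (T.finite_toSet.image _).union (T.finite_toSet.image _), ?_, ?_⟩
  · have key : ∀ s c : ℝ, s ≠ 0 → AnalyticAt ℝ (kap i j p q s c) 0 ∧ kap i j p q s c 0 = 0 ∧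
        ∃ b, MonMap (kapA i j p q b) (kap i j p q s c) := by
      intro s c hs
      refine ⟨?_, ?_, ?_⟩
      · apply analyticAt_pi'
        intro k
        unfold kap
        split_ifs
        · exact (analyticAt_const.add (analyticAt_coord i 0)).mul ((analyticAt_coord j 0).pow p)
        · exact analyticAt_const.mul ((analyticAt_coord j 0).pow q)
        · exact analyticAt_coord k 0
      · funext k
        simp [kap, hp.ne', hq.ne']
      · by_cases hc : c = 0
        · refine ⟨1, fun k => ?_⟩
          unfold kap kapA
          split_ifs
          · exact ⟨fun _ => 1, analyticAt_const, one_ne_zero, by simp [mon_add, mon_single, hc]⟩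
          · refine ⟨fun _ => s, analyticAt_const, hs, ?_⟩
            simp [mon_single, mul_comm]
          · exact ⟨fun _ => 1, analyticAt_const, one_ne_zero, by simp [mon_single]⟩
        · refine ⟨0, fun k => ?_⟩
          unfold kap kapA
          split_ifs
          · refine ⟨fun z => c + z i, analyticAt_const.add (analyticAt_coord i 0), by simpa, ?_⟩
            simp [mon_single, mul_comm]
          · refine ⟨fun _ => s, analyticAt_const, hs, ?_⟩
            simp [mon_single, mul_comm]
          · exact ⟨fun _ => 1, analyticAt_const, one_ne_zero, by simp [mon_single]⟩
    rintro φ (⟨c, _, rfl⟩ | ⟨c, _, rfl⟩)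
    · exact key 1 c one_ne_zero
    · exact key (-1) c (by norm_num)
  · have hev : ∀ᶠ y : X n in 𝓝 0, ∀ c ∈ T, (∀ k, |y k| < r c) ∧ |y j| ^ ((q : ℝ)⁻¹) < r c := by
      rw [Filter.eventually_all_finset]
      intro c _
      refine Filter.Eventually.and ?_ ?_
      · rw [Filter.eventually_all]
        intro k
        have : Continuous (fun y : X n => |y k|) := by fun_prop
        exact (this.tendsto' 0 0 (by simp)).eventually (gt_mem_nhds (hr c))
      · have : Continuous (fun y : X n => |y j| ^ ((q : ℝ)⁻¹)) := by
          refine Continuous.rpow_const (by fun_prop) ?_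
          intro x; right; positivity
        refine (this.tendsto' 0 0 ?_).eventually (gt_mem_nhds (hr c))
        have : (q : ℝ)⁻¹ ≠ 0 := by positivity
        simp [Real.zero_rpow this]
    rw [mem_nhdsWithin_iff_eventually]
    filter_upwards [hev] with y hy hyA
    set zj : ℝ := |y j| ^ ((q : ℝ)⁻¹) with hzj
    have hzj0 : 0 ≤ zj := by positivity
    have hzjq : zj ^ q = |y j| := Real.rpow_inv_natCast_pow (abs_nonneg _) hq.ne'
    have hle : |y i| ≤ zj ^ p := by
      have h1 : |y i| ^ q ≤ (zj ^ p) ^ q := by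
        rw [← pow_mul, mul_comm, pow_mul, hzjq]; exact hyA
      exact le_of_pow_le_pow_left₀ hq.ne' (by positivity) h1
    set t : ℝ := y i / zj ^ p with ht
    have htz : t * zj ^ p = y i := by
      by_cases h : zj ^ p = 0
      · rw [h] at hle ⊢
        have := abs_nonpos_iff.1 hle
        simp [this]
      · rw [ht]; field_simp
    have ht1 : t ∈ Set.Icc (-1 : ℝ) 1 := by
      rw [Set.mem_Icc, ← abs_le, ht, abs_div, abs_of_nonneg (by positivity : 0 ≤ zj ^ p)]
      exact div_le_one_of_le₀ hle (by positivity)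
    obtain ⟨c, hcT, hct⟩ : ∃ c ∈ T, t ∈ Metric.ball c (r c) := by
      simpa using hT ht1
    set z : X n := fun k => if k = i then t - c else if k = j then zj else y k with hz
    have hzb : z ∈ Metric.ball (0 : X n) (r c) := by
      rw [mem_ball_zero_iff, pi_norm_lt_iff (hr c)]
      intro k
      simp only [hz, Real.norm_eq_abs]
      split_ifs
      · simpa [Real.dist_eq] using hct
      · rw [abs_of_nonneg hzj0]; exact (hy c hcT).2
      · exact (hy c hcT).1 k
    have hzN := hrN c hzb
    have hji : j ≠ i := hij.symm
    simp only [Set.mem_iUnion, Set.mem_image]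
    have hgen : ∀ s : ℝ, s * |y j| = y j → kap i j p q s c z = y := by
      intro s hs
      funext k
      simp only [kap, hz, if_true, if_neg hji]
      split_ifs with h1 h2
      · rw [h1, add_sub_cancel, htz]
      · rw [h2, hzjq, hs]
      · rfl
    by_cases h : 0 ≤ y j
    · exact ⟨_, Or.inl ⟨c, hcT, rfl⟩, z, hzN.1, hgen 1 (by rw [abs_of_nonneg h, one_mul])⟩
    · exact ⟨_, Or.inr ⟨c, hcT, rfl⟩, z, hzN.2,
        hgen (-1) (by rw [abs_of_neg (not_le.1 h)]; ring)⟩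

end Loja

namespace Loja

theorem tr_apply {n m : ℕ} (A : Fin n → Fin m → ℕ) (α : Fin n → ℕ) (k : Fin m) :
    tr A α k = ∑ i, α i * A i k := by
  simp [tr, Finset.sum_apply]

theorem tr_id {n : ℕ} (α : Fin n → ℕ) : tr (fun i => Pi.single i 1) α = α := by
  funext k
  rw [tr_apply, Finset.sum_eq_single k]
  · simp
  · intro b _ hb; simp [Pi.single_apply, hb.symm]
  · simp

theorem monMap_id {n : ℕ} : MonMap (fun i : Fin n => Pi.single i 1) (id : X n → X n) := by
  intro i
  exact ⟨fun _ => 1, analyticAt_const, one_ne_zero, by simp [mon_single]⟩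

theorem tr_kapA {n : ℕ} {i j : Fin n} (hij : i ≠ j) (p q b : ℕ) (α : Fin n → ℕ) (k : Fin n) :
    tr (kapA i j p q b) α k = if k = i then α i * b else if k = j then α i * p + α j * q else α k := by
  rw [tr_apply]
  have h : ∀ l, α l * kapA i j p q b l k =
      (if l = i then α i * ((Pi.single i b + Pi.single j p : Fin n → ℕ) k) else 0) +
      (if l = j then α j * (Pi.single j q : Fin n → ℕ) k else 0) +
      (if l = k then (if k = i then 0 else if k = j then 0 else α k) else 0) := by
    intro l
    unfold kapA
    by_cases h1 : l = i
    · subst h1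
      by_cases h2 : l = k
      · simp [h2, hij]; intro h; exact absurd (h2.trans h) hij
      · simp [h2, hij]
    · by_cases h2 : l = j
      · subst h2
        by_cases h3 : l = k
        · subst h3; simp [h1]
        · simp [h1, h3]
      · by_cases h3 : l = k
        · subst h3; simp [h1, h2]
        · simp [h1, h2, h3]
  rw [Finset.sum_congr rfl fun l _ => h l]
  simp only [Finset.sum_add_distrib, Finset.sum_ite_eq', Finset.mem_univ, if_true]
  by_cases h1 : k = i
  · subst h1; simp [hij]
  · by_cases h2 : k = j
    · subst h2; simp [h1]
    · simp [h1, h2]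

/-- Composition for monomial resolutions. -/
theorem resMon_bind {n : ℕ} {A₀ : Set (X n)} {P Q : (Fin n → Fin n → ℕ) → Prop}
    (h : ResOn A₀ (fun τ : X n → X n => ∃ A, MonMap A τ ∧ P A))
    (hPQ : ∀ A, P A → Res (fun σ : X n → X n => ∃ B, MonMap B σ ∧ Q (fun i => tr B (A i)))) :
    ResOn A₀ (fun τ : X n → X n => ∃ A, MonMap A τ ∧ Q A) := by
  refine h.bind ?_
  rintro φ hφ hφ0 ⟨A, hA, hP⟩
  refine (hPQ A hP).mono' ?_
  rintro σ hσ hσ0 ⟨B, hB, hQ⟩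
  exact ⟨_, hA.comp hB hσ hσ0, hQ⟩

/-- Comparable exponents. -/
def Cmp {n : ℕ} (α β : Fin n → ℕ) : Prop := α ≤ β ∨ β ≤ α

theorem Cmp.tr {n m : ℕ} {α β : Fin n → ℕ} (h : Cmp α β) (A : Fin n → Fin m → ℕ) :
    Cmp (tr A α) (tr A β) := h.imp (tr_mono A) (tr_mono A)

theorem Cmp.symm {n : ℕ} {α β : Fin n → ℕ} (h : Cmp α β) : Cmp β α := Or.symm h

theorem card_drop {n : ℕ} (α β : Fin n → ℕ) {i j : Fin n} (hi : α i < β i) (hj : β j < α j) (b : ℕ) :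
    (Finset.univ.filter fun k => tr (kapA i j (α j - β j) (β i - α i) b) α k ≠
      tr (kapA i j (α j - β j) (β i - α i) b) β k).card <
    (Finset.univ.filter fun k => α k ≠ β k).card := by
  have hij : i ≠ j := by rintro rfl; omega
  apply Finset.card_lt_card
  rw [Finset.ssubset_iff_of_subset]
  · refine ⟨j, by simp; omega, ?_⟩
    simp only [Finset.mem_filter, Finset.mem_univ, true_and, not_not]
    rw [tr_kapA hij, tr_kapA hij, if_neg hij.symm, if_pos rfl, if_neg hij.symm, if_pos rfl]
    obtain ⟨x, hx⟩ := Nat.exists_eq_add_of_lt hi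
    obtain ⟨y, hy⟩ := Nat.exists_eq_add_of_lt hj
    rw [hx, hy, show β j + y + 1 - β j = y + 1 by omega, show α i + x + 1 - α i = x + 1 by omega]
    ring
  · intro k
    simp only [Finset.mem_filter, Finset.mem_univ, true_and]
    rw [tr_kapA hij, tr_kapA hij]
    split_ifs with h1 h2
    · subst h1; intro _; omega
    · subst h2; intro _; omega
    · exact id

theorem toric_pair {n : ℕ} : ∀ (N : ℕ) (α β : Fin n → ℕ),
    (Finset.univ.filter fun k => α k ≠ β k).card ≤ N →
    Res (fun τ : X n → X n => ∃ A, MonMap A τ ∧ Cmp (tr A α) (tr A β)) := by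
  intro N
  induction N with
  | zero =>
    intro α β h
    refine Res.pure ⟨_, monMap_id, ?_⟩
    have : α = β := by
      funext k
      by_contra hk
      have h2 : k ∈ (Finset.univ.filter fun k => α k ≠ β k) := by simp [hk]
      have := Finset.card_pos.2 ⟨k, h2⟩
      omega
    rw [this]; exact Or.inl le_rfl
  | succ N ih =>
    intro α β h
    by_cases hc : Cmp α β
    · refine Res.pure ⟨_, monMap_id, ?_⟩
      rw [tr_id, tr_id]; exact hc
    · unfold Cmp at hc
      push Not at hc
      obtain ⟨hc1, hc2⟩ := hc
      simp only [Pi.le_def, not_forall, not_le] at hc1 hc2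
      obtain ⟨j, hj⟩ := hc1
      obtain ⟨i, hi⟩ := hc2
      have hij : i ≠ j := by rintro rfl; omega
      have h1 := res_kap i j hij (α j - β j) (β i - α i) (by omega) (by omega)
      have h2 := res_kap j i hij.symm (β i - α i) (α j - β j) (by omega) (by omega)
      have hu : {y : X n | |y i| ^ (β i - α i) ≤ |y j| ^ (α j - β j)} ∪
          {y : X n | |y j| ^ (α j - β j) ≤ |y i| ^ (β i - α i)} = Set.univ := by
        ext y; simp [le_total]
      have h1' := resMon_bind (P := fun A => ∃ b, A = kapA i j (α j - β j) (β i - α i) b)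
        (Q := fun A => Cmp (tr A α) (tr A β)) (h1.mono' (by
          rintro φ _ _ ⟨b, hb⟩; exact ⟨_, hb, b, rfl⟩)) (by
          rintro A ⟨b, rfl⟩
          refine (ih (tr (kapA i j (α j - β j) (β i - α i) b) α)
            (tr (kapA i j (α j - β j) (β i - α i) b) β) ?_).mono' ?_
          · have := card_drop α β hi hj b
            omega
          · rintro φ _ _ ⟨B, hB, hh⟩
            rw [tr_tr, tr_tr] at hh
            exact ⟨B, hB, hh⟩)
      have h2' := resMon_bind (P := fun A => ∃ b, A = kapA j i (β i - α i) (α j - β j) b)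
        (Q := fun A => Cmp (tr A α) (tr A β)) (h2.mono' (by
          rintro φ _ _ ⟨b, hb⟩; exact ⟨_, hb, b, rfl⟩)) (by
          rintro A ⟨b, rfl⟩
          refine (ih (tr (kapA j i (β i - α i) (α j - β j) b) β)
            (tr (kapA j i (β i - α i) (α j - β j) b) α) ?_).mono' ?_
          · have := card_drop β α hj hi b
            have h3 : (Finset.univ.filter fun k => β k ≠ α k) =
              (Finset.univ.filter fun k => α k ≠ β k) := by
              ext k; simp [eq_comm]
            rw [h3] at this
            omega
          · rintro φ _ _ ⟨B, hB, hh⟩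
            rw [tr_tr, tr_tr] at hh
            exact ⟨B, hB, hh.symm⟩)
      have := h1'.union h2'
      rw [hu] at this
      exact this

theorem toric_fam {n : ℕ} {ι : Type} (s : Finset (ι × ι)) (α : ι → Fin n → ℕ) :
    Res (fun τ : X n → X n => ∃ A, MonMap A τ ∧ ∀ p ∈ s, Cmp (tr A (α p.1)) (tr A (α p.2))) := by
  classical
  induction s using Finset.induction_on with
  | empty => exact Res.pure ⟨_, monMap_id, by simp⟩
  | insert a s ha ih =>
    refine resMon_bind (Q := fun A => ∀ p ∈ insert a s, Cmp (tr A (α p.1)) (tr A (α p.2))) ih ?_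
    intro A hA
    refine (toric_pair _ (tr A (α a.1)) (tr A (α a.2)) le_rfl).mono' ?_
    rintro σ _ _ ⟨B, hB, hh⟩
    refine ⟨B, hB, fun p hp => ?_⟩
    rw [← tr_tr, ← tr_tr]
    rcases Finset.mem_insert.1 hp with rfl | hp
    · exact hh
    · exact (hA p hp).tr B

end Loja

namespace Loja

/-- Simultaneous monomialization in dimension `n`. -/
def MM (n : ℕ) : Prop := ∀ (ι : Type) [Fintype ι] (g : ι → X n → ℝ), (∀ i, AnalyticAt ℝ (g i) 0) →
  Res (fun φ : X n → X n => ∀ i, NC (fun z => g i (φ z)))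

theorem tr_single {n : ℕ} (L : ℕ) (α : Fin n → ℕ) : tr (fun i => Pi.single i L) α = L • α := by
  funext k
  rw [tr_apply, Finset.sum_eq_single k]
  · simp [mul_comm]
  · intro b _ hb; simp [hb.symm]
  · simp

theorem toric_fam_pow {n : ℕ} {ι : Type} [Fintype ι] (α : ι → Fin n → ℕ) (L : ℕ) (hL : 0 < L) :
    Res (fun τ : X n → X n => ∃ A, MonMap A τ ∧ ∃ A' : Fin n → Fin n → ℕ,
      (∀ α, tr A α = L • tr A' α) ∧ ∀ i j, Cmp (tr A' (α i)) (tr A' (α j))) := by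
  refine resMon_bind (Q := fun A => ∃ A' : Fin n → Fin n → ℕ,
      (∀ α, tr A α = L • tr A' α) ∧ ∀ i j, Cmp (tr A' (α i)) (tr A' (α j)))
      (toric_fam (Finset.univ : Finset (ι × ι)) α) ?_
  intro A hA
  refine (res_pow L hL).mono' ?_
  intro σ _ _ hσ
  refine ⟨_, hσ, A, ?_, fun i j => hA (i, j) (by simp)⟩
  intro α
  rw [← tr_tr, tr_single]

theorem exists_least {n : ℕ} {ι : Type} [Fintype ι] [Nonempty ι] (δ : ι → Fin n → ℕ)
    (h : ∀ i j, Cmp (δ i) (δ j)) : ∃ i, ∀ j, δ i ≤ δ j := by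
  classical
  obtain ⟨i, _, hi⟩ := Finset.exists_min_image (Finset.univ : Finset ι) (fun i => ∑ k, δ i k)
    Finset.univ_nonempty
  refine ⟨i, fun j => ?_⟩
  rcases h i j with h1 | h1
  · exact h1
  · intro k
    by_contra hk
    have : ∑ k, δ j k < ∑ k, δ i k :=
      Finset.sum_lt_sum (fun k _ => h1 k) ⟨k, Finset.mem_univ _, not_le.1 hk⟩
    exact absurd (hi j (Finset.mem_univ _)) (not_le.2 this)

theorem mprime {n : ℕ} (hM : MM n) {κ ι : Type} [Fintype κ] [Fintype ι] (h : κ → X n → ℝ)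
    (a : ι → X n → ℝ) (e : ι → ℕ) (he : ∀ i, 0 < e i) (hh : ∀ k, AnalyticAt ℝ (h k) 0)
    (ha : ∀ i, AnalyticAt ℝ (a i) 0) :
    Res (fun φ : X n → X n => (∀ k, NC (fun z => h k (φ z))) ∧
      ((∀ i, ∀ᶠ y in 𝓝 0, a i (φ y) = 0) ∨ ∃ (γ : Fin n → ℕ) (b : ι → X n → ℝ),
        (∀ i, AnalyticAt ℝ (b i) 0) ∧ (∀ i, ∀ᶠ y in 𝓝 0, a i (φ y) = mon (e i • γ) y * b i y) ∧
        (∀ i, (∀ᶠ y in 𝓝 0, a i (φ y) = 0) → b i = 0) ∧ ∃ i, b i 0 ≠ 0)) := by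
  classical
  have h1 := hM (κ ⊕ ι) (Sum.elim h a) (by rintro (k | i); exacts [hh k, ha i])
  refine h1.bind ?_
  intro φ hφ hφ0 hNC
  have hN1 : ∀ k, NC (fun z => h k (φ z)) := fun k => hNC (Sum.inl k)
  have hN2 : ∀ i, NC (fun z => a i (φ z)) := fun i => hNC (Sum.inr i)
  by_cases hz : ∀ i, ∀ᶠ y in 𝓝 0, a i (φ y) = 0
  · exact Res.pure ⟨hN1, Or.inl hz⟩
  rw [not_forall] at hz
  set I := {i // ¬ ∀ᶠ y in 𝓝 0, a i (φ y) = 0} with hI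
  have : Nonempty I := ⟨⟨hz.choose, hz.choose_spec⟩⟩
  have hα : ∀ i : I, ∃ α, MonAt α (fun z => a i (φ z)) := by
    intro i
    rcases hN2 i with h | h
    · exact absurd h i.2
    · exact h
  choose α hα using hα
  set L := ∏ i, e i with hL
  have hLpos : 0 < L := Finset.prod_pos fun i _ => he i
  have hLe : ∀ i, e i * (L / e i) = L := fun i =>
    Nat.mul_div_cancel' (Finset.dvd_prod_of_mem e (Finset.mem_univ i))
  refine (toric_fam_pow (fun i : I => (L / e i) • α i) L hLpos).mono' ?_
  rintro τ hτ hτ0 ⟨A, hA, A', hAA, hc⟩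
  refine ⟨fun k => hA.nc_comp hτ hτ0 (hN1 k), Or.inr ?_⟩
  obtain ⟨i0, hi0⟩ := exists_least (fun i : I => tr A' ((L / e i) • α i)) hc
  have hmon : ∀ i : I, MonAt (L • tr A' (α i)) (fun z => a i (φ (τ z))) := by
    intro i
    rw [← hAA]
    exact hA.monAt_comp hτ hτ0 (hα i)
  choose u hu hu0 hue using hmon
  set γ := tr A' ((L / e i0) • α i0) with hγ
  have hle : ∀ i : I, e i • γ ≤ L • tr A' (α i) := by
    intro i
    have := nsmul_le_nsmul_right (hi0 i) (e i)
    rw [tr_nsmul _ (L / e i), ← mul_smul, hLe] at this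
    exact this
  refine ⟨γ, fun i => if hi : ¬ ∀ᶠ y in 𝓝 0, a i (φ y) = 0 then
    (fun y => mon (L • tr A' (α ⟨i, hi⟩) - e i • γ) y * u ⟨i, hi⟩ y) else 0, ?_, ?_, ?_, ?_⟩
  · intro i
    beta_reduce
    split_ifs with hi
    · exact analyticAt_const
    · exact (mon_analytic _ _).mul (hu _)
  · intro i
    beta_reduce
    split_ifs with hi
    · filter_upwards [ev_comp hτ hτ0 hi] with y hy
      simp [hy]
    · filter_upwards [hue ⟨i, hi⟩] with y hy
      simp only [Function.comp]
      rw [hy, ← mul_assoc, ← mon_add, add_tsub_cancel_of_le (hle ⟨i, hi⟩)]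
  · intro i hi
    beta_reduce
    split_ifs with hi'
    · rfl
    · exfalso
      have h3 : (mon (L • tr A' (α ⟨i, hi'⟩)) : X n → ℝ) =ᶠ[𝓝 0] 0 := by
        filter_upwards [hue ⟨i, hi'⟩, hi,
          (hu ⟨i, hi'⟩).continuousAt.eventually_ne (hu0 ⟨i, hi'⟩)] with y h1 h2 h3
        simp only [Function.comp] at h2
        rw [h2] at h1
        simpa [h3] using h1.symm
      obtain ⟨r, hr, hball⟩ := Metric.eventually_nhds_iff_ball.1 h3
      have := hball (fun _ => r / 2) (by
        rw [mem_ball_zero_iff]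
        refine (pi_norm_const_le (r / 2)).trans_lt ?_
        rw [Real.norm_eq_abs, abs_of_pos (by positivity)]; linarith)
      simp only [mon, Pi.zero_apply, Finset.prod_eq_zero_iff] at this
      obtain ⟨k, _, hk⟩ := this
      have := pow_ne_zero ((L • tr A' (α ⟨i, hi'⟩)) k) (by positivity : r / 2 ≠ 0)
      exact this hk
  · refine ⟨i0, ?_⟩
    beta_reduce
    rw [dif_pos i0.2]
    have : L • tr A' (α i0) - e i0 • γ = 0 := by
      rw [hγ, tr_nsmul, ← mul_smul, hLe, tsub_self]
    simp only [Subtype.coe_eta]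
    rw [this, mon_zero, one_mul]
    exact hu0 i0

end Loja

namespace Loja

theorem iteratedDeriv_poly (P : Polynomial ℝ) (k : ℕ) :
    iteratedDeriv k (fun t => P.eval t) = fun t => (Polynomial.derivative^[k] P).eval t := by
  induction k with
  | zero => simp
  | succ k ih =>
    rw [iteratedDeriv_succ, ih, Function.iterate_succ_apply']
    funext t
    exact Polynomial.deriv _

theorem iteratedDeriv_poly_zero (P : Polynomial ℝ) (k : ℕ) :
    iteratedDeriv k (fun t => P.eval t) 0 = (k.factorial : ℝ) * P.coeff k := by
  rw [iteratedDeriv_poly]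
  beta_reduce
  rw [← Polynomial.coeff_zero_eq_eval_zero, Polynomial.coeff_iterate_derivative]
  simp [Nat.descFactorial_self]

theorem poly_key (d : ℕ) (b : Fin d → ℝ) (U : ℝ) (hU : U ≠ 0) (c : ℝ) (F : ℝ → ℝ)
    (hF : ∀ t, F t = ∑ j, b j * (c + t) ^ (j : ℕ) + (c + t) ^ d * U) :
    iteratedDeriv d F 0 ≠ 0 ∧
    ((∀ k < d, iteratedDeriv k F 0 = 0) → ∀ j, b j = U * (d.choose j) * (-c) ^ (d - (j : ℕ))) := by
  classical
  set R : Polynomial ℝ := ∑ j, Polynomial.C (b j) * Polynomial.X ^ (j : ℕ) with hR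
  set Q : Polynomial ℝ := R + Polynomial.C U * Polynomial.X ^ d with hQ
  have hRd : R.degree < d := by
    rw [hR]
    refine (Polynomial.degree_sum_le _ _).trans_lt ?_
    rw [Finset.sup_lt_iff (by simp)]
    intro j _
    refine (Polynomial.degree_C_mul_X_pow_le _ _).trans_lt ?_
    exact_mod_cast j.2
  have hQdeg : Q.degree = d := by
    rw [hQ, Polynomial.degree_add_eq_right_of_degree_lt] <;>
      rw [Polynomial.degree_C_mul_X_pow d hU]
    exact hRd
  have hQn : Q.natDegree = d := Polynomial.natDegree_eq_of_degree_eq_some hQdeg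
  have hQc : Q.coeff d = U := by
    rw [hQ, Polynomial.coeff_add, Polynomial.coeff_eq_zero_of_degree_lt hRd]
    simp
  have hFQ : F = fun t => (Polynomial.taylor c Q).eval t := by
    funext t
    rw [hF, Polynomial.taylor_eval, add_comm t c, hQ, hR]
    simp [Polynomial.eval_finsetSum, mul_comm U]
  have hTd : (Polynomial.taylor c Q).coeff d = U := by
    have := Polynomial.coeff_taylor_natDegree (r := c) (f := Q)
    rwa [hQn, Polynomial.leadingCoeff, hQn, hQc] at this
  rw [hFQ]
  constructor
  · rw [iteratedDeriv_poly_zero, hTd]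
    exact mul_ne_zero (by positivity) hU
  · intro h j
    have hT : Polynomial.taylor c Q = Polynomial.C U * Polynomial.X ^ d := by
      ext k
      rw [Polynomial.coeff_C_mul_X_pow]
      rcases lt_trichotomy k d with hk | hk | hk
      · have := h k hk
        rw [iteratedDeriv_poly_zero] at this
        rw [if_neg hk.ne]
        have hf : (k.factorial : ℝ) ≠ 0 := by positivity
        simpa [hf] using this
      · rw [hk, hTd, if_pos rfl]
      · rw [if_neg hk.ne']
        apply Polynomial.coeff_eq_zero_of_natDegree_lt
        rw [Polynomial.natDegree_taylor, hQn]; exact hk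
    have hQ2 : Q = Polynomial.C U * (Polynomial.X + Polynomial.C (-c)) ^ d := by
      have := congrArg (Polynomial.taylor (-c)) hT
      rw [Polynomial.taylor_taylor, neg_add_cancel, Polynomial.taylor_zero, Polynomial.taylor_mul,
        Polynomial.taylor_C, Polynomial.taylor_X_pow] at this
      exact this
    have h1 : Q.coeff j = b j := by
      rw [hQ, Polynomial.coeff_add, hR, Polynomial.finsetSum_coeff]
      simp only [Polynomial.coeff_C_mul_X_pow]
      rw [if_neg j.2.ne, add_zero, Finset.sum_eq_single j]
      · simp
      · intro l _ hl
        rw [if_neg]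
        intro h; exact hl (Fin.ext h.symm)
      · simp
    rw [← h1, hQ2, Polynomial.coeff_C_mul, Polynomial.coeff_X_add_C_pow]
    ring

theorem mon_at_zero {n : ℕ} {γ : Fin n → ℕ} (hγ : γ ≠ 0) : mon γ (0 : X n) = 0 := by
  obtain ⟨i, hi⟩ := Function.ne_iff.1 hγ
  exact Finset.prod_eq_zero (Finset.mem_univ i) (by simpa using hi)

/-- Blow-up chart. -/
def chi {n : ℕ} (γ : Fin n → ℕ) (c : ℝ) (q : X n × ℝ) : X n × ℝ := (q.1, mon γ q.1 * (c + q.2))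

theorem chi_analytic {n : ℕ} (γ : Fin n → ℕ) (c : ℝ) : AnalyticAt ℝ (chi γ c) 0 := by
  refine AnalyticAt.prod analyticAt_fst ?_
  exact (an_comp analyticAt_fst rfl (mon_analytic γ 0)).mul (analyticAt_const.add analyticAt_snd)

theorem chi_zero {n : ℕ} {γ : Fin n → ℕ} (hγ : γ ≠ 0) (c : ℝ) : chi γ c 0 = 0 := by
  simp [chi, mon_at_zero hγ]

theorem res_chi {n : ℕ} {γ : Fin n → ℕ} (hγ : γ ≠ 0) (C : ℝ) (hC : 0 ≤ C) :
    ResOn {q : X n × ℝ | |q.2| ≤ C * |mon γ q.1|}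
      (fun χ : X n × ℝ → X n × ℝ => ∃ c, χ = chi γ c) := by
  classical
  intro N hN
  have hball : ∀ c : ℝ, ∃ r > 0, Metric.ball (0 : X n × ℝ) r ⊆ N (chi γ c) := fun c =>
    Metric.mem_nhds_iff.1 (hN _)
  choose r hr hrN using hball
  obtain ⟨T, hT⟩ := (isCompact_Icc (a := (-C : ℝ)) (b := C)).elim_finite_subcover
    (fun c => Metric.ball c (r c)) (fun c => Metric.isOpen_ball)
    (fun c _ => Set.mem_iUnion.2 ⟨c, Metric.mem_ball_self (hr c)⟩)
  refine ⟨(fun c => chi γ c) '' T, T.finite_toSet.image _, ?_, ?_⟩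
  · rintro _ ⟨c, _, rfl⟩
    exact ⟨chi_analytic γ c, chi_zero hγ c, c, rfl⟩
  · rw [mem_nhdsWithin_iff_eventually]
    have hev : ∀ᶠ q : X n × ℝ in 𝓝 0, ∀ c ∈ T, ‖q‖ < r c := by
      rw [Filter.eventually_all_finset]
      intro c _
      exact (continuous_norm.tendsto' (0 : X n × ℝ) 0 norm_zero).eventually (gt_mem_nhds (hr c))
    filter_upwards [hev] with q hq hqA
    have hqA : |q.2| ≤ C * |mon γ q.1| := hqA
    set t := q.2 / mon γ q.1 with ht
    have htm : mon γ q.1 * t = q.2 := by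
      by_cases h : mon γ q.1 = 0
      · rw [h] at hqA ⊢
        have : |q.2| ≤ 0 := by simpa using hqA
        simp [abs_nonpos_iff.1 this]
      · rw [ht]; field_simp
    have ht1 : t ∈ Set.Icc (-C) C := by
      rw [Set.mem_Icc, ← abs_le, ht, abs_div]
      exact div_le_of_le_mul₀ (abs_nonneg _) hC hqA
    obtain ⟨c, hcT, hct⟩ : ∃ c ∈ T, t ∈ Metric.ball c (r c) := by
      simpa using hT ht1
    simp only [Set.mem_iUnion, Set.mem_image]
    refine ⟨_, ⟨c, hcT, rfl⟩, (q.1, t - c), hrN c ?_, ?_⟩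
    · rw [mem_ball_zero_iff, Prod.norm_def, max_lt_iff]
      exact ⟨(norm_fst_le q).trans_lt (hq c hcT), by simpa [Real.dist_eq] using hct⟩
    · ext1
      · rfl
      · simp [chi, htm]

/-- Standard splitting of coordinates. -/
def spl (n : ℕ) : X (n + 1) → X n × ℝ := fun z => (fun i => z i.succ, z 0)

theorem spl_analytic (n : ℕ) (x : X (n + 1)) : AnalyticAt ℝ (spl n) x := by
  refine AnalyticAt.prod ?_ (analyticAt_coord _ _)
  exact analyticAt_pi' fun i => analyticAt_coord _ _

theorem spl_zero (n : ℕ) : spl n 0 = 0 := rfl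

theorem res_spl (n : ℕ) : Res (fun φ : X (n + 1) → X n × ℝ => φ = spl n) := by
  refine Res.single (spl n) (fun q => (Fin.cons q.2 q.1 : X (n + 1))) (spl_analytic n 0) rfl
    ?_ ?_ ?_ rfl
  · apply Continuous.continuousAt
    refine continuous_pi fun i => ?_
    refine Fin.cases ?_ (fun i => ?_) i
    · simpa using continuous_snd
    · simp only [Fin.cons_succ]; fun_prop
  · funext i
    refine Fin.cases ?_ (fun i => ?_) i <;> simp
  · filter_upwards with q
    simp [spl]

theorem mon_cons {n : ℕ} (k : ℕ) (γ : Fin n → ℕ) (z : X (n + 1)) :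
    mon (Fin.cons k γ : Fin (n + 1) → ℕ) z = (spl n z).2 ^ k * mon γ (spl n z).1 := by
  simp [mon, spl, Fin.prod_univ_succ]

theorem nc_spl {n : ℕ} {H : X n → ℝ} (h : NC H) : NC (fun z => H (spl n z).1) := by
  have hs : AnalyticAt ℝ (fun z => (spl n z).1) 0 :=
    an_comp (spl_analytic n 0) rfl analyticAt_fst
  rcases h with h | ⟨α, u, hu, hu0, he⟩
  · exact Or.inl (ev_comp hs rfl h)
  · refine Or.inr ⟨Fin.cons 0 α, fun z => u (spl n z).1, an_comp hs rfl hu, hu0, ?_⟩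
    filter_upwards [ev_comp hs rfl he] with z hz
    rw [hz, mon_cons]; simp

end Loja

namespace Loja

/-- `g` has order exactly `d` in the last variable. -/
def Ord {n : ℕ} (d : ℕ) (g : X n × ℝ → ℝ) : Prop := (∀ j < d, pd^[j] g 0 = 0) ∧ pd^[d] g 0 ≠ 0

theorem exists_ord {n : ℕ} {g : X n × ℝ → ℝ} {k : ℕ} (h : pd^[k] g 0 ≠ 0) :
    ∃ d ≤ k, Ord d g := by
  classical
  have hex : ∃ k, pd^[k] g 0 ≠ 0 := ⟨k, h⟩
  refine ⟨Nat.find hex, Nat.find_min' hex h, fun j hj => ?_, Nat.find_spec hex⟩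
  exact not_not.1 (Nat.find_min hex hj)

/-- Resolution statement for regular families of total order `< D`. -/
def SS (n D : ℕ) : Prop := ∀ (ι : Type) [Fintype ι] (h : ι → X n → ℝ) (g : ι → X n × ℝ → ℝ)
  (d : ι → ℕ), (∀ i, AnalyticAt ℝ (h i) 0) → (∀ i, AnalyticAt ℝ (g i) 0) →
  (∀ i, Ord (d i) (g i)) → ∑ i, d i < D →
  Res (fun φ : X (n + 1) → X n × ℝ => ∀ i, NC (fun z => h i (φ z).1 * g i (φ z)))

theorem nc_direct {n : ℕ} {d : ℕ} {b : Fin d → X n → ℝ} {u G : X n × ℝ → ℝ} {γ : Fin n → ℕ}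
    (hb : ∀ j, AnalyticAt ℝ (b j) 0) (hu : AnalyticAt ℝ u 0)
    (hG : ∀ᶠ q in 𝓝 0, G q =
      ∑ j : Fin d, mon ((d - (j : ℕ)) • γ) q.1 * b j q.1 * q.2 ^ (j : ℕ) + q.2 ^ d * u q)
    {τ : X (n + 1) → X n × ℝ} (hτ : AnalyticAt ℝ τ 0) (hτ0 : τ 0 = 0) {β : Fin (n + 1) → ℕ}
    (hx : MonAt β (fun z => (τ z).2)) {w : X (n + 1) → ℝ} (hw : AnalyticAt ℝ w 0)
    (hMw : ∀ᶠ z in 𝓝 0, mon γ (τ z).1 = (τ z).2 * w z)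
    (hne : u 0 + ∑ j : Fin d, b j 0 * w 0 ^ (d - (j : ℕ)) ≠ 0) :
    ∃ α, MonAt α (fun z => G (τ z)) := by
  have hτ1 : AnalyticAt ℝ (fun z => (τ z).1) 0 := an_comp hτ hτ0 analyticAt_fst
  have hτ10 : (τ 0).1 = 0 := by rw [hτ0]; rfl
  have hunit : MonAt 0 (fun z => u (τ z) + ∑ j : Fin d, b j (τ z).1 * w z ^ (d - (j : ℕ))) := by
    apply MonAt.unit
    · refine (an_comp hτ hτ0 hu).add ?_
      apply Finset.analyticAt_fun_sum
      intro j _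
      exact (an_comp hτ1 hτ10 (hb j)).mul (hw.pow _)
    · simpa [hτ0] using hne
  refine ⟨_, ((hx.pow d).mul hunit).congr ?_⟩
  filter_upwards [ev_comp hτ hτ0 hG, hMw] with z h1 h2
  rw [h1, mul_add, add_comm, Finset.mul_sum]
  congr 1
  refine Finset.sum_congr rfl fun j _ => ?_
  rw [mon_nsmul, h2, mul_pow]
  have : (τ z).2 ^ d = (τ z).2 ^ (d - (j : ℕ)) * (τ z).2 ^ (j : ℕ) := by
    rw [← pow_add, Nat.sub_add_cancel j.2.le]
  rw [this]; ring

theorem MonAt.div {n : ℕ} {α β : Fin n → ℕ} {f g : X n → ℝ} (hf : MonAt α f) (hg : MonAt β g)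
    (h : β ≤ α) : ∃ w, AnalyticAt ℝ w 0 ∧ ∀ᶠ z in 𝓝 0, f z = g z * w z := by
  obtain ⟨u, hu, hu0, h1⟩ := hf
  obtain ⟨v, hv, hv0, h2⟩ := hg
  refine ⟨fun z => mon (α - β) z * (u z / v z), (mon_analytic _ _).mul (hu.div hv hv0), ?_⟩
  filter_upwards [h1, h2, hv.continuousAt.eventually_ne hv0] with z e1 e2 e3
  rw [e1, e2]
  nth_rewrite 1 [← add_tsub_cancel_of_le h]
  rw [mon_add]
  field_simp

theorem stepB {n : ℕ} {ι : Type} [Fintype ι] (d : ι → ℕ) (hIH : SS n (∑ i, d i))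
    (H : ι → X n → ℝ) (hH : ∀ i, AnalyticAt ℝ (H i) 0) (hHN : ∀ i, NC (H i))
    (γ : Fin n → ℕ) (hγ : γ ≠ 0) (b : (i : ι) → Fin (d i) → X n → ℝ)
    (hb : ∀ i j, AnalyticAt ℝ (b i j) 0)
    (u G : ι → X n × ℝ → ℝ) (hu : ∀ i, AnalyticAt ℝ (u i) 0) (hu0 : ∀ i, u i 0 ≠ 0)
    (hG : ∀ i, ∀ᶠ q in 𝓝 0, G i q =
      ∑ j : Fin (d i), mon ((d i - (j : ℕ)) • γ) q.1 * b i j q.1 * q.2 ^ (j : ℕ) + q.2 ^ (d i) * u i q)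
    (i0 : ι) (j0 : Fin (d i0)) (hb0 : b i0 j0 0 ≠ 0)
    (i1 : ι) (j1 : Fin (d i1)) (hj1 : (j1 : ℕ) + 1 = d i1) (hb1 : b i1 j1 0 = 0) :
    Res (fun φ : X (n + 1) → X n × ℝ => ∀ i, NC (fun z => H i (φ z).1 * G i (φ z))) := by
  classical
  -- choice of the aperture
  obtain ⟨ε, hε, hεu⟩ : ∃ ε > 0, ∀ t : ℝ, |t| ≤ ε → ∀ i,
      u i 0 + ∑ j : Fin (d i), b i j 0 * t ^ (d i - (j : ℕ)) ≠ 0 := by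
    have : ∀ᶠ t : ℝ in 𝓝 0, ∀ i, u i 0 + ∑ j : Fin (d i), b i j 0 * t ^ (d i - (j : ℕ)) ≠ 0 := by
      rw [Filter.eventually_all]
      intro i
      have hc : Continuous (fun t : ℝ => u i 0 + ∑ j : Fin (d i), b i j 0 * t ^ (d i - (j : ℕ))) := by
        fun_prop
      apply hc.continuousAt.eventually_ne
      rw [Finset.sum_eq_zero]
      · simpa using hu0 i
      · intro j _
        have := j.2
        rw [zero_pow (by omega), mul_zero]
    obtain ⟨ε, hε, h⟩ := Metric.eventually_nhds_iff_ball.1 this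
    refine ⟨ε / 2, by positivity, fun t ht => h t ?_⟩
    rw [mem_ball_zero_iff, Real.norm_eq_abs]; linarith
  set C := ε⁻¹ with hC
  have hCpos : 0 < C := by positivity
  refine ResOn.region (A := {q : X n × ℝ | |q.2| ≤ C * |mon γ q.1|}) ?_ ?_
  · -- blow-up charts
    refine (res_chi hγ C hCpos.le).bind ?_
    rintro _ hχ hχ0 ⟨c, rfl⟩
    set G' : ι → X n × ℝ → ℝ := fun i q =>
      ∑ j : Fin (d i), b i j q.1 * (c + q.2) ^ (j : ℕ) + (c + q.2) ^ (d i) * u i (chi γ c q) with hG'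
    have hG'an : ∀ i, AnalyticAt ℝ (G' i) 0 := by
      intro i
      have h2 : AnalyticAt ℝ (fun q : X n × ℝ => c + q.2) 0 := analyticAt_const.add analyticAt_snd
      refine AnalyticAt.add ?_ ((h2.pow _).mul (an_comp hχ hχ0 (hu i)))
      apply Finset.analyticAt_fun_sum
      intro j _
      exact (an_comp analyticAt_fst rfl (hb i j)).mul (h2.pow _)
    have hpd : ∀ i k, pd^[k] (G' i) 0 = iteratedDeriv k (fun t => G' i (0, t)) 0 := fun i k =>
      pd_iter_eq (hG'an i) k
    have hform : ∀ i t, G' i (0, t) =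
        ∑ j : Fin (d i), b i j 0 * (c + t) ^ (j : ℕ) + (c + t) ^ (d i) * u i 0 := by
      intro i t
      have : chi γ c ((0, t) : X n × ℝ) = 0 := by simp [chi, mon_at_zero hγ]
      simp only [hG', this]
    have hkey := fun i => poly_key (d i) (fun j => b i j 0) (u i 0) (hu0 i) c _ (hform i)
    have hord : ∀ i, ∃ d' ≤ d i, Ord d' (G' i) := by
      intro i
      apply exists_ord
      rw [hpd]; exact (hkey i).1
    choose d' hd' hO using hord
    have hstrict : ∃ i, d' i < d i := by
      have hall : ∀ i, d' i = d i → ∀ j, b i j 0 =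
          u i 0 * ((d i).choose j) * (-c) ^ (d i - (j : ℕ)) := by
        intro i hi
        refine (hkey i).2 ?_
        intro k hk
        rw [← hpd]
        exact (hO i).1 k (by omega)
      by_cases hc : c = 0
      · refine ⟨i0, lt_of_le_of_ne (hd' i0) fun h => hb0 ?_⟩
        rw [hall i0 h j0, hc, neg_zero, zero_pow (by have := j0.2; omega), mul_zero]
      · refine ⟨i1, lt_of_le_of_ne (hd' i1) fun h => ?_⟩
        have h2 := hall i1 h j1
        rw [hb1] at h2
        have h3 : ((d i1).choose j1 : ℝ) ≠ 0 := by
          exact_mod_cast (Nat.choose_pos j1.2.le).ne'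
        exact (mul_ne_zero (mul_ne_zero (hu0 i1) h3) (pow_ne_zero _ (neg_ne_zero.2 hc))) h2.symm
    have hsum : ∑ i, d' i < ∑ i, d i :=
      Finset.sum_lt_sum (fun i _ => hd' i) ⟨hstrict.choose, Finset.mem_univ _, hstrict.choose_spec⟩
    refine (hIH ι (fun i y => H i y * mon γ y ^ (d i)) G' d'
      (fun i => (hH i).mul ((mon_analytic γ 0).pow _)) hG'an hO hsum).mono' ?_
    intro ψ hψ hψ0 hNC i
    refine (hNC i).congr ?_
    have h1 := ev_comp hψ hψ0 (ev_comp hχ hχ0 (hG i))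
    filter_upwards [h1] with z hz
    simp only [Function.comp]
    rw [hz, hG']
    simp only [chi]
    rw [mul_assoc (H i _)]
    congr 1
    rw [mul_add (mon γ (ψ z).1 ^ d i), Finset.mul_sum]
    congr 1
    · refine Finset.sum_congr rfl fun j _ => ?_
      rw [mon_nsmul, mul_pow]
      have : mon γ (ψ z).1 ^ d i = mon γ (ψ z).1 ^ (d i - (j : ℕ)) * mon γ (ψ z).1 ^ (j : ℕ) := by
        rw [← pow_add, Nat.sub_add_cancel j.2.le]
      rw [this]; ring
    · rw [mul_pow]; ring
  · -- complementary region
    refine (res_spl n).bind ?_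
    rintro _ hs hs0 rfl
    refine (toric_pair _ (Fin.cons 0 γ : Fin (n + 1) → ℕ) (Fin.cons 1 0) le_rfl).mono' ?_
    rintro τ hτ hτ0 ⟨A, hA, hc⟩
    have hM : MonAt (tr A (Fin.cons 0 γ)) (fun z => mon γ ((spl n ∘ τ) z).1) := by
      refine (hA.mon_comp _).congr ?_
      filter_upwards with z
      simp [mon_cons]
    have hx : MonAt (tr A (Fin.cons 1 0)) (fun z => ((spl n ∘ τ) z).2) := by
      refine (hA.mon_comp _).congr ?_
      filter_upwards with z
      simp [mon_cons, mon_zero]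
    have hT : AnalyticAt ℝ (spl n ∘ τ) 0 := an_comp hτ hτ0 hs
    have hT0 : (spl n ∘ τ) 0 = 0 := by simp [hτ0, hs0]
    have hdir : ∀ w : X (n + 1) → ℝ, AnalyticAt ℝ w 0 → |w 0| ≤ ε →
        (∀ᶠ z in 𝓝 0, mon γ ((spl n ∘ τ) z).1 = ((spl n ∘ τ) z).2 * w z) →
        ∀ i, NC (fun z => H i ((spl n ∘ τ) z).1 * G i ((spl n ∘ τ) z)) := by
      intro w hw hw0 hMw i
      obtain ⟨α, hα⟩ := nc_direct (hb i) (hu i) (hG i) hT hT0 hx hw hMw (hεu _ hw0 i)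
      exact (hA.nc_comp hτ hτ0 (nc_spl (hHN i))).mul_mon hα
    rcases hc with hc | hc
    · -- x = m * w
      obtain ⟨w, hw, hxw⟩ := hx.div hM hc
      by_cases hw0 : |w 0| < C
      · right
        have : ∀ᶠ z in 𝓝 0, |w z| < C := hw.continuousAt.abs.eventually (gt_mem_nhds hw0)
        filter_upwards [this, hxw] with z h1 h2
        change |((spl n ∘ τ) z).2| ≤ C * |mon γ ((spl n ∘ τ) z).1|
        rw [h2, abs_mul, mul_comm]
        exact mul_le_mul_of_nonneg_right h1.le (abs_nonneg _)
      · left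
        rw [not_lt] at hw0
        have hwne : w 0 ≠ 0 := by
          intro h; rw [h, abs_zero] at hw0; linarith
        refine hdir (fun z => (w z)⁻¹) (hw.inv hwne) ?_ ?_
        · rw [abs_inv, ← inv_inv ε]
          exact inv_anti₀ hCpos hw0
        · filter_upwards [hxw, hw.continuousAt.eventually_ne hwne] with z h1 h2
          rw [h1]; field_simp
    · obtain ⟨w, hw, hxw⟩ := hM.div hx hc
      by_cases hw0 : |w 0| ≤ ε
      · left
        exact hdir w hw hw0 hxw
      · right
        rw [not_le] at hw0
        have : ∀ᶠ z in 𝓝 0, ε < |w z| := hw.continuousAt.abs.eventually (lt_mem_nhds hw0)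
        filter_upwards [this, hxw] with z h1 h2
        change |((spl n ∘ τ) z).2| ≤ C * |mon γ ((spl n ∘ τ) z).1|
        rw [h2, abs_mul, hC, inv_mul_eq_div, le_div_iff₀ hε]
        exact mul_le_mul_of_nonneg_left h1.le (abs_nonneg _)

end Loja

namespace Loja

theorem emb_analytic (n : ℕ) : AnalyticAt ℝ (fun y : X n => ((y, 0) : X n × ℝ)) 0 :=
  analyticAt_id.prod analyticAt_const

theorem step {n : ℕ} (hM : MM n) {ι : Type} [Fintype ι] (d : ι → ℕ) (hIH : SS n (∑ i, d i))
    (h : ι → X n → ℝ) (g : ι → X n × ℝ → ℝ) (hh : ∀ i, AnalyticAt ℝ (h i) 0)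
    (hg : ∀ i, AnalyticAt ℝ (g i) 0) (hO : ∀ i, Ord (d i) (g i))
    (hsp : (∃ i, 0 < d i ∧ ∀ᶠ y in 𝓝 (0 : X n), pd^[d i - 1] (g i) (y, 0) = 0) ∨ ∀ i, d i = 0) :
    Res (fun φ : X (n + 1) → X n × ℝ => ∀ i, NC (fun z => h i (φ z).1 * g i (φ z))) := by
  classical
  choose u hu hug hu0 using fun i => taylor (d i) (g i) (hg i)
  have hu00 : ∀ i, u i 0 ≠ 0 := by
    intro i h0
    have h1 := (hu0 i).self_of_nhds
    refine (hO i).2 ?_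
    have h2 : (d i).factorial * u i 0 = pd^[d i] (g i) 0 := h1
    rw [← h2, h0, mul_zero]
  set a : (Σ i, Fin (d i)) → X n → ℝ := fun p y =>
    pd^[(p.2 : ℕ)] (g p.1) (y, 0) / ((p.2 : ℕ).factorial : ℝ) with ha
  have haan : ∀ p, AnalyticAt ℝ (a p) 0 := by
    intro p
    have h1 : AnalyticAt ℝ (pd^[(p.2 : ℕ)] (g p.1)) 0 := pd_iter_analytic (hg p.1) _
    exact (an_comp (emb_analytic n) rfl h1).div_const
  have ha0 : ∀ p, a p 0 = 0 := by
    intro p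
    have := (hO p.1).1 p.2 p.2.2
    have h2 : pd^[(p.2 : ℕ)] (g p.1) ((0 : X n), (0 : ℝ)) = 0 := this
    simp only [ha]
    rw [h2, zero_div]
  have hug' : ∀ i, ∀ᶠ q in 𝓝 (0 : X n × ℝ), g i q =
      ∑ j : Fin (d i), a ⟨i, j⟩ q.1 * q.2 ^ (j : ℕ) + q.2 ^ (d i) * u i q := by
    intro i
    filter_upwards [hug i] with q hq
    rw [hq, Finset.sum_range]
  have hres := mprime hM h a (fun p => d p.1 - (p.2 : ℕ)) (fun p => by have := p.2.2; omega) hh haan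
  have hres2 : Res (fun Φ : X n × ℝ → X n × ℝ => ∃ φ : X n → X n, AnalyticAt ℝ φ 0 ∧ φ 0 = 0 ∧
      (Φ = fun p => (φ p.1, p.2)) ∧ (∀ k, NC (fun z => h k (φ z))) ∧
      ((∀ i, ∀ᶠ y in 𝓝 0, a i (φ y) = 0) ∨ ∃ (γ : Fin n → ℕ) (b : (Σ i, Fin (d i)) → X n → ℝ),
        (∀ i, AnalyticAt ℝ (b i) 0) ∧
        (∀ i, ∀ᶠ y in 𝓝 0, a i (φ y) = mon ((d i.1 - (i.2 : ℕ)) • γ) y * b i y) ∧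
        (∀ i, (∀ᶠ y in 𝓝 0, a i (φ y) = 0) → b i = 0) ∧ ∃ i, b i 0 ≠ 0)) := by
    refine hres.prodId ?_
    intro φ hφ hφ0 hP
    exact ⟨φ, hφ, hφ0, rfl, hP⟩
  refine hres2.bind ?_
  rintro Φ hΦ hΦ0 ⟨φ, hφ, hφ0, hΦe, hNC, hcase⟩
  have hform : ∀ i, ∀ᶠ q in 𝓝 (0 : X n × ℝ), g i (Φ q) =
      ∑ j : Fin (d i), a ⟨i, j⟩ (φ q.1) * q.2 ^ (j : ℕ) + q.2 ^ (d i) * u i (Φ q) := by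
    intro i
    filter_upwards [ev_comp hΦ hΦ0 (hug' i)] with q hq
    rw [hq]
    simp only [hΦe]
  have huan : ∀ i, AnalyticAt ℝ (fun q => u i (Φ q)) 0 := fun i => an_comp hΦ hΦ0 (hu i)
  have hune : ∀ i, u i (Φ 0) ≠ 0 := fun i => by rw [hΦ0]; exact hu00 i
  have hfst : AnalyticAt ℝ (Prod.fst : X n × ℝ → X n) 0 := analyticAt_fst
  rcases hcase with hz | ⟨γ, b, hban, hab, hbz, ⟨⟨i0, j0⟩, hb0⟩⟩
  · refine (res_spl n).mono' ?_
    rintro _ hs hs0 rfl i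
    have hx : MonAt (Fin.cons 1 0) (fun z => (spl n z).2) := by
      refine ⟨fun _ => 1, analyticAt_const, one_ne_zero, ?_⟩
      filter_upwards with z
      simp [mon_cons, mon_zero]
    have hun : MonAt 0 (fun z => u i (Φ (spl n z))) :=
      MonAt.unit (an_comp hs hs0 (huan i)) (by rw [hs0]; exact hune i)
    have h1 := (nc_spl (hNC i)).mul_mon ((hx.pow (d i)).mul hun)
    refine h1.congr ?_
    have hz' : ∀ᶠ q in 𝓝 (0 : X n × ℝ), ∀ j : Fin (d i), a ⟨i, j⟩ (φ q.1) = 0 := by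
      rw [Filter.eventually_all]
      intro j
      exact ev_comp hfst rfl (hz ⟨i, j⟩)
    filter_upwards [ev_comp hs hs0 (hform i), ev_comp hs hs0 hz'] with z e1 e2
    simp only [Function.comp]
    rw [e1, Finset.sum_eq_zero, zero_add]
    · simp only [hΦe]
    · intro j _
      rw [e2 j, zero_mul]
  · have hγ : γ ≠ 0 := by
      rintro rfl
      have := (hab ⟨i0, j0⟩).self_of_nhds
      rw [hφ0, ha0, smul_zero, mon_zero, one_mul] at this
      exact hb0 this.symm
    have hG : ∀ i, ∀ᶠ q in 𝓝 (0 : X n × ℝ), g i (Φ q) =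
      ∑ j : Fin (d i), mon ((d i - (j : ℕ)) • γ) q.1 * b ⟨i, j⟩ q.1 * q.2 ^ (j : ℕ)
        + q.2 ^ (d i) * u i (Φ q) := by
      intro i
      have hz' : ∀ᶠ q in 𝓝 (0 : X n × ℝ), ∀ j : Fin (d i),
          a ⟨i, j⟩ (φ q.1) = mon ((d i - (j : ℕ)) • γ) q.1 * b ⟨i, j⟩ q.1 := by
        rw [Filter.eventually_all]
        intro j
        exact ev_comp hfst rfl (hab ⟨i, j⟩)
      filter_upwards [hform i, hz'] with q e1 e2
      rw [e1]
      simp only [e2]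
    rcases hsp with ⟨i1, hd1, hi1⟩ | hd
    · have hb1 : b ⟨i1, ⟨d i1 - 1, by omega⟩⟩ = 0 := by
        apply hbz
        have h3 := ev_comp hφ hφ0 hi1
        filter_upwards [h3] with y hy
        simp only [ha]
        rw [hy, zero_div]
      have := stepB d hIH (fun i y => h i (φ y)) (fun i => an_comp hφ hφ0 (hh i)) hNC γ hγ
        (fun i j => b ⟨i, j⟩) (fun i j => hban _) (fun i q => u i (Φ q)) (fun i q => g i (Φ q))
        huan hune hG i0 j0 hb0 i1 ⟨d i1 - 1, by omega⟩ (by simp; omega) (by rw [hb1]; rfl)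
      refine this.mono' ?_
      intro ψ _ _ hψ i
      refine (hψ i).congr ?_
      filter_upwards with z
      simp only [Function.comp, hΦe]
    · have := j0.2
      have := hd i0
      omega

theorem SS.mono {n D D' : ℕ} (h : SS n D) (hD : D' ≤ D) : SS n D' :=
  fun ι _ hh g d h1 h2 h3 h4 => h ι hh g d h1 h2 h3 (lt_of_lt_of_le h4 hD)

theorem ss_all {n : ℕ} (hM : MM n) (D : ℕ) : SS n D := by
  induction D with
  | zero => intro ι _ h g d _ _ _ hlt; exact absurd hlt (Nat.not_lt_zero _)
  | succ D ih =>
    intro ι _ h g d hh hg hO hlt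
    have hIH : SS n (∑ i, d i) := ih.mono (by omega)
    by_cases hd : ∀ i, d i = 0
    · exact step hM d hIH h g hh hg hO (Or.inr hd)
    · push Not at hd
      obtain ⟨i1, hi1⟩ := hd
      obtain ⟨k, hk⟩ := Nat.exists_eq_succ_of_ne_zero hi1
      obtain ⟨η, hη, hη0, hηe⟩ := exists_implicit (pd^[k] (g i1)) (pd_iter_analytic (hg i1) k)
        ((hO i1).1 k (by omega)) (by
          rw [← Function.iterate_succ_apply' pd k]
          have := (hO i1).2
          rwa [hk] at this)
      have hηf : AnalyticAt ℝ (fun q : X n × ℝ => η q.1) 0 := an_comp analyticAt_fst rfl hη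
      have hσ : AnalyticAt ℝ (fun q : X n × ℝ => (q.1, q.2 + η q.1)) 0 :=
        analyticAt_fst.prod (analyticAt_snd.add hηf)
      have hσ0 : (fun q : X n × ℝ => (q.1, q.2 + η q.1)) 0 = 0 := by
        simp [hη0]
      have hsres : Res (fun σ : X n × ℝ → X n × ℝ => σ = fun q => (q.1, q.2 + η q.1)) := by
        refine Res.single _ (fun q => (q.1, q.2 - η q.1)) hσ hσ0 ?_ ?_ ?_ rfl
        · exact (analyticAt_fst.prod (analyticAt_snd.sub hηf)).continuousAt
        · simp [hη0]
        · filter_upwards with q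
          simp
      refine hsres.bind ?_
      rintro _ _ _ rfl
      refine (step hM d hIH h (fun i q => g i (q.1, q.2 + η q.1)) hh
        (fun i => an_comp hσ hσ0 (hg i)) ?_ (Or.inl ⟨i1, by omega, ?_⟩)).mono' ?_
      · intro i
        have hsh : ∀ j, pd^[j] (fun q : X n × ℝ => g i (q.1, q.2 + η q.1)) 0 = pd^[j] (g i) 0 := by
          intro j
          have := (pd_iter_shift (hg i) hη hη0 j).self_of_nhds
          rw [this]
          simp only [Prod.fst_zero, Prod.snd_zero, hη0, add_zero]
          rfl
        refine ⟨fun j hj => ?_, ?_⟩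
        · rw [hsh]; exact (hO i).1 j hj
        · rw [hsh]; exact (hO i).2
      · have h1 := ev_comp (emb_analytic n) rfl (pd_iter_shift (hg i1) hη hη0 k)
        filter_upwards [h1, hηe] with y e1 e2
        rw [hk, Nat.succ_sub_one, e1]
        simpa using e2
      · intro ψ _ _ hψ
        exact hψ

end Loja

namespace Loja

theorem mm_zero : MM 0 := by
  intro ι _ g hg
  refine Res.pure ?_
  intro i
  by_cases h : g i 0 = 0
  · left
    filter_upwards with y
    rw [Subsingleton.elim (id y) 0, h]
  · exact Or.inr ⟨0, MonAt.unit (hg i) h⟩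

theorem exists_iteratedDeriv_ne {F : ℝ → ℝ} (hF : AnalyticAt ℝ F 0)
    (h : ¬ ∀ᶠ t in 𝓝 0, F t = 0) : ∃ k, iteratedDeriv k F 0 ≠ 0 := by
  by_contra hc
  push Not at hc
  apply h
  have h1 := hF.hasFPowerSeriesAt
  have h2 : (FormalMultilinearSeries.ofScalars ℝ
      (fun n => iteratedDeriv n F 0 / (n.factorial : ℝ))) = 0 := by
    ext n
    simp [FormalMultilinearSeries.ofScalars, hc]
  rw [h2] at h1
  exact h1.eventually_eq_zero

theorem freq_ne {E ι : Type} [NormedAddCommGroup E] [NormedSpace ℝ E] (s : Finset ι) (g : ι → E → ℝ)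
    {B : Set E} (hB : IsOpen B) (hBc : IsPreconnected B) (h0 : (0 : E) ∈ B)
    (hg : ∀ i, AnalyticOnNhd ℝ (g i) B) (hne : ∀ i, ¬ ∀ᶠ x in 𝓝 0, g i x = 0) :
    ∀ x ∈ B, ∃ᶠ y in 𝓝 x, ∀ i ∈ s, g i y ≠ 0 := by
  classical
  have hne' : ∀ i, ∀ x ∈ B, ∃ᶠ y in 𝓝 x, g i y ≠ 0 := by
    intro i x hx hc
    apply hne i
    have hc' : g i =ᶠ[𝓝 x] 0 := by
      filter_upwards [hc] with y hy
      simpa using hy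
    have := (hg i).eqOn_zero_of_preconnected_of_eventuallyEq_zero hBc hx hc'
    filter_upwards [hB.mem_nhds h0] with y hy
    exact this hy
  induction s using Finset.induction_on with
  | empty => intro x _; simp [Filter.Frequently]; exact (inferInstance : (𝓝 x).NeBot).ne
  | insert a s ha ih =>
    intro x hx
    rw [← frequently_frequently_nhds]
    refine ((ih x hx).and_eventually (hB.mem_nhds hx)).mono ?_
    rintro y ⟨hy, hyB⟩
    have hev : ∀ᶠ w in 𝓝 y, ∀ i ∈ s, g i w ≠ 0 := by
      rw [Filter.eventually_all_finset]
      intro i hi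
      exact (hg i y hyB).continuousAt.eventually_ne (hy i hi)
    refine ((hne' a y hyB).and_eventually hev).mono ?_
    rintro w ⟨h1, h2⟩ i hi
    rcases Finset.mem_insert.1 hi with rfl | hi
    · exact h1
    · exact h2 i hi

theorem exists_dir {n : ℕ} {ι : Type} [Fintype ι] (g : ι → X (n + 1) → ℝ)
    (hg : ∀ i, AnalyticAt ℝ (g i) 0) (hne : ∀ i, ¬ ∀ᶠ x in 𝓝 0, g i x = 0) :
    ∃ v : X (n + 1), v 0 ≠ 0 ∧ ∀ i, ¬ ∀ᶠ t : ℝ in 𝓝 0, g i (t • v) = 0 := by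
  classical
  have hev : ∀ᶠ x in 𝓝 (0 : X (n + 1)), ∀ i, AnalyticAt ℝ (g i) x := by
    rw [Filter.eventually_all]
    exact fun i => (hg i).eventually_analyticAt
  obtain ⟨r, hr, hball⟩ := Metric.eventually_nhds_iff_ball.1 hev
  have hconv : Convex ℝ (Metric.ball (0 : X (n + 1)) r) := convex_ball _ _
  have hcoord : ¬ ∀ᶠ x in 𝓝 (0 : X (n + 1)), x 0 = 0 := by
    intro h
    obtain ⟨ρ, hρ, hb⟩ := Metric.eventually_nhds_iff_ball.1 h
    have := hb (fun _ => ρ / 2) (by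
        rw [mem_ball_zero_iff]
        refine (pi_norm_const_le (ρ / 2)).trans_lt ?_
        rw [Real.norm_eq_abs, abs_of_pos (by positivity)]; linarith)
    simp at this
    linarith
  have hf := freq_ne (Finset.univ : Finset (Option ι))
    (fun o => o.elim (fun x : X (n + 1) => x 0) g) Metric.isOpen_ball hconv.isPreconnected
    (Metric.mem_ball_self hr) (by
      rintro (_ | i) x hx
      · exact analyticAt_coord 0 x
      · exact hball x hx i) (by
      rintro (_ | i)
      · exact hcoord
      · exact hne i) 0 (Metric.mem_ball_self hr)
  obtain ⟨v, hv, hvB⟩ := (hf.and_eventually (Metric.ball_mem_nhds _ hr)).exists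
  refine ⟨v, hv none (by simp), fun i hz => hv (some i) (by simp) ?_⟩
  have hlin : Continuous (fun t : ℝ => t • v) := by fun_prop
  set U : Set ℝ := (fun t : ℝ => t • v) ⁻¹' Metric.ball (0 : X (n + 1)) r with hU
  have hUc : Convex ℝ U := hconv.is_linear_preimage (IsLinearMap.isLinearMap_smul' v)
  have hUan : AnalyticOnNhd ℝ (fun t : ℝ => g i (t • v)) U := by
    intro t ht
    have h1 : AnalyticAt ℝ (fun t : ℝ => t • v) t := analyticAt_id.smul analyticAt_const
    exact AnalyticAt.comp (g := g i) (hball _ ht i) h1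
  have := hUan.eqOn_zero_of_preconnected_of_eventuallyEq_zero hUc.isPreconnected
    (z₀ := 0) (by simp [hU, hr]) hz (x := 1) (by simpa [hU] using hvB)
  simpa using this

theorem mm_succ {n : ℕ} (hM : MM n) : MM (n + 1) := by
  classical
  intro ι _ g hg
  set g' : ι → X (n + 1) → ℝ := fun i => if (∀ᶠ x in 𝓝 0, g i x = 0) then (fun _ => 1) else g i
    with hg'
  have hg'an : ∀ i, AnalyticAt ℝ (g' i) 0 := by
    intro i
    simp only [hg']
    split_ifs
    · exact analyticAt_const
    · exact hg i
  have hg'ne : ∀ i, ¬ ∀ᶠ x in 𝓝 0, g' i x = 0 := by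
    intro i
    simp only [hg']
    split_ifs with h
    · intro h2
      have := h2.self_of_nhds
      exact one_ne_zero this
    · exact h
  obtain ⟨v, hv0, hv⟩ := exists_dir g' hg'an hg'ne
  set L : X n × ℝ → X (n + 1) := fun q => (Fin.cons 0 q.1 : X (n + 1)) + q.2 • v with hL
  have hLan : AnalyticAt ℝ L 0 := by
    apply analyticAt_pi'
    intro i
    refine Fin.cases ?_ (fun i => ?_) i
    · simp only [hL, Pi.add_apply, Fin.cons_zero, Pi.smul_apply, smul_eq_mul]
      exact analyticAt_const.add (analyticAt_snd.mul analyticAt_const)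
    · simp only [hL, Pi.add_apply, Fin.cons_succ, Pi.smul_apply, smul_eq_mul]
      exact (an_comp analyticAt_fst rfl (analyticAt_coord i 0)).add
        (analyticAt_snd.mul analyticAt_const)
  have hL1 : ∀ t : ℝ, L (0, t) = t • v := by
    intro t
    funext i
    refine Fin.cases ?_ (fun i => ?_) i <;> simp [hL]
  have hL0 : L 0 = 0 := by
    have := hL1 0
    rw [zero_smul] at this
    exact this
  have hLres : Res (fun φ : X n × ℝ → X (n + 1) => φ = L) := by
    refine Res.single L (fun z => (fun i => z i.succ - z 0 / v 0 * v i.succ, z 0 / v 0)) hLan hL0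
      ?_ ?_ ?_ rfl
    · apply Continuous.continuousAt
      fun_prop
    · ext <;> simp
    · filter_upwards with z
      funext i
      refine Fin.cases ?_ (fun i => ?_) i
      · simp [hL]; field_simp
      · simp [hL]
  refine hLres.bind ?_
  rintro _ _ _ rfl
  have hGan : ∀ i, AnalyticAt ℝ (fun q => g' i (L q)) 0 := fun i => an_comp hLan hL0 (hg'an i)
  have hord : ∀ i, ∃ d, Ord d (fun q => g' i (L q)) := by
    intro i
    have h1 : AnalyticAt ℝ (fun t : ℝ => g' i (t • v)) 0 := by
      have h1 : AnalyticAt ℝ (fun t : ℝ => t • v) 0 := analyticAt_id.smul analyticAt_const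
      exact an_comp h1 (zero_smul _ _) (hg'an i)
    obtain ⟨k, hk⟩ := exists_iteratedDeriv_ne h1 (hv i)
    have h2 : pd^[k] (fun q => g' i (L q)) 0 = iteratedDeriv k (fun t => g' i (L (0, t))) 0 :=
      pd_iter_eq (hGan i) k
    simp only [hL1] at h2
    obtain ⟨d, _, hd⟩ := exists_ord (k := k) (by rw [h2]; exact hk)
    exact ⟨d, hd⟩
  choose d hd using hord
  refine (ss_all hM (∑ i, d i + 1) ι (fun _ _ => 1) (fun i q => g' i (L q)) d
    (fun _ => analyticAt_const) hGan hd (Nat.lt_succ_self _)).mono' ?_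
  intro φ hφ hφ0 hNC i
  by_cases hz : ∀ᶠ x in 𝓝 0, g i x = 0
  · left
    exact ev_comp hφ hφ0 (ev_comp hLan hL0 hz)
  · have := hNC i
    simp only [hg', if_neg hz, one_mul] at this
    exact this

theorem mm_all (n : ℕ) : MM n := by
  induction n with
  | zero => exact mm_zero
  | succ n ih => exact mm_succ ih

end Loja

namespace Loja

/-- Gradient inequality near the origin. -/
def GI {E : Type} [NormedAddCommGroup E] [NormedSpace ℝ E] (g : E → ℝ) : Prop :=
  ∃ C > (0:ℝ), ∃ β ∈ Set.Ioo (0:ℝ) 1, ∀ᶠ y in 𝓝 (0:E), C * |g y| ^ β ≤ ‖fderiv ℝ g y‖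

theorem fderiv_mon {n : ℕ} (α : Fin n → ℕ) (y : X n) (i : Fin n) :
    fderiv ℝ (mon α) y (Pi.single i (y i)) = α i * mon α y := by
  have h1 : HasFDerivAt (mon α) (fderiv ℝ (mon α) y) y :=
    (mon_analytic α y).differentiableAt.hasFDerivAt
  have h2 : HasDerivAt (fun t : ℝ => y + t • (Pi.single i (y i) : X n)) (Pi.single i (y i)) 0 := by
    have := ((hasDerivAt_id (0:ℝ)).smul_const (Pi.single i (y i) : X n)).const_add y
    simpa using this
  have h1' : HasFDerivAt (mon α) (fderiv ℝ (mon α) y)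
      (y + (0:ℝ) • (Pi.single i (y i) : X n)) := by simpa using h1
  have h3 := h1'.comp_hasDerivAt (0:ℝ) h2
  have h4 : (mon α ∘ fun t : ℝ => y + t • (Pi.single i (y i) : X n)) =
      fun t => (1 + t) ^ α i * mon α y := by
    funext t
    simp only [Function.comp, mon]
    rw [← Finset.mul_prod_erase _ _ (Finset.mem_univ i),
      ← Finset.mul_prod_erase _ (fun j => y j ^ α j) (Finset.mem_univ i), ← mul_assoc, ← mul_pow]
    congr 1
    · simp; ring
    · refine Finset.prod_congr rfl fun j hj => ?_
      have : j ≠ i := Finset.ne_of_mem_erase hj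
      simp [this]
  rw [h4] at h3
  have h5 : HasDerivAt (fun t : ℝ => (1 + t) ^ α i * mon α y) (α i * mon α y) 0 := by
    have := ((((hasDerivAt_id (0:ℝ)).const_add 1).pow (α i)).mul_const (mon α y))
    simpa using this
  exact h3.unique h5

theorem gi_mon {n : ℕ} {α : Fin n → ℕ} {g : X n → ℝ} (h : MonAt α g) (h0 : g 0 = 0) : GI g := by
  obtain ⟨u, hu, hu0, hgu⟩ := h
  have hα : α ≠ 0 := by
    rintro rfl
    have := hgu.self_of_nhds
    rw [h0, mon_zero, one_mul] at this
    exact hu0 this.symm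
  have hsupp : (Finset.univ.filter fun i => α i ≠ 0).Nonempty := by
    by_contra hc
    rw [Finset.not_nonempty_iff_eq_empty, Finset.filter_eq_empty_iff] at hc
    apply hα
    funext i
    simpa using hc (Finset.mem_univ i)
  set k := ∑ i, α i with hk
  set a := |u 0| with ha
  have ha0 : 0 < a := abs_pos.2 hu0
  set K := ‖fderiv ℝ u 0‖ + 1 with hK
  have hK0 : 0 < K := by positivity
  have e1 : ∀ᶠ y in 𝓝 (0 : X n), a / 2 < |u y| :=
    hu.continuousAt.abs.eventually (lt_mem_nhds (by linarith))
  have e2 : ∀ᶠ y in 𝓝 (0 : X n), |u y| < a + 1 :=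
    hu.continuousAt.abs.eventually (gt_mem_nhds (by linarith))
  have e3 : ∀ᶠ y in 𝓝 (0 : X n), ‖fderiv ℝ u y‖ < K :=
    hu.fderiv.continuousAt.norm.eventually (gt_mem_nhds (by linarith))
  have e4 : ∀ᶠ y in 𝓝 (0 : X n), ‖y‖ < min 1 (a / (4 * K)) := by
    have : ContinuousAt (fun y : X n => ‖y‖) 0 := continuous_norm.continuousAt
    exact this.eventually (gt_mem_nhds (by simp only [norm_zero]; positivity))
  set β : ℝ := (k + 1) / (k + 2) with hβ
  have hβ0 : 0 < β := by positivity
  have hβ1 : β < 1 := by rw [hβ, div_lt_one (by positivity)]; linarith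
  refine ⟨a / 4 / (a + 1) ^ β, by positivity, β, ⟨hβ0, hβ1⟩, ?_⟩
  filter_upwards [e1, e2, e3, e4, hu.eventually_analyticAt, hgu.eventually_nhds, hgu] with
    y h1 h2 h3 h4 h5 h6 h7
  set m := |mon α y| with hm
  have hm0 : 0 ≤ m := abs_nonneg _
  have hgm : |g y| = m * |u y| := by rw [h7, abs_mul]
  obtain ⟨i, hi, hmin⟩ := Finset.exists_min_image _ (fun i => |y i|) hsupp
  have hi' : α i ≠ 0 := by simpa using hi
  have hyi : |y i| ≤ ‖y‖ := norm_le_pi_norm y i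
  have hy1 : |y i| ≤ 1 := by have := lt_min_iff.1 h4; linarith
  have hyK : |y i| * K ≤ a / 4 := by
    have := (lt_min_iff.1 h4).2
    rw [lt_div_iff₀ (by positivity)] at this
    nlinarith
  have hw : |y i| ^ k ≤ m := by
    rw [hm, mon, Finset.abs_prod, hk, ← Finset.prod_pow_eq_pow_sum]
    refine Finset.prod_le_prod (fun _ _ => by positivity) fun j _ => ?_
    rw [abs_pow]
    by_cases hj : α j = 0
    · simp [hj]
    · exact pow_le_pow_left₀ (abs_nonneg _) (hmin j (by simpa using hj)) _
  have hw2 : |y i| ^ (k + 2) ≤ m :=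
    (pow_le_pow_of_le_one (abs_nonneg _) hy1 (by omega)).trans hw
  have hw3 : |y i| ≤ m ^ ((1:ℝ) / (k + 2)) := by
    have := Real.rpow_le_rpow (by positivity) hw2 (by positivity : (0:ℝ) ≤ 1 / (k + 2))
    rwa [← Real.rpow_natCast, ← Real.rpow_mul (abs_nonneg _), Nat.cast_add, Nat.cast_two,
      mul_one_div_cancel (by positivity), Real.rpow_one] at this
  have hD : fderiv ℝ g y (Pi.single i (y i)) =
      mon α y * (α i * u y + fderiv ℝ u y (Pi.single i (y i))) := by
    have : g =ᶠ[𝓝 y] (fun z => mon α z * u z) := h6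
    rw [this.fderiv_eq, fderiv_fun_mul (mon_analytic α y).differentiableAt h5.differentiableAt]
    simp only [_root_.add_apply, _root_.smul_apply, fderiv_mon,
      smul_eq_mul]
    ring
  have hn : ‖(Pi.single i (y i) : X n)‖ = |y i| := by
    rw [Pi.norm_single]; rfl
  have hle : |fderiv ℝ g y (Pi.single i (y i))| ≤ ‖fderiv ℝ g y‖ * |y i| := by
    rw [← hn]; exact (fderiv ℝ g y).le_opNorm _
  have hle2 : |fderiv ℝ u y (Pi.single i (y i))| ≤ a / 4 := by
    have : |fderiv ℝ u y (Pi.single i (y i))| ≤ ‖fderiv ℝ u y‖ * |y i| := by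
      rw [← hn]; exact (fderiv ℝ u y).le_opNorm _
    nlinarith [abs_nonneg (y i)]
  have hlow : a / 4 ≤ |α i * u y + fderiv ℝ u y (Pi.single i (y i))| := by
    have q1 : (1:ℝ) ≤ α i := by exact_mod_cast Nat.one_le_iff_ne_zero.2 hi'
    have q2 : |(α i : ℝ) * u y| = α i * |u y| := by
      rw [abs_mul, abs_of_nonneg (by linarith)]
    have q3 := abs_sub_abs_le_abs_sub ((α i : ℝ) * u y) (-(fderiv ℝ u y (Pi.single i (y i))))
    rw [abs_neg, sub_neg_eq_add, q2] at q3
    nlinarith [abs_nonneg (u y)]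
  have hmain : m * (a / 4) ≤ ‖fderiv ℝ g y‖ * m ^ ((1:ℝ) / (k + 2)) := by
    calc m * (a / 4) ≤ |fderiv ℝ g y (Pi.single i (y i))| := by
          rw [hD, abs_mul]; exact mul_le_mul_of_nonneg_left hlow hm0
      _ ≤ _ := hle
      _ ≤ _ := mul_le_mul_of_nonneg_left hw3 (norm_nonneg _)
  rcases hm0.eq_or_lt with hm0 | hm0
  · rw [hgm, ← hm0, zero_mul, Real.zero_rpow hβ0.ne', mul_zero]; exact norm_nonneg _
  · have hsplit : m = m ^ β * m ^ ((1:ℝ) / (k + 2)) := by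
      rw [← Real.rpow_add hm0, hβ, ← add_div]
      rw [show ((k:ℝ) + 1 + 1) / (k + 2) = 1 by rw [div_eq_one_iff_eq (by positivity)]; ring,
        Real.rpow_one]
    have hfin : m ^ β * (a / 4) ≤ ‖fderiv ℝ g y‖ := by
      have hp : 0 < m ^ ((1:ℝ) / (k + 2)) := Real.rpow_pos_of_pos hm0 _
      refine le_of_mul_le_mul_right ?_ hp
      calc _ = (m ^ β * m ^ ((1:ℝ) / (k + 2))) * (a / 4) := by ring
        _ ≤ _ := by rw [← hsplit]; exact hmain
    refine le_trans ?_ hfin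
    rw [hgm, Real.mul_rpow hm0.le (abs_nonneg _)]
    have hq : |u y| ^ β ≤ (a + 1) ^ β := Real.rpow_le_rpow (abs_nonneg _) h2.le hβ0.le
    have hp : 0 < (a + 1) ^ β := by positivity
    have hp2 : 0 < m ^ β := Real.rpow_pos_of_pos hm0 _
    rw [div_mul_eq_mul_div, div_le_iff₀ hp]
    have : 0 ≤ m ^ β * (a / 4) := by positivity
    nlinarith

theorem gi_nc {n : ℕ} {g : X n → ℝ} (h : NC g) (h0 : g 0 = 0) : GI g := by
  rcases h with h | ⟨α, h⟩
  · refine ⟨1, one_pos, 1 / 2, ⟨by norm_num, by norm_num⟩, ?_⟩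
    filter_upwards [h] with y hy
    rw [hy, abs_zero, Real.zero_rpow (by norm_num), mul_zero]
    exact norm_nonneg _
  · exact gi_mon h h0

theorem gi_descend {E F : Type} [NormedAddCommGroup E] [NormedSpace ℝ E]
    [NormedAddCommGroup F] [NormedSpace ℝ F] [CompleteSpace F] {f : F → ℝ} (hf : AnalyticAt ℝ f 0) (hf0 : f 0 = 0)
    (h : Res (fun φ : E → F => GI (f ∘ φ))) : GI f := by
  classical
  have key : ∀ φ : E → F, ∃ N ∈ 𝓝 (0 : E), ∃ C > (0:ℝ), ∃ β ∈ Set.Ioo (0:ℝ) 1,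
      AnalyticAt ℝ φ 0 ∧ φ 0 = 0 ∧ GI (f ∘ φ) →
        ∀ z ∈ N, C * |f (φ z)| ^ β ≤ ‖fderiv ℝ f (φ z)‖ := by
    intro φ
    by_cases hc : AnalyticAt ℝ φ 0 ∧ φ 0 = 0 ∧ GI (f ∘ φ)
    · obtain ⟨hφ, hφ0, C, hC, β, hβ, hev⟩ := hc
      set K := ‖fderiv ℝ φ 0‖ + 1 with hK
      have hK0 : 0 < K := by positivity
      have e3 : ∀ᶠ y in 𝓝 (0 : E), ‖fderiv ℝ φ y‖ < K :=
        hφ.fderiv.continuousAt.norm.eventually (gt_mem_nhds (by linarith))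
      have e4 : ∀ᶠ z in 𝓝 (0:E), DifferentiableAt ℝ φ z :=
        hφ.eventually_analyticAt.mono fun _ h => h.differentiableAt
      have e5 : ∀ᶠ z in 𝓝 (0:E), DifferentiableAt ℝ f (φ z) := by
        have : ∀ᶠ x in 𝓝 (φ 0), DifferentiableAt ℝ f x := by
          rw [hφ0]; exact hf.eventually_analyticAt.mono fun _ h => h.differentiableAt
        exact hφ.continuousAt.eventually this
      refine ⟨_, hev.and (e3.and (e4.and e5)), C / K, by positivity, β, hβ, ?_⟩
      rintro - z ⟨h1, h2, h3, h4⟩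
      rw [fderiv_comp z h4 h3] at h1
      have h5 := (fderiv ℝ f (φ z)).opNorm_comp_le (fderiv ℝ φ z)
      rw [div_mul_eq_mul_div, div_le_iff₀ hK0]
      have h6 : ‖fderiv ℝ f (φ z)‖ * ‖fderiv ℝ φ z‖ ≤ ‖fderiv ℝ f (φ z)‖ * K :=
        mul_le_mul_of_nonneg_left h2.le (norm_nonneg _)
      exact h1.trans (h5.trans h6)
    · exact ⟨univ, univ_mem, 1, one_pos, 1 / 2, ⟨by norm_num, by norm_num⟩, fun h => absurd h hc⟩
  choose N hN C hC β hβ hH using key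
  obtain ⟨S, hS, hP, hU⟩ := h N hN
  rw [nhdsWithin_univ] at hU
  have hCC : ∃ c > 0, ∀ φ ∈ S, c ≤ C φ := by
    have := hS.induction_on (motive := fun T _ => ∃ c > 0, ∀ φ ∈ T, c ≤ C φ) S
      ⟨1, one_pos, by simp⟩ (by
        rintro φ T - - ⟨c, hc, h⟩
        refine ⟨min c (C φ), lt_min hc (hC φ), ?_⟩
        rintro ψ (rfl | hψ)
        · exact min_le_right _ _
        · exact (min_le_left _ _).trans (h ψ hψ))
    exact this
  have hbb : ∃ b ∈ Set.Ioo (0:ℝ) 1, ∀ φ ∈ S, β φ ≤ b := by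
    have := hS.induction_on (motive := fun T _ => ∃ b ∈ Set.Ioo (0:ℝ) 1, ∀ φ ∈ T, β φ ≤ b) S
      ⟨1 / 2, ⟨by norm_num, by norm_num⟩, by simp⟩ (by
        rintro φ T - - ⟨c, hc, h⟩
        refine ⟨max c (β φ), ⟨lt_max_of_lt_left hc.1, max_lt hc.2 (hβ φ).2⟩, ?_⟩
        rintro ψ (rfl | hψ)
        · exact le_max_right _ _
        · exact (h ψ hψ).trans (le_max_left _ _))
    exact this
  obtain ⟨c, hc, hcS⟩ := hCC
  obtain ⟨b, hb, hbS⟩ := hbb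
  refine ⟨c, hc, b, hb, ?_⟩
  have e1 : ∀ᶠ x in 𝓝 (0:F), |f x| < 1 :=
    hf.continuousAt.abs.eventually (gt_mem_nhds (by simp [hf0]))
  filter_upwards [hU, e1] with x hx hx1
  simp only [mem_iUnion, mem_image] at hx
  obtain ⟨φ, hφ, z, hz, rfl⟩ := hx
  refine le_trans ?_ (hH φ (hP φ hφ) z hz)
  rcases (abs_nonneg (f (φ z))).eq_or_lt with h0 | h0
  · rw [← h0, Real.zero_rpow hb.1.ne', Real.zero_rpow (hβ φ).1.ne']; simp
  · exact mul_le_mul (hcS φ hφ) (Real.rpow_le_rpow_of_exponent_ge h0 hx1.le (hbS φ hφ))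
      (Real.rpow_nonneg h0.le _) (hC φ).le

theorem gi_X {n : ℕ} {f : X n → ℝ} (hf : AnalyticAt ℝ f 0) (hf0 : f 0 = 0) : GI f := by
  refine gi_descend (E := X n) hf hf0 ?_
  refine (mm_all n Unit (fun _ => f) (fun _ => hf)).mono' ?_
  intro φ hφ hφ0 h
  exact gi_nc (h ()) (by simp [hφ0, hf0])

theorem gi_euclidean {n : ℕ} {f : EuclideanSpace ℝ (Fin n) → ℝ} (hf : AnalyticAt ℝ f 0)
    (hf0 : f 0 = 0) : GI f := by
  refine gi_descend (E := X n) hf hf0 ?_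
  let e := EuclideanSpace.equiv (Fin n) ℝ
  have he : AnalyticAt ℝ (e.symm : X n → EuclideanSpace ℝ (Fin n)) 0 :=
    (e.symm : X n →L[ℝ] EuclideanSpace ℝ (Fin n)).analyticAt 0
  have he' : AnalyticAt ℝ (e : EuclideanSpace ℝ (Fin n) → X n) 0 :=
    (e : EuclideanSpace ℝ (Fin n) →L[ℝ] X n).analyticAt 0
  have hz : e.symm (0 : X n) = 0 := map_zero _
  have hz' : e 0 = 0 := map_zero _
  refine Res.single (fun z => e.symm z) (fun z => e z) he hz he'.continuousAt hz' ?_ ?_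
  · exact Eventually.of_forall fun x => e.symm_apply_apply x
  · refine gi_X (an_comp he hz hf) ?_
    simp [hz, hf0]

end Loja

end LojaAux

/-- Łojasiewicz gradient inequality: if `f` is real-analytic near `0 ∈ ℝⁿ` with `f(0) = 0`,
there exist a neighborhood `V` of `0`, `C > 0` and `β ∈ (0,1)` with
`‖∇f(x)‖ ≥ C |f x|^β` on `V`; consequently for `p > 1`,
`‖∇f(x)‖^p ≥ C^{p-1} |f x|^{(p-1)β} ‖∇f(x)‖` on `V`. -/
theorem stmt19 {n : ℕ} (f : EuclideanSpace ℝ (Fin n) → ℝ)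
    (hf : AnalyticAt ℝ f 0) (hf0 : f 0 = 0) :
    ∃ V : Set (EuclideanSpace ℝ (Fin n)), IsOpen V ∧ (0 : EuclideanSpace ℝ (Fin n)) ∈ V ∧
      ∃ C > (0:ℝ), ∃ β ∈ Set.Ioo (0:ℝ) 1,
        (∀ x ∈ V, ‖fderiv ℝ f x‖ ≥ C * |f x| ^ β) ∧
        ∀ p : ℝ, 1 < p → ∀ x ∈ V,
          ‖fderiv ℝ f x‖ ^ p
            ≥ C ^ (p - 1) * |f x| ^ ((p - 1) * β) * ‖fderiv ℝ f x‖ := by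
  obtain ⟨C, hC, β, hβ, h⟩ := Loja.gi_euclidean hf hf0
  obtain ⟨V, hV, hVo, hV0⟩ := eventually_nhds_iff.1 h
  refine ⟨V, hVo, hV0, C, hC, β, hβ, hV, ?_⟩
  intro p hp x hx
  have h1 := hV x hx
  have h2 : (C * |f x| ^ β) ^ (p - 1) ≤ ‖fderiv ℝ f x‖ ^ (p - 1) :=
    Real.rpow_le_rpow (by positivity) h1 (by linarith)
  rw [Real.mul_rpow hC.le (by positivity), ← Real.rpow_mul (abs_nonneg _), mul_comm β] at h2
  have h3 : ‖fderiv ℝ f x‖ ^ p = ‖fderiv ℝ f x‖ ^ (p - 1) * ‖fderiv ℝ f x‖ := by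
    rcases (norm_nonneg (fderiv ℝ f x)).eq_or_lt with h0 | h0
    · rw [← h0, Real.zero_rpow (by linarith), mul_zero]
    · nth_rewrite 3 [← Real.rpow_one ‖fderiv ℝ f x‖]
      rw [← Real.rpow_add h0, sub_add_cancel]
  rw [h3]
  exact mul_le_mul_of_nonneg_right h2 (norm_nonneg _)
end
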